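/- Let 0 < α_1, α_2 < 1 and −1/2 < α_3 ≤ 0 with α_1 + α_2 + α_3 = 1. For any measurable subsets E_1, E_2, E_3 of [0,∞) of finite measure such that |E_3| is maximal among |E_1|, |E_2|, |E_3|, there exists a major subset E_3' ⊆ E_3 (that is, |E_3'| ≥ |E_3|/2) such that for all measurable functions f_1, f_2 with |f_1| ≤ 1_{E_1}, |f_2| ≤ 1_{E_2}, and f_3 with |f_3| ≤ 1_{E_3'}, one has |Λ_L(f_1, f_2, f_3)| ≤ C |E_1|^{α_1} |E_2|^{α_2} |E_3|^{α_3}, where C depends only on α_1, α_2, α_3 and is uniform in L ≥ 2 and in N. (This follows from the main restricted type theorem by the symmetry of the quartile form in the indices 2 and 3.) -/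

import Mathlib

open MeasureTheory Set ENNReal NNReal

noncomputable section

namespace Quartile

/-- The Walsh functions on `[0,1)` (extended by zero), in Walsh-Paley order,
defined by the recursion `W_{2l} = W_l(2x) + W_l(2x-1)`, `W_{2l+1} = W_l(2x) - W_l(2x-1)`. -/
def walsh (n : ℕ) (x : ℝ) : ℝ :=
  if h : n = 0 then (if 0 ≤ x ∧ x < 1 then 1 else 0)
  else if n % 2 = 0 then walsh (n / 2) (2 * x) + walsh (n / 2) (2 * x - 1)
  else walsh (n / 2) (2 * x) - walsh (n / 2) (2 * x - 1)
termination_by n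
decreasing_by
  all_goals exact Nat.div_lt_self (Nat.pos_of_ne_zero h) one_lt_two

/-- The dyadic interval `[2^k n, 2^k (n+1)) ⊆ [0,∞)`. -/
def dyadicI (k : ℤ) (n : ℕ) : Set ℝ := Ico ((2:ℝ)^k * n) ((2:ℝ)^k * (n+1))

/-- A tile: the dyadic rectangle `[2^k n, 2^k(n+1)) × [2^{-k} l, 2^{-k}(l+1))` of area one. -/
structure Tile where
  k : ℤ
  n : ℕ
  l : ℕ

namespace Tile

/-- The time interval `I_p` of a tile. -/
def timeI (p : Tile) : Set ℝ := Ico ((2:ℝ)^p.k * p.n) ((2:ℝ)^p.k * (p.n+1))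

/-- The frequency interval `ω_p` of a tile. -/
def freqI (p : Tile) : Set ℝ := Ico ((2:ℝ)^(-p.k) * p.l) ((2:ℝ)^(-p.k) * (p.l+1))

/-- The tile as a subset of the phase plane. -/
def toSet (p : Tile) : Set (ℝ × ℝ) := p.timeI ×ˢ p.freqI

/-- The Walsh wave packet `w_p` of a tile, `L²`-normalized. -/
def wp (p : Tile) (x : ℝ) : ℝ :=
  Real.sqrt ((2:ℝ)^(-p.k)) * walsh p.l ((2:ℝ)^(-p.k) * x - p.n)

end Tile

/-- The order on dyadic rectangles: `p ≤ q` iff `I_p ⊆ I_q` and `ω_q ⊆ ω_p`, for tiles. -/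
def tileLE (p q : Tile) : Prop := p.timeI ⊆ q.timeI ∧ q.freqI ⊆ p.freqI

/-- The inner product `⟨f, w_p⟩` of a function with a (real valued) wave packet. -/
def coef (f : ℝ → ℂ) (p : Tile) : ℂ := ∫ x, f x * (p.wp x : ℂ)

/-- The rank one projection `Π_p f = ⟨f, w_p⟩ w_p` associated to a single tile. -/
def projT (p : Tile) (f : ℝ → ℂ) (x : ℝ) : ℂ := coef f p * (p.wp x : ℂ)

/-- The projection associated to a collection of (pairwise disjoint) tiles. -/
def projSet (𝔭 : Set Tile) (f : ℝ → ℂ) (x : ℝ) : ℂ := ∑' p : 𝔭, projT p f x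

/-- The maximal tiles contained in a subset `S` of the phase plane; when `S` is a disjoint
union of tiles (of the kind appearing below) these form the canonical tiling of `S`. -/
def maxTiles (S : Set (ℝ × ℝ)) : Set Tile :=
  {p | p.toSet ⊆ S ∧ ∀ q : Tile, q.toSet ⊆ S → tileLE p q → q = p}

/-- The phase plane projection `Π_S` associated to a subset `S` of the phase plane,
computed with the canonical tiling of `S` by maximal tiles (the projection is independent
of the chosen tiling). -/
def piProj (S : Set (ℝ × ℝ)) (f : ℝ → ℂ) (x : ℝ) : ℂ := projSet (maxTiles S) f x

/-- A bitile: the dyadic rectangle `[2^k n, 2^k(n+1)) × [2^{1-k} l, 2^{1-k}(l+1))` of area two. -/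
structure Bitile where
  k : ℤ
  n : ℕ
  l : ℕ

namespace Bitile

/-- The time interval `I_P` of a bitile. -/
def timeI (P : Bitile) : Set ℝ := Ico ((2:ℝ)^P.k * P.n) ((2:ℝ)^P.k * (P.n+1))

/-- The frequency interval `ω_P` of a bitile. -/
def freqI (P : Bitile) : Set ℝ := Ico ((2:ℝ)^(1-P.k) * P.l) ((2:ℝ)^(1-P.k) * (P.l+1))

/-- The bitile as a subset of the phase plane. -/
def toSet (P : Bitile) : Set (ℝ × ℝ) := P.timeI ×ˢ P.freqI

/-- The lower tile `P_d` of a bitile. -/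
def d (P : Bitile) : Tile := ⟨P.k, P.n, 2*P.l⟩

/-- The upper tile `P_u` of a bitile. -/
def u (P : Bitile) : Tile := ⟨P.k, P.n, 2*P.l+1⟩

/-- The left tile of a bitile. -/
def left (P : Bitile) : Tile := ⟨P.k-1, 2*P.n, P.l⟩

/-- The right tile of a bitile. -/
def right (P : Bitile) : Tile := ⟨P.k-1, 2*P.n+1, P.l⟩

/-- The `L^∞`-normalized wave packet `φ_{P_d} = |I_P|^{1/2} w_{P_d}`. -/
def phid (P : Bitile) (x : ℝ) : ℝ := Real.sqrt ((2:ℝ)^P.k) * P.d.wp x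

end Bitile

/-- The order on dyadic rectangles, for bitiles. -/
def bitileLE (P Q : Bitile) : Prop := P.timeI ⊆ Q.timeI ∧ Q.freqI ⊆ P.freqI

/-- Strict order on bitiles. -/
def bitileLT (P Q : Bitile) : Prop := bitileLE P Q ∧ P ≠ Q

/-- A collection of bitiles is convex if together with `P₁ < P < P₂` for `P₁, P₂` in the
collection it contains `P`. -/
def IsConvex (PP : Set Bitile) : Prop :=
  ∀ P1 P2 P : Bitile, P1 ∈ PP → P2 ∈ PP → bitileLT P1 P → bitileLT P P2 → P ∈ PP

/-- A tree: a collection of bitiles with a (unique) maximal element `P_T = I_T × ω_T`. -/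
structure Tree where
  carrier : Set Bitile
  top : Bitile
  top_mem : top ∈ carrier
  le_top : ∀ P ∈ carrier, bitileLE P top

namespace Tree

/-- `T_d`: those bitiles of the tree whose lower tile frequency interval contains `ω_T`
(in the paper's notation, `P_T ≤ P_d`). -/
def Td (T : Tree) : Set Bitile := {P | P ∈ T.carrier ∧ T.top.freqI ⊆ P.d.freqI}

/-- `T_u`: those bitiles of the tree whose upper tile frequency interval contains `ω_T`
(in the paper's notation, `P_T ≤ P_u`). -/
def Tu (T : Tree) : Set Bitile := {P | P ∈ T.carrier ∧ T.top.freqI ⊆ P.u.freqI}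

/-- The region `⋃_{P ∈ T} P` of the phase plane occupied by a tree. -/
def unionSet (T : Tree) : Set (ℝ × ℝ) := ⋃ P ∈ T.carrier, P.toSet

/-- The phase plane projection `Π_T` of a (convex) tree. -/
def proj (T : Tree) (f : ℝ → ℂ) : ℝ → ℂ := piProj T.unionSet f

end Tree

/-- The vertical dilation `2^L S` of a subset of the phase plane. -/
def dilate (L : ℕ) (S : Set (ℝ × ℝ)) : Set (ℝ × ℝ) := (fun q => (q.1, (2:ℝ)^L * q.2)) '' S

/-- The enlarged tree `T^{(L)}` with respect to a frequency `ξ ∈ ω_T`: all bitiles `P` with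
`2^L ξ ∈ ω_P` contained in a rectangle `2^L P'` with `P' ∈ T`. -/
def Tree.enlarged (L : ℕ) (T : Tree) (ξ : ℝ) : Set Bitile :=
  {P | (2:ℝ)^L * ξ ∈ P.freqI ∧ ∃ P' ∈ T.carrier, P.toSet ⊆ dilate L P'.toSet}

/-- The region of the phase plane occupied by the enlarged tree `T^{(L)}`. -/
def Tree.enlargedSet (L : ℕ) (T : Tree) (ξ : ℝ) : Set (ℝ × ℝ) :=
  ⋃ P ∈ T.enlarged L ξ, P.toSet

/-- The left endpoint of `ω_T`, a canonical choice of `ξ ∈ ω_T`. -/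
def Tree.xiTop (T : Tree) : ℝ := (2:ℝ)^(1-T.top.k) * T.top.l

/-- The phase plane projection `Π_{T^{(L)}}` of the enlarged tree (independent of the
choice of `ξ ∈ ω_T`; we use the canonical choice).  For `L = 0` this is `Π_T`. -/
def Tree.projL (L : ℕ) (T : Tree) (f : ℝ → ℂ) : ℝ → ℂ := piProj (T.enlargedSet L T.xiTop) f

/-- `size^{(L)}(PP, f) = sup |I_T|^{-1/2} ‖Π_{T^{(L)}} f‖₂`, the supremum over convex trees
`T ⊆ PP`.  For `L = 0` this is the plain `size(PP, f)`. -/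
def size (L : ℕ) (PP : Set Bitile) (f : ℝ → ℂ) : ℝ≥0∞ :=
  ⨆ (T : Tree) (_ : T.carrier ⊆ PP ∧ IsConvex T.carrier),
    (ENNReal.ofReal (Real.sqrt ((2:ℝ)^T.top.k)))⁻¹ * eLpNorm (T.projL L f) 2 volume

/-- The quartile form `Λ_{PP}` restricted to a collection `PP` of bitiles. -/
def quartileFormOn (L : ℕ) (PP : Set Bitile) (f1 f2 f3 : ℝ → ℂ) : ℂ :=
  ∫ x, ∑' P : PP, (P.1.phid x : ℂ) * projT P.1.u f1 x *
      piProj (dilate L P.1.d.toSet) f2 x * piProj (dilate L P.1.d.toSet) f3 x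

/-- The bitiles contained in the strip `ℝ₊ × [0, 2^N)`. -/
def stripBitiles (N : ℕ) : Set Bitile := {P | P.freqI ⊆ Ico (0:ℝ) ((2:ℝ)^N)}

/-- The quartile form `Λ_L` (with frequency truncation parameter `N`). -/
def quartileForm (L N : ℕ) (f1 f2 f3 : ℝ → ℂ) : ℂ :=
  quartileFormOn L (stripBitiles N) f1 f2 f3

/-- The quartile form perturbed by a bounded sequence of coefficients `c_P`. -/
def quartileFormC (L N : ℕ) (c : Bitile → ℂ) (f1 f2 f3 : ℝ → ℂ) : ℂ :=
  ∫ x, ∑' P : stripBitiles N, c P.1 * (P.1.phid x : ℂ) * projT P.1.u f1 x *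
      piProj (dilate L P.1.d.toSet) f2 x * piProj (dilate L P.1.d.toSet) f3 x

/-- The counting function `Σ_{T ∈ 𝕋} 1_{I_T}` of a collection of trees. -/
def countingFn (𝕋 : Set Tree) (x : ℝ) : ℝ≥0∞ :=
  ∑' T : 𝕋, (T.1.top.timeI).indicator (fun _ => (1:ℝ≥0∞)) x

/-- The average of an `ℝ≥0∞`-valued function over a set. -/
def avgOn (I : Set ℝ) (g : ℝ → ℝ≥0∞) : ℝ≥0∞ := (volume I)⁻¹ * ∫⁻ x in I, g x

/-- The dyadic BMO norm on `[0,∞)` of an `ℝ≥0∞`-valued function. -/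
def dyadicBMO (g : ℝ → ℝ≥0∞) : ℝ≥0∞ :=
  ⨆ (k : ℤ) (n : ℕ), avgOn (dyadicI k n)
    (fun x => (g x - avgOn (dyadicI k n) g) + (avgOn (dyadicI k n) g - g x))

/-- The dyadic Hardy-Littlewood maximal function on `[0,∞)`. -/
def dyadicMax (f : ℝ → ℂ) (x : ℝ) : ℝ≥0∞ :=
  ⨆ (k : ℤ) (n : ℕ) (_ : x ∈ dyadicI k n),
    (volume (dyadicI k n))⁻¹ * ∫⁻ y in dyadicI k n, ‖f y‖₊

/-- The dyadic interval of length `2^j` containing `y ≥ 0`. -/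
def freqInterval (j : ℤ) (y : ℝ) : Set ℝ :=
  Ico ((2:ℝ)^j * ⌊y / (2:ℝ)^j⌋) ((2:ℝ)^j * (⌊y / (2:ℝ)^j⌋ + 1))

/-- The projection `Π_l := Π_{I_T × ω_l}`, where `ω_l` is the dyadic interval of
length `2^l` containing the frequency `y`. -/
def PiScale (T : Tree) (j : ℤ) (y : ℝ) (f : ℝ → ℂ) : ℝ → ℂ :=
  piProj (T.top.timeI ×ˢ freqInterval j y) f

/-- The difference projection `Π_l^Δ = Π_l - Π_{l-1}`. -/
def PiDelta (T : Tree) (j : ℤ) (y : ℝ) (f : ℝ → ℂ) (x : ℝ) : ℂ :=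
  PiScale T j y f x - PiScale T (j-1) y f x

/-!
Expanding the projections in wave packets turns the form into an absolutely convergent sum over
bitiles of products of averages of `f1`, `f2`, `f3` against wave packets, those of `f1` living on
time intervals `2 ^ L` times longer than those of `f2` and `f3`.

On a tree the coefficients obey the Walsh recursion. The contributions of `f1` are the increments of
a martingale, and Abel summation bounds the tree by the total length of the region where the
martingale is large. A Bellman function shows that this length decays exponentially in the level, up
to a factor `2 ^ L`; this factor is the ratio of the two time scales, so it is absorbed when the
lengths of the tops are measured with the intervals of `f1`, and the resulting bound does not depend
on `L`.

The bitiles are then sorted by the dyadic sizes of the three coefficients. The tops of the trees on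
which the coefficients of `fᵢ` are at least `s` have total length at most `s⁻² ‖fᵢ‖₂²` by Bessel's
inequality, and the three resulting bounds are interpolated with exponents `tᵢ < 1 / 2` adding up to
`1`, which makes the sums over the sizes geometric. They start from the largest size: at most `1`
for `f3`, and at most `4 |Eᵢ| / |E3|` for `f1` and `f2` once the points where the dyadic maximal
function of `1_{Eᵢ}` exceeds this threshold are removed from `E3`, because a bitile whose time
interval lies in the removed set does not see `f3`.
-/

/-! ### Finite subtrees of the binary tree -/

/-- A node of the infinite binary tree: the dyadic interval
`[pos 2^{-depth}, (pos + 1) 2^{-depth})`. -/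
@[ext]
structure Node where
  depth : ℕ
  pos : ℕ
  deriving DecidableEq

namespace Node

/-- `p ≤ q` when the interval of `p` is contained in that of `q`, that is, when `q` is an ancestor
of `p`. -/
instance : PartialOrder Node where
  le p q := ∃ j, p.depth = q.depth + j ∧ p.pos / 2 ^ j = q.pos
  le_refl p := ⟨0, by simp⟩
  le_trans := by
    rintro p q s ⟨i, hi, hi'⟩ ⟨j, hj, hj'⟩
    exact ⟨j + i, by omega, by rw [add_comm, pow_add, ← Nat.div_div_eq_div_mul, hi', hj']⟩
  le_antisymm := by
    rintro ⟨r, m⟩ ⟨r', m'⟩ ⟨i, hi, hi'⟩ ⟨j, hj, -⟩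
    obtain rfl : i = 0 := by simp only at hi hj; omega
    simp_all

theorem le_def {p q : Node} :
    p ≤ q ↔ ∃ j, p.depth = q.depth + j ∧ p.pos / 2 ^ j = q.pos := Iff.rfl

/-- The left (`i = false`) or right (`i = true`) child of a node. -/
def child (p : Node) (i : Bool) : Node := ⟨p.depth + 1, 2 * p.pos + i.toNat⟩

theorem child_le (p : Node) (i : Bool) : p.child i ≤ p :=
  ⟨1, rfl, by cases i <;> simp only [child, Bool.toNat_false, Bool.toNat_true] <;> omega⟩

theorem child_le_iff {p q : Node} {i : Bool} : p.child i ≤ q ↔ q = p.child i ∨ p ≤ q := by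
  constructor
  · rintro ⟨_ | j, hj, hj'⟩
    · exact Or.inl (Node.ext hj.symm (by simpa using hj'.symm))
    · refine Or.inr ⟨j, by simp only [child] at hj; omega, ?_⟩
      rw [← hj', pow_succ', ← Nat.div_div_eq_div_mul]
      congr 1
      cases i <;> simp only [child, Bool.toNat_false, Bool.toNat_true] <;> omega
  · rintro (rfl | h)
    · exact le_rfl
    · exact (child_le p i).trans h

theorem le_of_le_of_depth_eq_zero {p q root : Node} (hq : p ≤ q) (hroot : p ≤ root)
    (hdepth : root.depth = 0) : q ≤ root := by
  obtain ⟨j, hj, hj'⟩ := hq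
  obtain ⟨i, hi, hi'⟩ := hroot
  refine ⟨i - j, by omega, ?_⟩
  rw [← hj', Nat.div_div_eq_div_mul, ← pow_add, ← hi']
  congr 2
  omega

theorem exists_eq_child_of_depth_pos {p : Node} (hp : 0 < p.depth) :
    ∃ q i, p = child q i := by
  obtain ⟨_ | r, m⟩ := p
  · exact absurd hp (lt_irrefl 0)
  · refine ⟨⟨r, m / 2⟩, decide (m % 2 = 1), ?_⟩
    rcases Nat.mod_two_eq_zero_or_one m with h | h <;> simp [child, h] <;> omega

/-- The finite set of ancestors of a node, including itself. -/
def ancestors (p : Node) : Finset Node :=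
  (Finset.range (p.depth + 1)).image fun j => ⟨p.depth - j, p.pos / 2 ^ j⟩

theorem mem_ancestors {p q : Node} : q ∈ p.ancestors ↔ p ≤ q := by
  simp only [ancestors, Finset.mem_image, Finset.mem_range, le_def]
  constructor
  · rintro ⟨j, hj, rfl⟩
    exact ⟨j, by simp only; omega, rfl⟩
  · rintro ⟨j, hj, hj'⟩
    refine ⟨j, by omega, ?_⟩
    cases q
    simp only [Node.mk.injEq] at *
    omega

/-- The ancestor of `p` that is `j` generations older, placed back at the depth of `p`: position
`m` is replaced by `⌊m / 2 ^ j⌋`. -/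
def coarsen (j : ℕ) (p : Node) : Node := ⟨p.depth, p.pos / 2 ^ j⟩

/-- The child of `p.coarsen (j + 1)` that points towards `p`. -/
def branch (j : ℕ) (p : Node) : Node := ⟨p.depth + 1, p.pos / 2 ^ j⟩

theorem coarsen_mono (j : ℕ) : Monotone (coarsen j) := by
  rintro p q ⟨i, hi, hi'⟩
  exact ⟨i, hi, by simp only [coarsen, ← hi', Nat.div_div_eq_div_mul, mul_comm]⟩

theorem branch_mono (j : ℕ) : Monotone (branch j) := by
  rintro p q ⟨i, hi, hi'⟩
  exact ⟨i, by simp only [branch]; omega,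
    by simp only [branch, ← hi', Nat.div_div_eq_div_mul, mul_comm]⟩

theorem coarsen_succ_child (j : ℕ) (p : Node) (i : Bool) :
    (p.child i).coarsen (j + 1) = p.branch j := by
  have h : (2 * p.pos + i.toNat) / 2 = p.pos := by cases i <;> grind
  simp only [coarsen, branch, child, pow_succ', ← Nat.div_div_eq_div_mul, h]

theorem exists_branch_eq_child (j : ℕ) (p : Node) :
    ∃ i, p.branch j = (p.coarsen (j + 1)).child i := by
  refine ⟨decide (p.pos / 2 ^ j % 2 = 1), ?_⟩
  simp only [branch, child, coarsen, pow_succ, ← Nat.div_div_eq_div_mul]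
  rcases Nat.mod_two_eq_zero_or_one (p.pos / 2 ^ j) with h | h <;> (simp [h]; omega)

/-- The children of the nodes of `Y`. -/
def children (Y : Finset Node) : Finset Node :=
  Y.image (child · false) ∪ Y.image (child · true)

/-- The nodes just below `Y`. -/
def exits (Y : Finset Node) : Finset Node := children Y \ Y

/-- The nodes of `Y` whose parent is not in `Y`. -/
def entries (Y : Finset Node) : Finset Node := Y \ children Y

variable {Y : Finset Node} {p q : Node}

theorem mem_children : p ∈ children Y ↔ ∃ q ∈ Y, ∃ i, child q i = p := by
  simp only [children, Finset.mem_union, Finset.mem_image, Bool.exists_bool]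
  grind

theorem child_mem_children {i : Bool} : p.child i ∈ children Y ↔ p ∈ Y := by
  refine mem_children.trans ⟨?_, fun h => ⟨p, h, i, rfl⟩⟩
  rintro ⟨q, hq, j, hj⟩
  obtain rfl : q = p := by
    cases p; cases q
    cases i <;> cases j <;>
      simp only [child, Bool.toNat_false, Bool.toNat_true, Node.mk.injEq] at hj ⊢ <;> omega
  exact hq

theorem mem_exits : p ∈ exits Y ↔ p ∈ children Y ∧ p ∉ Y := Finset.mem_sdiff

theorem mem_entries : p ∈ entries Y ↔ p ∈ Y ∧ p ∉ children Y := Finset.mem_sdiff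

theorem sum_children {K : Type*} [Field K] [CharZero K] (Y : Finset Node) (U : Node → K) :
    ∑ p ∈ children Y, (1 / 2 : K) ^ p.depth * U p =
      ∑ p ∈ Y, (1 / 2 : K) ^ p.depth * ((U (p.child false) + U (p.child true)) / 2) := by
  have child_injective : ∀ i, Function.Injective (child · i) := by
    rintro i ⟨r, m⟩ ⟨r', m'⟩ h
    simp only [child, Node.mk.injEq] at h ⊢
    omega
  have disjoint : Disjoint (Y.image (child · false)) (Y.image (child · true)) := by
    simp only [Finset.disjoint_left, Finset.mem_image, not_exists, not_and]
    rintro _ ⟨p, -, rfl⟩ q - h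
    simp only [child, Bool.toNat_false, Bool.toNat_true, Node.mk.injEq] at h
    omega
  rw [children, Finset.sum_union disjoint, Finset.sum_image (child_injective _).injOn,
    Finset.sum_image (child_injective _).injOn, ← Finset.sum_add_distrib]
  refine Finset.sum_congr rfl fun p _ => ?_
  simp only [child, pow_succ]
  ring

-- The discrete divergence theorem behind every estimate on trees.
theorem sum_average_children_sub_sum {K : Type*} [Field K] [CharZero K] (Y : Finset Node)
    (U : Node → K) :
    ∑ p ∈ Y, (1 / 2 : K) ^ p.depth * ((U (p.child false) + U (p.child true)) / 2)
        - ∑ p ∈ Y, (1 / 2 : K) ^ p.depth * U p =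
      ∑ p ∈ exits Y, (1 / 2 : K) ^ p.depth * U p
        - ∑ p ∈ entries Y, (1 / 2 : K) ^ p.depth * U p := by
  rw [← sum_children, exits, entries, Finset.sum_sdiff_sub_sum_sdiff]

/-- The total length of the intervals in `Y`. -/
def weight (Y : Finset Node) : ℝ := ∑ p ∈ Y, (1 / 2 : ℝ) ^ p.depth

theorem weight_mono {Z : Finset Node} (h : Y ⊆ Z) : weight Y ≤ weight Z :=
  Finset.sum_le_sum_of_subset_of_nonneg h fun _ _ _ => by positivity

theorem weight_exits (Y : Finset Node) : weight (exits Y) = weight (entries Y) := by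
  have h := sum_average_children_sub_sum Y fun _ => (1 : ℝ)
  simp only [add_self_div_two, mul_one, sub_self] at h
  exact sub_eq_zero.1 h.symm

theorem exits_filter_subset {P : Node → Prop} [DecidablePred P]
    (hP : ∀ p i, P p → P (child p i)) : exits (Y.filter P) ⊆ exits Y := by
  intro p hp
  obtain ⟨hc, hn⟩ := mem_exits.1 hp
  obtain ⟨q, hq, i, rfl⟩ := mem_children.1 hc
  obtain ⟨hqY, hPq⟩ := Finset.mem_filter.1 hq
  exact mem_exits.2 ⟨child_mem_children.2 hqY,
    fun h => hn (Finset.mem_filter.2 ⟨h, hP q i hPq⟩)⟩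

/-- The nodes of `T` together with all their ancestors. -/
def ancestralClosure (T : Finset Node) : Finset Node := T.biUnion ancestors

theorem mem_ancestralClosure {T : Finset Node} :
    q ∈ ancestralClosure T ↔ ∃ p ∈ T, p ≤ q := by
  simp only [ancestralClosure, Finset.mem_biUnion, mem_ancestors]

theorem isUpperSet_ancestralClosure (T : Finset Node) :
    IsUpperSet (ancestralClosure T : Set Node) := by
  intro p q hpq hp
  simp only [Finset.mem_coe, mem_ancestralClosure] at hp ⊢
  obtain ⟨s, hs, hsp⟩ := hp
  exact ⟨s, hs, hsp.trans hpq⟩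

theorem exits_filter_subset_ancestralClosure {T : Finset Node}
    (hT : (T : Set Node).OrdConnected) (P : Node → Prop) [DecidablePred P] :
    exits (T.filter P) ⊆ exits ((ancestralClosure T).filter P) := by
  intro p hp
  obtain ⟨hc, hn⟩ := mem_exits.1 hp
  obtain ⟨q, hq, i, rfl⟩ := mem_children.1 hc
  obtain ⟨hqT, hPq⟩ := Finset.mem_filter.1 hq
  refine mem_exits.2 ⟨child_mem_children.2
    (Finset.mem_filter.2 ⟨mem_ancestralClosure.2 ⟨q, hqT, le_rfl⟩, hPq⟩), fun h => hn ?_⟩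
  obtain ⟨hcl, hPc⟩ := Finset.mem_filter.1 h
  obtain ⟨s, hs, hsc⟩ := mem_ancestralClosure.1 hcl
  exact Finset.mem_filter.2 ⟨hT.out hs hqT ⟨hsc, child_le q i⟩, hPc⟩

theorem card_filter_branch_eq_le (j : ℕ) (S : Finset Node) (b : Node) :
    (S.filter (branch j · = b)).card ≤ 2 ^ j := by
  have maps_to : ∀ p ∈ S.filter (branch j · = b),
      p.pos ∈ Finset.Ico (b.pos * 2 ^ j) (b.pos * 2 ^ j + 2 ^ j) := by
    intro p hp
    obtain rfl := (Finset.mem_filter.1 hp).2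
    have hmod := Nat.div_add_mod' p.pos (2 ^ j)
    exact Finset.mem_Ico.2 ⟨by simp only [branch]; omega, by simp only [branch]; omega⟩
  refine (Finset.card_le_card_of_injOn pos maps_to ?_).trans (by simp)
  rintro ⟨r, m⟩ hp ⟨r', m'⟩ hp' (rfl : m = m')
  have h := (Finset.mem_filter.1 hp).2.trans (Finset.mem_filter.1 hp').2.symm
  simpa [branch] using h

theorem weight_le_of_branch_mem (j : ℕ) {S B : Finset Node} (h : ∀ p ∈ S, p.branch j ∈ B) :
    weight S ≤ 2 ^ (j + 1) * weight B := by
  rw [weight, ← Finset.sum_fiberwise_of_maps_to h, weight, Finset.mul_sum]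
  refine Finset.sum_le_sum fun b _ => ?_
  have term_eq : ∀ p ∈ S.filter (branch j · = b),
      (1 / 2 : ℝ) ^ p.depth = 2 * (1 / 2) ^ b.depth := by
    intro p hp
    rw [← (Finset.mem_filter.1 hp).2, branch, pow_succ]
    ring
  have hcard : ((S.filter (branch j · = b)).card : ℝ) ≤ 2 ^ j :=
    mod_cast card_filter_branch_eq_le j S b
  rw [Finset.sum_congr rfl term_eq, Finset.sum_const, nsmul_eq_mul, pow_succ, mul_assoc]
  exact mul_le_mul_of_nonneg_right hcard (by positivity)

end Node

/-! ### Walsh coefficients along a tree -/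

/-- The recursion satisfied by the Walsh coefficients along a tree: `b p` is the coefficient of the
tile at `p` whose frequency interval contains the frequency of the tree, and `a p` that of the
other half of its bitile; `ε r` tells whether the former is the lower half at depth `r`. -/
structure WalshRec (ε : ℕ → Bool) (b a : Node → ℂ) : Prop where
  left : ∀ p, b (p.child false) = b p + a p
  right : ∀ p, b (p.child true) = if ε p.depth then b p - a p else a p - b p

namespace WalshRec

open Node

variable {ε : ℕ → Bool} {b a b' a' : Node → ℂ} {Y : Finset Node}

theorem average_norm_sq (h : WalshRec ε b a) (p : Node) :
    (‖b (p.child false)‖ ^ 2 + ‖b (p.child true)‖ ^ 2) / 2 = ‖b p‖ ^ 2 + ‖a p‖ ^ 2 := by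
  have hpar := parallelogram_law_with_norm ℝ (b p) (a p)
  rw [h.left, h.right]
  split_ifs
  · linarith
  · rw [norm_sub_rev (a p)]
    linarith

theorem average_mul (h : WalshRec ε b a) (h' : WalshRec ε b' a') (p : Node) :
    (b (p.child false) * b' (p.child false) + b (p.child true) * b' (p.child true)) / 2
      = b p * b' p + a p * a' p := by
  rw [h.left, h.right, h'.left, h'.right]
  split_ifs <;> ring

theorem norm_child_le (h : WalshRec ε b a) (p : Node) (i : Bool) :
    ‖b (p.child i)‖ ≤ ‖b p‖ + ‖a p‖ := by
  cases i
  · exact h.left p ▸ norm_add_le _ _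
  · rw [h.right]
    split_ifs
    · exact norm_sub_le _ _
    · exact add_comm ‖b p‖ ‖a p‖ ▸ norm_sub_le _ _

theorem norm_le_two_of_mem_children (h : WalshRec ε b a)
    (s : ∀ p ∈ Y, ‖b p‖ ≤ 1 ∧ ‖a p‖ ≤ 1) {p : Node} (hp : p ∈ children Y) : ‖b p‖ ≤ 2 := by
  obtain ⟨q, hq, i, rfl⟩ := mem_children.1 hp
  linarith [h.norm_child_le q i, (s q hq).1, (s q hq).2]

theorem sum_norm_sq_le (h : WalshRec ε b a)
    (s : ∀ p ∈ Y, ‖b p‖ ≤ 1 ∧ ‖a p‖ ≤ 1) :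
    ∑ p ∈ Y, (1 / 2 : ℝ) ^ p.depth * ‖a p‖ ^ 2 ≤ 4 * weight (exits Y) := by
  have flow := sum_average_children_sub_sum Y fun p => ‖b p‖ ^ 2
  simp only [h.average_norm_sq, mul_add, Finset.sum_add_distrib] at flow
  have entries_nonneg : 0 ≤ ∑ p ∈ entries Y, (1 / 2 : ℝ) ^ p.depth * ‖b p‖ ^ 2 :=
    Finset.sum_nonneg fun _ _ => by positivity
  have exits_le : ∑ p ∈ exits Y, (1 / 2 : ℝ) ^ p.depth * ‖b p‖ ^ 2 ≤ 4 * weight (exits Y) := by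
    rw [weight, Finset.mul_sum]
    refine Finset.sum_le_sum fun p hp => ?_
    have hb2 := h.norm_le_two_of_mem_children s (mem_exits.1 hp).1
    have : ‖b p‖ ^ 2 ≤ 4 := by nlinarith [norm_nonneg (b p)]
    rw [mul_comm]
    gcongr
  linarith

theorem sum_norm_mul_norm_le (h : WalshRec ε b a) (h' : WalshRec ε b' a')
    (s : ∀ p ∈ Y, ‖b p‖ ≤ 1 ∧ ‖a p‖ ≤ 1) (s' : ∀ p ∈ Y, ‖b' p‖ ≤ 1 ∧ ‖a' p‖ ≤ 1) :
    ∑ p ∈ Y, (1 / 2 : ℝ) ^ p.depth * (‖a p‖ * ‖a' p‖) ≤ 4 * weight (exits Y) := by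
  calc ∑ p ∈ Y, (1 / 2 : ℝ) ^ p.depth * (‖a p‖ * ‖a' p‖)
      ≤ ∑ p ∈ Y, ((1 / 2 : ℝ) ^ p.depth * ‖a p‖ ^ 2 + (1 / 2 : ℝ) ^ p.depth * ‖a' p‖ ^ 2) / 2 := by
        refine Finset.sum_le_sum fun p _ => ?_
        rw [← mul_add, mul_div_assoc]
        gcongr
        linarith [two_mul_le_add_sq ‖a p‖ ‖a' p‖]
    _ ≤ 4 * weight (exits Y) := by
        rw [← Finset.sum_div, Finset.sum_add_distrib]
        linarith [h.sum_norm_sq_le s, h'.sum_norm_sq_le s']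

theorem sum_diff_mul_mul_eq (h : WalshRec ε b a) (h' : WalshRec ε b' a') {g G : Node → ℂ}
    (hg : ∀ p i, g (p.child i) = G p) (T : Finset Node) :
    ∑ p ∈ T, (1 / 2 : ℂ) ^ p.depth * ((G p - g p) * (b p * b' p)) =
      ∑ p ∈ exits T, (1 / 2 : ℂ) ^ p.depth * (g p * (b p * b' p))
        - ∑ p ∈ entries T, (1 / 2 : ℂ) ^ p.depth * (g p * (b p * b' p))
        - ∑ p ∈ T, (1 / 2 : ℂ) ^ p.depth * (G p * (a p * a' p)) := by
  rw [← sum_average_children_sub_sum T fun p => g p * (b p * b' p), ← Finset.sum_sub_distrib,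
    ← Finset.sum_sub_distrib]
  refine Finset.sum_congr rfl fun p _ => ?_
  rw [hg, hg, ← mul_add, mul_div_assoc, h.average_mul h']
  ring

end WalshRec

/-! ### The martingale of the first function and its large values -/

/-- The martingale whose increments are the terms `± a` at the depths selected by `ε`, the sign
being that of the child taken. -/
def signMartingale (ε : ℕ → Bool) (a : Node → ℂ) : Node → ℂ
  | ⟨0, _⟩ => 0
  | ⟨r + 1, m⟩ => signMartingale ε a ⟨r, m / 2⟩ +
      if ε r then (-1) ^ m * a ⟨r, m / 2⟩ else 0
termination_by p => p.depth

theorem signMartingale_eq_zero_of_depth {ε : ℕ → Bool} {a : Node → ℂ} {p : Node}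
    (hp : p.depth = 0) : signMartingale ε a p = 0 := by
  obtain ⟨r, m⟩ := p
  obtain rfl : r = 0 := hp
  rw [signMartingale]

theorem signMartingale_child (ε : ℕ → Bool) (a : Node → ℂ) (p : Node) (i : Bool) :
    signMartingale ε a (p.child i) =
      signMartingale ε a p + if ε p.depth then (-1) ^ (p.child i).pos * a p else 0 := by
  have h : (2 * p.pos + i.toNat) / 2 = p.pos := by cases i <;> grind
  rw [Node.child, signMartingale, h]

theorem signMartingale_branch (ε : ℕ → Bool) (a : Node → ℂ) (j : ℕ) (p : Node) :
    signMartingale ε a (p.branch j) = signMartingale ε a (p.coarsen (j + 1)) +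
      if ε p.depth then (-1) ^ (p.branch j).pos * a (p.coarsen (j + 1)) else 0 := by
  obtain ⟨i, hi⟩ := p.exists_branch_eq_child j
  rw [hi, signMartingale_child]
  rfl

/-- `|M|` reaches the level `n` at `p` or at one of its ancestors. Nodes of depth zero are not
counted, so that nothing is large at a root, even for `n = 0`. -/
def Large (M : Node → ℂ) (n : ℕ) (p : Node) : Prop :=
  ∃ q, p ≤ q ∧ 0 < q.depth ∧ (n : ℝ) ≤ ‖M q‖

namespace Large

variable {M : Node → ℂ} {n : ℕ} {p q : Node}

theorem mono (h : p ≤ q) (hq : Large M n q) : Large M n p :=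
  let ⟨s, hqs, hs⟩ := hq
  ⟨s, h.trans hqs, hs⟩

theorem branch_child {j : ℕ} (h : Large M n (p.branch j)) (i : Bool) :
    Large M n ((p.child i).branch j) :=
  h.mono (Node.branch_mono j (p.child_le i))

theorem of_le_norm_branch {j : ℕ} (h : (n : ℝ) ≤ ‖M (p.branch j)‖) : Large M n (p.branch j) :=
  ⟨_, le_rfl, Nat.succ_pos _, h⟩

theorem not_of_depth_eq_zero (hp : p.depth = 0) : ¬ Large M n p := by
  rintro ⟨q, ⟨j, hj, -⟩, hq, -⟩
  omega

theorem le_norm_of_not_large {i : Bool} (h : Large M n (p.child i)) (hp : ¬ Large M n p) :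
    (n : ℝ) ≤ ‖M (p.child i)‖ := by
  obtain ⟨q, hpq, hq⟩ := h
  rcases Node.child_le_iff.1 hpq with rfl | hpq
  · exact hq.2
  · exact absurd ⟨q, hpq, hq⟩ hp

end Large

/-! ### Abel summation along a tree -/

theorem sum_mul_le_sum_range_sum {ι : Type*} {S : Finset ι} {F g : ι → ℝ} {Z : ℕ → Finset ι}
    {N : ℕ} (hF : ∀ p, 0 ≤ F p) (hg : ∀ p ∈ S, g p < N)
    (hZ : ∀ p ∈ S, ∀ n : ℕ, (n : ℝ) ≤ g p → p ∈ Z n) :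
    ∑ p ∈ S, F p * g p ≤ ∑ n ∈ Finset.range N, ∑ p ∈ Z n, F p := by
  classical
  calc ∑ p ∈ S, F p * g p ≤ ∑ p ∈ S, ∑ _n ∈ Finset.range ⌈g p⌉₊, F p := by
        refine Finset.sum_le_sum fun p _ => ?_
        rw [Finset.sum_const, Finset.card_range, nsmul_eq_mul, mul_comm]
        exact mul_le_mul_of_nonneg_right (Nat.le_ceil _) (hF p)
    _ = ∑ n ∈ Finset.range N, ∑ p ∈ S.filter (n < ⌈g ·⌉₊), F p := by
        refine Finset.sum_comm' fun p n => ?_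
        simp only [Finset.mem_range, Finset.mem_filter]
        exact ⟨fun h => ⟨h, h.2.trans_le (Nat.ceil_le.2 (hg p h.1).le)⟩, fun h => h.1⟩
    _ ≤ ∑ n ∈ Finset.range N, ∑ p ∈ Z n, F p := by
        refine Finset.sum_le_sum fun n _ =>
          Finset.sum_le_sum_of_subset_of_nonneg (fun p hp => ?_) fun p _ _ => hF p
        obtain ⟨hpS, hn⟩ := Finset.mem_filter.1 hp
        exact hZ p hpS n (Nat.lt_ceil.1 hn).le

open Classical in
/-- The part of `T` below the nodes at which `|M|`, sampled on the branches, reaches `n`. -/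
def largePart (M : Node → ℂ) (L : ℕ) (T : Finset Node) (n : ℕ) : Finset Node :=
  T.filter fun p => Large M n (p.branch L)

theorem mem_largePart {M : Node → ℂ} {L n : ℕ} {T : Finset Node} {p : Node} :
    p ∈ largePart M L T n ↔ p ∈ T ∧ Large M n (p.branch L) := by
  simp only [largePart, Finset.mem_filter]

theorem largePart_zero (M : Node → ℂ) (L : ℕ) (T : Finset Node) : largePart M L T 0 = T := by
  ext p
  simp only [mem_largePart, and_iff_left_iff_imp]
  exact fun _ => Large.of_le_norm_branch (by simp)

theorem exits_largePart_subset (M : Node → ℂ) (L : ℕ) (T : Finset Node) (n : ℕ) :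
    Node.exits (largePart M L T n) ⊆ Node.exits T := by
  classical
  exact Node.exits_filter_subset fun _ i h => h.branch_child i

section Abel

open Node

variable {L N : ℕ} {ε : ℕ → Bool} {b2 a2 b3 a3 : Node → ℂ} {M : Node → ℂ} {T : Finset Node}

theorem norm_half_pow_mul (r : ℕ) (z w : ℂ) :
    ‖(1 / 2 : ℂ) ^ r * (z * w)‖ = (1 / 2 : ℝ) ^ r * ‖w‖ * ‖z‖ := by
  rw [norm_mul, norm_mul, norm_pow, norm_div, norm_one, Complex.norm_ofNat]
  ring

theorem sum_range_sum_norm_mul_le (h2 : WalshRec ε b2 a2) (h3 : WalshRec ε b3 a3)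
    (s2 : ∀ p ∈ T, ‖b2 p‖ ≤ 1 ∧ ‖a2 p‖ ≤ 1) (s3 : ∀ p ∈ T, ‖b3 p‖ ≤ 1 ∧ ‖a3 p‖ ≤ 1) :
    ∑ n ∈ Finset.range N, ∑ p ∈ largePart M L T n, (1 / 2 : ℝ) ^ p.depth * ‖a2 p * a3 p‖ ≤
      4 * ∑ n ∈ Finset.range N, weight (exits (largePart M L T n)) := by
  rw [Finset.mul_sum]
  refine Finset.sum_le_sum fun n _ => ?_
  have hT : ∀ p ∈ largePart M L T n, p ∈ T := fun p hp => (mem_largePart.1 hp).1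
  simp only [norm_mul]
  exact h2.sum_norm_mul_norm_le h3 (fun p hp => s2 p (hT p hp)) fun p hp => s3 p (hT p hp)

theorem norm_sum_branch_mul_le (h2 : WalshRec ε b2 a2) (h3 : WalshRec ε b3 a3)
    (s2 : ∀ p ∈ T, ‖b2 p‖ ≤ 1 ∧ ‖a2 p‖ ≤ 1) (s3 : ∀ p ∈ T, ‖b3 p‖ ≤ 1 ∧ ‖a3 p‖ ≤ 1)
    (hN : ∀ p ∈ T, ‖M (p.branch L)‖ < N) :
    ‖∑ p ∈ T, (1 / 2 : ℂ) ^ p.depth * (M (p.branch L) * (a2 p * a3 p))‖ ≤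
      4 * ∑ n ∈ Finset.range N, weight (exits (largePart M L T n)) := by
  refine (norm_sum_le _ _).trans ?_
  simp only [norm_half_pow_mul]
  exact (sum_mul_le_sum_range_sum (fun _ => by positivity) hN fun p hp n hn =>
    mem_largePart.2 ⟨hp, Large.of_le_norm_branch hn⟩).trans
      (sum_range_sum_norm_mul_le h2 h3 s2 s3)

theorem norm_sum_bounded_mul_le (h2 : WalshRec ε b2 a2) (h3 : WalshRec ε b3 a3)
    (s2 : ∀ p ∈ T, ‖b2 p‖ ≤ 1 ∧ ‖a2 p‖ ≤ 1) (s3 : ∀ p ∈ T, ‖b3 p‖ ≤ 1 ∧ ‖a3 p‖ ≤ 1)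
    (hN : 0 < N) {c : Node → ℂ} (hc : ∀ p ∈ T, ‖c p‖ ≤ 1) :
    ‖∑ p ∈ T, (1 / 2 : ℂ) ^ p.depth * (c p * (a2 p * a3 p))‖ ≤
      4 * ∑ n ∈ Finset.range N, weight (exits (largePart M L T n)) := by
  refine le_trans ?_ (sum_range_sum_norm_mul_le h2 h3 s2 s3)
  calc ‖∑ p ∈ T, (1 / 2 : ℂ) ^ p.depth * (c p * (a2 p * a3 p))‖
      ≤ ∑ p ∈ largePart M L T 0, (1 / 2 : ℝ) ^ p.depth * ‖a2 p * a3 p‖ := by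
        rw [largePart_zero]
        refine norm_sum_le_of_le _ fun p hp => ?_
        rw [norm_half_pow_mul]
        exact mul_le_of_le_one_right (by positivity) (hc p hp)
    _ ≤ _ := Finset.single_le_sum
        (f := fun n => ∑ p ∈ largePart M L T n, (1 / 2 : ℝ) ^ p.depth * ‖a2 p * a3 p‖)
        (fun n _ => Finset.sum_nonneg fun _ _ => by positivity) (Finset.mem_range.2 hN)

theorem norm_sum_exits_le (h2 : WalshRec ε b2 a2) (h3 : WalshRec ε b3 a3)
    (s2 : ∀ p ∈ T, ‖b2 p‖ ≤ 1 ∧ ‖a2 p‖ ≤ 1) (s3 : ∀ p ∈ T, ‖b3 p‖ ≤ 1 ∧ ‖a3 p‖ ≤ 1)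
    (hN : ∀ p ∈ T, ‖M (p.branch L)‖ < N) :
    ‖∑ p ∈ exits T, (1 / 2 : ℂ) ^ p.depth * (M (p.coarsen (L + 1)) * (b2 p * b3 p))‖ ≤
      4 * ∑ n ∈ Finset.range N, weight (exits (largePart M L T n)) := by
  calc _ ≤ ∑ p ∈ exits T, (1 / 2 : ℝ) ^ p.depth * 4 * ‖M (p.coarsen (L + 1))‖ := by
        refine norm_sum_le_of_le _ fun p hp => ?_
        have hpc := (mem_exits.1 hp).1
        have hbb := norm_mul_le_of_le (h2.norm_le_two_of_mem_children s2 hpc)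
          (h3.norm_le_two_of_mem_children s3 hpc)
        rw [norm_half_pow_mul]
        gcongr
        linarith
    _ ≤ ∑ n ∈ Finset.range N, ∑ p ∈ exits (largePart M L T n), (1 / 2 : ℝ) ^ p.depth * 4 := by
        refine sum_mul_le_sum_range_sum (fun _ => by positivity) (fun p hp => ?_)
          fun p hp n hn => ?_
        all_goals
          obtain ⟨hpc, hpT⟩ := mem_exits.1 hp
          obtain ⟨q, hq, i, rfl⟩ := mem_children.1 hpc
          rw [coarsen_succ_child] at *
        · exact hN q hq
        · exact mem_exits.2 ⟨child_mem_children.2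
            (mem_largePart.2 ⟨hq, Large.of_le_norm_branch hn⟩), fun h => hpT (mem_largePart.1 h).1⟩
    _ = 4 * ∑ n ∈ Finset.range N, weight (exits (largePart M L T n)) := by
        simp only [weight, Finset.mul_sum, mul_comm]

theorem norm_sum_entries_le (s2 : ∀ p ∈ T, ‖b2 p‖ ≤ 1) (s3 : ∀ p ∈ T, ‖b3 p‖ ≤ 1)
    (hM : ∀ p : Node, p.depth = 0 → M p = 0) (hN : ∀ p ∈ T, ‖M (p.coarsen (L + 1))‖ < N) :
    ‖∑ p ∈ entries T, (1 / 2 : ℂ) ^ p.depth * (M (p.coarsen (L + 1)) * (b2 p * b3 p))‖ ≤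
      ∑ n ∈ Finset.range N, weight (exits (largePart M L T n)) := by
  calc _ ≤ ∑ p ∈ (entries T).filter (0 < ·.depth),
        (1 / 2 : ℝ) ^ p.depth * ‖M (p.coarsen (L + 1))‖ := by
        rw [Finset.sum_filter]
        refine norm_sum_le_of_le _ fun p hp => ?_
        have hpT := (mem_entries.1 hp).1
        split_ifs with hdepth
        · rw [norm_half_pow_mul]
          gcongr
          refine mul_le_of_le_one_right (by positivity) ?_
          simpa using norm_mul_le_of_le (s2 p hpT) (s3 p hpT)
        · simp [hM (p.coarsen (L + 1)) (Nat.eq_zero_of_not_pos hdepth)]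
    _ ≤ ∑ n ∈ Finset.range N, ∑ p ∈ entries (largePart M L T n), (1 / 2 : ℝ) ^ p.depth := by
        refine sum_mul_le_sum_range_sum (fun _ => by positivity)
          (fun p hp => hN p (mem_entries.1 (Finset.mem_filter.1 hp).1).1) fun p hp n hn => ?_
        obtain ⟨hpe, hdepth⟩ := Finset.mem_filter.1 hp
        obtain ⟨hpT, hpc⟩ := mem_entries.1 hpe
        obtain ⟨q, i, rfl⟩ := exists_eq_child_of_depth_pos hdepth
        rw [coarsen_succ_child] at hn
        rw [child_mem_children] at hpc
        exact mem_entries.2 ⟨mem_largePart.2 ⟨hpT, (Large.of_le_norm_branch hn).branch_child i⟩,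
          fun h => hpc (mem_largePart.1 (child_mem_children.1 h)).1⟩
    _ = ∑ n ∈ Finset.range N, weight (exits (largePart M L T n)) := by
        exact Finset.sum_congr rfl fun n _ => (weight_exits _).symm

/-- The summand at `p` of the quartile form along a tree, where the coefficients of the first
function live `L + 1` scales above those of the other two. -/
def treeTerm (L : ℕ) (ε : ℕ → Bool) (b1 a1 b2 a2 b3 a3 : Node → ℂ) (p : Node) : ℂ :=
  (-1) ^ (p.branch L).pos * (if ε p.depth then a1 (p.coarsen (L + 1)) else b1 (p.coarsen (L + 1))) *
    if ε p.depth then b2 p * b3 p else a2 p * a3 p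

theorem treeTerm_eq_add (L : ℕ) (ε : ℕ → Bool) (b1 a1 b2 a2 b3 a3 : Node → ℂ) (p : Node) :
    treeTerm L ε b1 a1 b2 a2 b3 a3 p =
      (signMartingale ε a1 (p.branch L) - signMartingale ε a1 (p.coarsen (L + 1))) * (b2 p * b3 p) +
        (if ε p.depth then 0 else (-1) ^ (p.branch L).pos * b1 (p.coarsen (L + 1))) *
          (a2 p * a3 p) := by
  rw [treeTerm, signMartingale_branch]
  split_ifs <;> ring

theorem norm_sum_treeTerm_le {b1 a1 : Node → ℂ} (h2 : WalshRec ε b2 a2) (h3 : WalshRec ε b3 a3)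
    (s1 : ∀ p ∈ T, ‖b1 (p.coarsen (L + 1))‖ ≤ 1)
    (s2 : ∀ p ∈ T, ‖b2 p‖ ≤ 1 ∧ ‖a2 p‖ ≤ 1) (s3 : ∀ p ∈ T, ‖b3 p‖ ≤ 1 ∧ ‖a3 p‖ ≤ 1) (hN : 0 < N)
    (hbranch : ∀ p ∈ T, ‖signMartingale ε a1 (p.branch L)‖ < N)
    (hcoarsen : ∀ p ∈ T, ‖signMartingale ε a1 (p.coarsen (L + 1))‖ < N) :
    ‖∑ p ∈ T, (1 / 2 : ℂ) ^ p.depth * treeTerm L ε b1 a1 b2 a2 b3 a3 p‖ ≤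
      13 * ∑ n ∈ Finset.range N, weight (exits (largePart (signMartingale ε a1) L T n)) := by
  simp only [treeTerm_eq_add, mul_add, Finset.sum_add_distrib]
  rw [h2.sum_diff_mul_mul_eq h3 (g := fun p => signMartingale ε a1 (p.coarsen (L + 1)))
    (G := fun p => signMartingale ε a1 (p.branch L))
    (fun p i => by rw [coarsen_succ_child])]
  have bounded_le := norm_sum_bounded_mul_le (M := signMartingale ε a1) (L := L) h2 h3 s2 s3 hN
    (c := fun p => if ε p.depth then 0 else (-1) ^ (p.branch L).pos * b1 (p.coarsen (L + 1)))
    fun p hp => by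
      split_ifs
      · simp
      · simpa using s1 p hp
  refine (norm_add_le_of_le (norm_sub_le_of_le (norm_sub_le_of_le
    (norm_sum_exits_le h2 h3 s2 s3 hbranch)
    (norm_sum_entries_le (fun p hp => (s2 p hp).1) (fun p hp => (s3 p hp).1)
      (fun p => signMartingale_eq_zero_of_depth) hcoarsen))
    (norm_sum_branch_mul_le h2 h3 s2 s3 hbranch)) bounded_le).trans (le_of_eq ?_)
  ring

end Abel

/-! ### A Bellman function for the exponential decay of large values -/

theorem cosh_le_one_add_sq {y : ℝ} (hy : |y| ≤ 1) : Real.cosh y ≤ 1 + y ^ 2 := by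
  have hsq : y ^ 2 ≤ 1 := (sq_le_one_iff_abs_le_one y).2 hy
  have hexp := Real.abs_exp_sub_one_le (x := y ^ 2 / 2)
    (by rw [abs_of_nonneg (by positivity)]; linarith)
  rw [abs_of_nonneg (show 0 ≤ y ^ 2 / 2 by positivity)] at hexp
  linarith [Real.cosh_le_exp_half_sq y, (abs_le.1 hexp).2]

theorem abs_sinh_le_two_mul_abs {y : ℝ} (hy : |y| ≤ 1) : |Real.sinh y| ≤ 2 * |y| := by
  have hpos := abs_le.1 (Real.abs_exp_sub_one_le hy)
  have hneg := abs_le.1 (Real.abs_exp_sub_one_le (x := -y) (by rwa [abs_neg]))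
  rw [abs_neg] at hneg
  rw [Real.sinh_eq, abs_le]
  constructor <;> linarith [hpos.1, hpos.2, hneg.1, hneg.2]

theorem abs_sinh_le_cosh (x : ℝ) : |Real.sinh x| ≤ Real.cosh x :=
  abs_le.2 ⟨by simpa [neg_le] using (Real.sinh_lt_cosh (-x)).le, (Real.sinh_lt_cosh x).le⟩

theorem average_cosh_mul_le {x y A B D : ℝ} (hA0 : 0 ≤ A) (hA : A ≤ 1) (hB0 : 0 ≤ B) (hB : B ≤ 1)
    (hy : |y| ≤ A / 8) (hD : |D| ≤ A) :
    (Real.cosh (x + y) * (5 - (B + A ^ 2 + 2 * D))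
      + Real.cosh (x - y) * (5 - (B + A ^ 2 - 2 * D))) / 2 ≤ Real.cosh x * (5 - B) := by
  have hcosh : Real.cosh y ≤ 1 + A ^ 2 / 64 := by
    have : y ^ 2 ≤ (A / 8) ^ 2 := sq_le_sq' (abs_le.1 hy).1 (abs_le.1 hy).2
    linarith [cosh_le_one_add_sq (y := y) (by linarith)]
  have hsinh : |Real.sinh y| ≤ A / 4 := by
    linarith [abs_sinh_le_two_mul_abs (y := y) (by linarith)]
  have cross_term : -(Real.sinh x * Real.sinh y * D) ≤ Real.cosh x * (A / 4) * A := by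
    refine (neg_le_abs _).trans ?_
    rw [abs_mul, abs_mul]
    gcongr
    exact abs_sinh_le_cosh x
  have hA2 : A ^ 2 ≤ 1 := pow_le_one₀ hA0 hA
  have main_term : Real.cosh y * (5 - B - A ^ 2) ≤ 5 - B - A ^ 2 + 5 * A ^ 2 / 64 := by
    nlinarith [mul_le_mul_of_nonneg_right hcosh (show 0 ≤ 5 - B - A ^ 2 by linarith), sq_nonneg A]
  rw [Real.cosh_add, Real.cosh_sub]
  calc _ = Real.cosh x * (Real.cosh y * (5 - B - A ^ 2))
        + 2 * -(Real.sinh x * Real.sinh y * D) := by ring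
    _ ≤ Real.cosh x * (5 - B - A ^ 2 + 5 * A ^ 2 / 64)
        + 2 * (Real.cosh x * (A / 4) * A) := by
      have := mul_le_mul_of_nonneg_left main_term (Real.cosh_pos x).le
      linarith
    _ = Real.cosh x * (5 - B - 27 / 64 * A ^ 2) := by ring
    _ ≤ Real.cosh x * (5 - B) :=
      mul_le_mul_of_nonneg_left (by linarith [sq_nonneg A]) (Real.cosh_pos x).le

/-- The Bellman function: exponentially large in the value `z` of the sign martingale, and a
supermartingale along the tree because the factor involving the coefficient `w` loses the square of
every increment. -/
def bellman (z w : ℂ) : ℝ := (Real.cosh (z.re / 8) + Real.cosh (z.im / 8)) * (5 - ‖w‖ ^ 2)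

theorem average_bellman_add_sub_le {z a b : ℂ} (ha : ‖a‖ ≤ 1) (hb : ‖b‖ ≤ 1) :
    (bellman (z + a) (b + a) + bellman (z - a) (b - a)) / 2 ≤ bellman z b := by
  have hD : |inner ℝ b a| ≤ ‖a‖ := by
    nlinarith [abs_real_inner_le_norm b a, norm_nonneg a]
  have hb2 : ‖b‖ ^ 2 ≤ 1 := pow_le_one₀ (norm_nonneg b) hb
  have hre : |a.re / 8| ≤ ‖a‖ / 8 := by
    rw [abs_div, abs_of_pos (by norm_num : (0 : ℝ) < 8)]
    linarith [Complex.abs_re_le_norm a]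
  have him : |a.im / 8| ≤ ‖a‖ / 8 := by
    rw [abs_div, abs_of_pos (by norm_num : (0 : ℝ) < 8)]
    linarith [Complex.abs_im_le_norm a]
  have re_part := average_cosh_mul_le (x := z.re / 8) (norm_nonneg a) ha (by positivity) hb2 hre hD
  have im_part := average_cosh_mul_le (x := z.im / 8) (norm_nonneg a) ha (by positivity) hb2 him hD
  have hadd : ‖b + a‖ ^ 2 = ‖b‖ ^ 2 + ‖a‖ ^ 2 + 2 * inner ℝ b a := by
    rw [norm_add_sq_real]
    ring
  have hsub : ‖b - a‖ ^ 2 = ‖b‖ ^ 2 + ‖a‖ ^ 2 - 2 * inner ℝ b a := by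
    rw [norm_sub_sq_real]
    ring
  simp only [bellman, hadd, hsub, Complex.add_re, Complex.add_im, Complex.sub_re, Complex.sub_im,
    _root_.add_div, _root_.sub_div]
  linarith

theorem average_bellman_le (z a b : ℂ) :
    (bellman z (b + a) + bellman z (a - b)) / 2 ≤ bellman z b := by
  have hpar := parallelogram_law_with_norm ℝ b a
  rw [norm_sub_rev b a] at hpar
  rw [bellman, bellman, bellman, ← mul_add, mul_div_assoc]
  have := Real.cosh_pos (z.re / 8)
  have := Real.cosh_pos (z.im / 8)
  gcongr
  nlinarith [sq_nonneg ‖a‖]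

theorem bellman_nonneg (z : ℂ) {w : ℂ} (hw : ‖w‖ ≤ 2) : 0 ≤ bellman z w := by
  have := Real.cosh_pos (z.re / 8)
  have := Real.cosh_pos (z.im / 8)
  have : 0 ≤ 5 - ‖w‖ ^ 2 := by nlinarith [norm_nonneg w]
  unfold bellman
  positivity

theorem bellman_zero_le (w : ℂ) : bellman 0 w ≤ 10 := by
  simp only [bellman, Complex.zero_re, Complex.zero_im, zero_div, Real.cosh_zero]
  nlinarith [sq_nonneg ‖w‖]

theorem exp_le_bellman {z w : ℂ} {n : ℕ} (hz : (n : ℝ) ≤ ‖z‖) (hw : ‖w‖ ≤ 2) :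
    Real.exp (n / 16) / 2 ≤ bellman z w := by
  have exp_le_cosh : ∀ t : ℝ, (n : ℝ) / 2 ≤ |t| → Real.exp (n / 16) / 2 ≤ Real.cosh (t / 8) := by
    intro t ht
    have hexp : Real.exp (n / 16) ≤ Real.exp |t / 8| := by
      rw [Real.exp_le_exp, abs_div, abs_of_pos (by norm_num : (0 : ℝ) < 8)]
      linarith
    rw [← Real.cosh_abs, Real.cosh_eq]
    linarith [Real.exp_pos (-|t / 8|)]
  have hre := Real.cosh_pos (z.re / 8)
  have him := Real.cosh_pos (z.im / 8)
  have cosh_add_cosh_ge : Real.exp (n / 16) / 2 ≤ Real.cosh (z.re / 8) + Real.cosh (z.im / 8) := by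
    rcases le_or_gt ((n : ℝ) / 2) |z.re| with h | h
    · linarith [exp_le_cosh _ h]
    · linarith [exp_le_cosh z.im (by linarith [Complex.norm_le_abs_re_add_abs_im z])]
  have : 1 ≤ 5 - ‖w‖ ^ 2 := by nlinarith [norm_nonneg w]
  unfold bellman
  nlinarith

section TreeEstimate

open Node

variable {ε : ℕ → Bool} {b a : Node → ℂ}

theorem WalshRec.average_bellman_le (h : WalshRec ε b a) {p : Node} (hb : ‖b p‖ ≤ 1)
    (ha : ‖a p‖ ≤ 1) :
    (bellman (signMartingale ε a (p.child false)) (b (p.child false))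
      + bellman (signMartingale ε a (p.child true)) (b (p.child true))) / 2
        ≤ bellman (signMartingale ε a p) (b p) := by
  have even_sign : (-1 : ℂ) ^ (p.child false).pos = 1 := by simp [child]
  have odd_sign : (-1 : ℂ) ^ (p.child true).pos = -1 := by simp [child, pow_add]
  rw [h.left, h.right, signMartingale_child, signMartingale_child, even_sign, odd_sign]
  split_ifs
  · simpa only [one_mul, neg_one_mul, ← sub_eq_add_neg] using average_bellman_add_sub_le ha hb
  · simpa only [add_zero] using Quartile.average_bellman_le _ (a p) (b p)

open Classical in
/-- The part of `R` above the nodes at which `|M|` first reaches the level `n`. -/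
def smallPart (M : Node → ℂ) (R : Finset Node) (n : ℕ) : Finset Node :=
  R.filter fun p => ¬ Large M n p

theorem mem_smallPart {M : Node → ℂ} {R : Finset Node} {n : ℕ} {p : Node} :
    p ∈ smallPart M R n ↔ p ∈ R ∧ ¬ Large M n p := by
  simp only [smallPart, Finset.mem_filter]

theorem entries_smallPart_subset {M : Node → ℂ} {R : Finset Node} {n : ℕ} {root : Node}
    (hR : IsUpperSet (R : Set Node)) (hroot : ∀ p ∈ R, p ≤ root) :
    entries (smallPart M R n) ⊆ {root} := by
  intro p hp
  obtain ⟨hpX, hpc⟩ := mem_entries.1 hp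
  obtain ⟨hpR, hpn⟩ := mem_smallPart.1 hpX
  rcases Nat.eq_zero_or_pos p.depth with h0 | h0
  · obtain ⟨j, hj, hj'⟩ := hroot p hpR
    obtain rfl : j = 0 := by omega
    exact Finset.mem_singleton.2 (Node.ext hj (by simpa using hj'))
  · obtain ⟨q, i, rfl⟩ := exists_eq_child_of_depth_pos h0
    exact absurd (child_mem_children.2 (mem_smallPart.2
      ⟨hR (child_le q i) hpR, fun hq => hpn (hq.mono (child_le q i))⟩)) hpc

theorem WalshRec.sum_exits_smallPart_bellman_le (h : WalshRec ε b a) {R : Finset Node}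
    (hR : IsUpperSet (R : Set Node)) {root : Node} (hdepth : root.depth = 0)
    (hroot : ∀ p ∈ R, p ≤ root) (s : ∀ p ∈ R, ‖b p‖ ≤ 1 ∧ ‖a p‖ ≤ 1) (n : ℕ) :
    ∑ p ∈ exits (smallPart (signMartingale ε a) R n),
      (1 / 2 : ℝ) ^ p.depth * bellman (signMartingale ε a p) (b p) ≤ 10 := by
  set X := smallPart (signMartingale ε a) R n
  have flow := sum_average_children_sub_sum X fun p => bellman (signMartingale ε a p) (b p)
  have supermartingale := Finset.sum_le_sum fun p (hp : p ∈ X) =>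
    mul_le_mul_of_nonneg_left (h.average_bellman_le (s p (mem_smallPart.1 hp).1).1
      (s p (mem_smallPart.1 hp).1).2) (by positivity : 0 ≤ (1 / 2 : ℝ) ^ p.depth)
  have root_term : (1 / 2 : ℝ) ^ root.depth * bellman (signMartingale ε a root) (b root) ≤ 10 := by
    rw [hdepth, pow_zero, one_mul, signMartingale_eq_zero_of_depth hdepth]
    exact bellman_zero_le _
  have entries_le : ∑ p ∈ entries X,
      (1 / 2 : ℝ) ^ p.depth * bellman (signMartingale ε a p) (b p) ≤ 10 := by
    have entries_subset : entries X ⊆ {root} := entries_smallPart_subset hR hroot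
    rcases Finset.subset_singleton_iff.1 entries_subset with hX | hX
    · simp [hX]
    · rwa [hX, Finset.sum_singleton]
  linarith

open Classical in
theorem WalshRec.weight_large_exits_le (h : WalshRec ε b a) {R : Finset Node}
    (hR : IsUpperSet (R : Set Node)) {root : Node} (hdepth : root.depth = 0)
    (hroot : ∀ p ∈ R, p ≤ root) (s : ∀ p ∈ R, ‖b p‖ ≤ 1 ∧ ‖a p‖ ≤ 1) (n : ℕ) :
    weight ((exits (smallPart (signMartingale ε a) R n)).filter (Large (signMartingale ε a) n))
      ≤ 20 * Real.exp (-(n / 16)) := by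
  set X := smallPart (signMartingale ε a) R n
  have norm_le_two : ∀ p ∈ exits X, ‖b p‖ ≤ 2 := fun p hp =>
    h.norm_le_two_of_mem_children (fun q hq => s q (mem_smallPart.1 hq).1) (mem_exits.1 hp).1
  have key : weight ((exits X).filter (Large (signMartingale ε a) n)) * (Real.exp (n / 16) / 2)
      ≤ 10 := by
    rw [weight, Finset.sum_mul]
    refine le_trans (Finset.sum_le_sum (g := fun p =>
      (1 / 2 : ℝ) ^ p.depth * bellman (signMartingale ε a p) (b p)) fun p hp => ?_)
      ((Finset.sum_le_sum_of_subset_of_nonneg (Finset.filter_subset _ _) fun p hp _ =>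
        mul_nonneg (by positivity) (bellman_nonneg _ (norm_le_two p hp))).trans
      (h.sum_exits_smallPart_bellman_le hR hdepth hroot s n))
    obtain ⟨hpX, hlarge⟩ := Finset.mem_filter.1 hp
    obtain ⟨q, hq, i, rfl⟩ := mem_children.1 (mem_exits.1 hpX).1
    gcongr
    exact exp_le_bellman (hlarge.le_norm_of_not_large (mem_smallPart.1 hq).2) (norm_le_two _ hpX)
  rw [Real.exp_neg, ← div_eq_mul_inv, le_div_iff₀ (Real.exp_pos _)]
  linarith

open Classical in
theorem branch_mem_large_exits {M : Node → ℂ} {L n : ℕ} {T : Finset Node} {p : Node}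
    (hp : p ∈ entries (largePart M L (ancestralClosure T) n)) :
    p.branch L ∈ (exits (smallPart M (ancestralClosure (T.image (coarsen (L + 1)))) n)).filter
      (Large M n) := by
  obtain ⟨hpD, hpc⟩ := mem_entries.1 hp
  obtain ⟨hpcl, hlarge⟩ := mem_largePart.1 hpD
  obtain ⟨q, hq, hqp⟩ := mem_ancestralClosure.1 hpcl
  have coarse_small : ¬ Large M n (p.coarsen (L + 1)) := by
    rcases Nat.eq_zero_or_pos p.depth with h0 | h0
    · exact Large.not_of_depth_eq_zero h0
    · obtain ⟨p', i, rfl⟩ := exists_eq_child_of_depth_pos h0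
      rw [coarsen_succ_child]
      exact fun h => hpc (child_mem_children.2 (mem_largePart.2
        ⟨isUpperSet_ancestralClosure T (child_le p' i) hpcl, h⟩))
  have coarse_mem : p.coarsen (L + 1) ∈ ancestralClosure (T.image (coarsen (L + 1))) :=
    mem_ancestralClosure.2 ⟨_, Finset.mem_image_of_mem _ hq, coarsen_mono (L + 1) hqp⟩
  obtain ⟨i, hi⟩ := p.exists_branch_eq_child L
  refine Finset.mem_filter.2 ⟨mem_exits.2 ⟨?_, fun h => (mem_smallPart.1 h).2 hlarge⟩, hlarge⟩
  exact hi ▸ child_mem_children.2 (mem_smallPart.2 ⟨coarse_mem, coarse_small⟩)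

theorem WalshRec.weight_exits_largePart_le (h : WalshRec ε b a) {L : ℕ} {T : Finset Node}
    {root : Node} (hT : (T : Set Node).OrdConnected) (hdepth : root.depth = 0)
    (hroot : ∀ p ∈ T, p.coarsen (L + 1) ≤ root)
    (s : ∀ p ∈ T, ∀ q, p.coarsen (L + 1) ≤ q → ‖b q‖ ≤ 1 ∧ ‖a q‖ ≤ 1) (n : ℕ) :
    weight (exits (largePart (signMartingale ε a) L T n)) ≤
      20 * 2 ^ (L + 1) * Real.exp (-(n / 16)) := by
  classical
  have mem_closure : ∀ q ∈ ancestralClosure (T.image (coarsen (L + 1))),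
      ∃ p ∈ T, p.coarsen (L + 1) ≤ q := by
    simp only [mem_ancestralClosure, Finset.exists_mem_image, imp_self, implies_true]
  have closure_le_root : ∀ q ∈ ancestralClosure (T.image (coarsen (L + 1))), q ≤ root := by
    intro q hq
    obtain ⟨p, hp, hpq⟩ := mem_closure q hq
    exact le_of_le_of_depth_eq_zero hpq (hroot p hp) hdepth
  calc weight (exits (largePart (signMartingale ε a) L T n))
      ≤ weight (exits (largePart (signMartingale ε a) L (ancestralClosure T) n)) :=
        weight_mono (exits_filter_subset_ancestralClosure hT _)
    _ = weight (entries (largePart (signMartingale ε a) L (ancestralClosure T) n)) :=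
        weight_exits _
    _ ≤ 2 ^ (L + 1) * _ := weight_le_of_branch_mem L fun p => branch_mem_large_exits
    _ ≤ 2 ^ (L + 1) * (20 * Real.exp (-(n / 16))) := by
        gcongr
        refine h.weight_large_exits_le (isUpperSet_ancestralClosure _) hdepth closure_le_root
          (fun q hq => ?_) n
        obtain ⟨p, hp, hpq⟩ := mem_closure q hq
        exact s p hp q hpq
    _ = 20 * 2 ^ (L + 1) * Real.exp (-(n / 16)) := by ring

theorem exists_nat_forall_mem_lt {ι : Type*} (T : Finset ι) (g : ι → ℝ) :
    ∃ N : ℕ, ∀ p ∈ T, g p < N := by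
  obtain ⟨B, hB⟩ := (T.image g).bddAbove
  obtain ⟨N, hN⟩ := exists_nat_gt B
  exact ⟨N, fun p hp => (hB (by simpa using ⟨p, hp, rfl⟩)).trans_lt hN⟩

theorem eventually_norm_sum_treeTerm_le {L : ℕ} {b1 a1 b2 a2 b3 a3 : Node → ℂ}
    (h1 : WalshRec ε b1 a1) (h2 : WalshRec ε b2 a2) (h3 : WalshRec ε b3 a3) {T : Finset Node}
    {root : Node} (hT : (T : Set Node).OrdConnected) (hdepth : root.depth = 0)
    (hroot : ∀ p ∈ T, p.coarsen (L + 1) ≤ root)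
    (s1 : ∀ p ∈ T, ∀ q, p.coarsen (L + 1) ≤ q → ‖b1 q‖ ≤ 1 ∧ ‖a1 q‖ ≤ 1)
    (s2 : ∀ p ∈ T, ‖b2 p‖ ≤ 1 ∧ ‖a2 p‖ ≤ 1) (s3 : ∀ p ∈ T, ‖b3 p‖ ≤ 1 ∧ ‖a3 p‖ ≤ 1) :
    ∀ᶠ N : ℕ in Filter.atTop,
      ‖∑ p ∈ T, (1 / 2 : ℂ) ^ p.depth * treeTerm L ε b1 a1 b2 a2 b3 a3 p‖ ≤
        13 * ∑ n ∈ Finset.range N,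
          min (weight (entries T)) (20 * 2 ^ (L + 1) * Real.exp (-(n / 16))) := by
  obtain ⟨N₁, hN₁⟩ := exists_nat_forall_mem_lt T fun p => ‖signMartingale ε a1 (p.branch L)‖
  obtain ⟨N₂, hN₂⟩ := exists_nat_forall_mem_lt T fun p => ‖signMartingale ε a1 (p.coarsen (L + 1))‖
  filter_upwards [Filter.eventually_gt_atTop 0, Filter.eventually_ge_atTop N₁,
    Filter.eventually_ge_atTop N₂] with N hN hNN₁ hNN₂
  refine (norm_sum_treeTerm_le h2 h3 (fun p hp => (s1 p hp _ le_rfl).1) s2 s3 hN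
    (fun p hp => (hN₁ p hp).trans_le (mod_cast hNN₁))
    (fun p hp => (hN₂ p hp).trans_le (mod_cast hNN₂))).trans ?_
  gcongr with n
  refine le_min ?_ (h1.weight_exits_largePart_le hT hdepth hroot s1 n)
  rw [← weight_exits]
  exact weight_mono (exits_largePart_subset _ L T n)

end TreeEstimate

/-! ### The order on tiles and bitiles -/

/-- The order of the phase plane: `p ≤ q` when `I_p ⊆ I_q` and `ω_q ⊆ ω_p`, expressed through the
integer parameters of the two rectangles. -/
instance : PartialOrder Tile where
  le p q := ∃ r : ℕ, q.k = p.k + r ∧ p.n / 2 ^ r = q.n ∧ q.l / 2 ^ r = p.l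
  le_refl p := ⟨0, by simp⟩
  le_trans := by
    rintro p q s ⟨i, hi, hi', hi''⟩ ⟨j, hj, hj', hj''⟩
    refine ⟨i + j, by push_cast; omega, ?_, ?_⟩
    · rw [pow_add, ← Nat.div_div_eq_div_mul, hi', hj']
    · rw [add_comm, pow_add, ← Nat.div_div_eq_div_mul, hj'', hi'']
  le_antisymm := by
    rintro ⟨k, n, l⟩ ⟨k', n', l'⟩ ⟨i, hi, hi', hi''⟩ ⟨j, hj, -⟩
    obtain rfl : i = 0 := by simp only at hi hj; omega
    simp_all

namespace Bitile

/-- The tile obtained from a bitile by halving all frequencies; it carries the same integer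
parameters. -/
def halve (P : Bitile) : Tile := ⟨P.k, P.n, P.l⟩

instance : PartialOrder Bitile :=
  PartialOrder.lift halve fun P Q h => by cases P; cases Q; simpa [halve] using h

theorem le_def {P Q : Bitile} :
    P ≤ Q ↔ ∃ r : ℕ, Q.k = P.k + r ∧ P.n / 2 ^ r = Q.n ∧ Q.l / 2 ^ r = P.l := Iff.rfl

/-- The bitile `P` with the time interval `2 ^ j` times longer than that of `Q` such that the
dilated rectangle `2 ^ j P` has the frequency interval of `Q` and contains `Q`. -/
def undilate (j : ℕ) (Q : Bitile) : Bitile := ⟨Q.k + j, Q.n / 2 ^ j, Q.l⟩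

theorem undilate_mono (j : ℕ) : Monotone (undilate j) := by
  rintro P Q ⟨r, hk, hn, hl⟩
  refine ⟨r, by simp only [undilate, halve] at hk ⊢; omega, ?_, hl⟩
  simp only [undilate, halve] at hn ⊢
  rw [← hn, Nat.div_div_eq_div_mul, mul_comm, ← Nat.div_div_eq_div_mul]

end Bitile

/-- The recursion satisfied by the averages of a function against the `L^∞`-normalized wave
packets. -/
structure IsWalshFamily (A : Tile → ℂ) : Prop where
  left : ∀ P : Bitile, A P.left = A P.d + A P.u
  right : ∀ P : Bitile, A P.right = A P.d - A P.u

/-- The larger of the absolute values of the two coefficients on a bitile. -/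
def coefSup (A : Tile → ℂ) (P : Bitile) : ℝ≥0 := max ‖A P.d‖₊ ‖A P.u‖₊

theorem coefSup_le {A : Tile → ℂ} {P : Bitile} {c : ℝ≥0} :
    coefSup A P ≤ c ↔ ‖A P.d‖ ≤ c ∧ ‖A P.u‖ ≤ c :=
  max_le_iff

/-- The summand of the quartile form at a bitile `Q`, for coefficient families `A1`, `A2`, `A3`. -/
def bitileTerm (L : ℕ) (A1 A2 A3 : Tile → ℂ) (Q : Bitile) : ℂ :=
  2 ^ Q.k * ((-1) ^ (Q.n / 2 ^ L) * A1 (Q.undilate (L + 1)).u * (A2 Q.d * A3 Q.d))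

/-! ### Trees of bitiles -/

section FrequencyTree

open Node Bitile

variable (k : ℤ) (l : ℕ)

/-- The bitiles of scale at most `k` whose frequency intervals contain that of a bitile of scale
`k` with frequency parameter `l`, as a copy of the binary tree. -/
def frequencyTree : Node ↪o Bitile :=
  OrderEmbedding.ofMapLEIff (fun p => ⟨k - p.depth, p.pos, l / 2 ^ p.depth⟩) fun p q => by
    rw [Bitile.le_def, Node.le_def]
    refine exists_congr fun r => ⟨fun h => ⟨by have := h.1; simp only at this; omega, h.2.1⟩,
      fun h => ⟨by simp only; omega, h.2, ?_⟩⟩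
    rw [Nat.div_div_eq_div_mul, ← pow_add, h.1]

theorem frequencyTree_apply (p : Node) :
    frequencyTree k l p = ⟨k - p.depth, p.pos, l / 2 ^ p.depth⟩ := rfl

/-- Whether the lower half of the bitiles at depth `r` contains the frequency of the tree. -/
def lowerAtDepth (r : ℕ) : Bool := decide (2 * l / 2 ^ r % 2 = 0)

/-- The coefficient of the half of the bitile at `p` that contains the frequency of the tree. -/
def innerCoef (A : Tile → ℂ) (p : Node) : ℂ :=
  if lowerAtDepth l p.depth then A (frequencyTree k l p).d else A (frequencyTree k l p).u

/-- The coefficient of the half of the bitile at `p` that misses the frequency of the tree. -/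
def outerCoef (A : Tile → ℂ) (p : Node) : ℂ :=
  if lowerAtDepth l p.depth then A (frequencyTree k l p).u else A (frequencyTree k l p).d

variable {k l}

theorem innerCoef_child (A : Tile → ℂ) (p : Node) (i : Bool) :
    innerCoef k l A (p.child i) =
      A ⟨k - p.depth - 1, 2 * p.pos + i.toNat, l / 2 ^ p.depth⟩ := by
  have scale : k - ((p.depth + 1 : ℕ) : ℤ) = k - p.depth - 1 := by push_cast; ring
  have freq : l / 2 ^ (p.depth + 1) = l / 2 ^ p.depth / 2 := by
    rw [pow_succ, Nat.div_div_eq_div_mul]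
  have parity : 2 * l / 2 ^ (p.depth + 1) = l / 2 ^ p.depth := by
    rw [pow_succ', Nat.mul_div_mul_left _ _ two_pos]
  simp only [innerCoef, lowerAtDepth, frequencyTree_apply, child, d, u, scale, freq, parity,
    decide_eq_true_eq]
  split_ifs <;> congr 2 <;> omega

theorem IsWalshFamily.walshRec {A : Tile → ℂ} (h : IsWalshFamily A) :
    WalshRec (lowerAtDepth l) (innerCoef k l A) (outerCoef k l A) where
  left p := by
    rw [innerCoef_child, innerCoef, outerCoef]
    refine (h.left (frequencyTree k l p)).trans ?_
    split_ifs
    · rfl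
    · exact add_comm _ _
  right p := by
    rw [innerCoef_child, innerCoef, outerCoef]
    refine (h.right (frequencyTree k l p)).trans ?_
    split_ifs <;> rfl

theorem norm_coef_le_one {A : Tile → ℂ} {p : Node} (h : coefSup A (frequencyTree k l p) ≤ 1) :
    ‖innerCoef k l A p‖ ≤ 1 ∧ ‖outerCoef k l A p‖ ≤ 1 := by
  rw [innerCoef, outerCoef]
  split_ifs
  exacts [coefSup_le.1 h, (coefSup_le.1 h).symm]

theorem undilate_frequencyTree (j : ℕ) (p : Node) :
    (frequencyTree (k - j) l p).undilate j = frequencyTree k l (p.coarsen j) := by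
  simp only [undilate, frequencyTree_apply, coarsen, Bitile.mk.injEq, and_true]
  ring

theorem frequencyTree_root (T : Bitile) : frequencyTree T.k T.l ⟨0, T.n⟩ = T := by
  simp [frequencyTree_apply]

theorem mem_range_frequencyTree {j : ℕ} {Q T : Bitile} (h : Q.undilate j ≤ T) :
    Q ∈ range (frequencyTree (T.k - j) T.l) := by
  obtain ⟨r, hk, -, hl⟩ := h
  refine ⟨⟨r, Q.n⟩, ?_⟩
  obtain ⟨k, n, l⟩ := Q
  simp only [halve, undilate, frequencyTree_apply, Bitile.mk.injEq, true_and] at hk hl ⊢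
  exact ⟨by omega, hl⟩

theorem two_zpow_mul_half_pow {K : Type*} [DivisionRing K] [NeZero (2 : K)] (k : ℤ) (r : ℕ) :
    (2 : K) ^ k * (1 / 2) ^ r = 2 ^ (k - r) := by
  rw [zpow_sub₀ two_ne_zero, zpow_natCast, one_div, inv_pow, div_eq_mul_inv]

theorem bitileTerm_frequencyTree (L : ℕ) (A1 A2 A3 : Tile → ℂ) (p : Node) :
    bitileTerm L A1 A2 A3 (frequencyTree (k - (L + 1 : ℕ)) l p) =
      2 ^ (k - (L + 1 : ℕ)) * ((1 / 2) ^ p.depth *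
        treeTerm L (lowerAtDepth l) (innerCoef k l A1) (outerCoef k l A1)
          (innerCoef (k - (L + 1 : ℕ)) l A2) (outerCoef (k - (L + 1 : ℕ)) l A2)
          (innerCoef (k - (L + 1 : ℕ)) l A3) (outerCoef (k - (L + 1 : ℕ)) l A3) p) := by
  rw [← mul_assoc, two_zpow_mul_half_pow, bitileTerm, undilate_frequencyTree, treeTerm]
  simp only [innerCoef, outerCoef, show (p.coarsen (L + 1)).depth = p.depth from rfl]
  split_ifs <;> rfl

end FrequencyTree

section Maximals

variable {α : Type*} [PartialOrder α] {S : Finset α} {p : α → Prop} {x : α}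

open Classical in
/-- The maximal elements of a finite set. -/
def maximals (S : Finset α) : Finset α := S.filter fun x => Maximal (· ∈ S) x

theorem mem_maximals : x ∈ maximals S ↔ Maximal (· ∈ S) x := by
  simp only [maximals, Finset.mem_filter, and_iff_right_iff_imp]
  exact Maximal.prop

theorem isAntichain_maximals (S : Finset α) : IsAntichain (· ≤ ·) (maximals S : Set α) :=
  fun _ hx _ hy hne hxy =>
    hne (hxy.antisymm ((mem_maximals.1 hx).2 (mem_maximals.1 hy).prop hxy))

theorem exists_mem_maximals_ge (hx : x ∈ S) : ∃ y ∈ maximals S, x ≤ y := by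
  obtain ⟨y, hxy, hy⟩ := S.exists_le_maximal hx
  exact ⟨y, mem_maximals.2 hy, hxy⟩

open Classical in
/-- The elements of `S` that lie below a maximal element of `S` satisfying `p`. -/
def belowMaximals (S : Finset α) (p : α → Prop) : Finset α :=
  S.filter fun x => ∃ y ∈ maximals S, x ≤ y ∧ p y

theorem mem_belowMaximals :
    x ∈ belowMaximals S p ↔ x ∈ S ∧ ∃ y ∈ maximals S, x ≤ y ∧ p y := by
  simp only [belowMaximals, Finset.mem_filter]

theorem ordConnected_belowMaximals (hS : (S : Set α).OrdConnected) (p : α → Prop) :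
    (belowMaximals S p : Set α).OrdConnected := by
  refine ⟨fun x hx y hy z hz => mem_belowMaximals.2 ?_⟩
  obtain ⟨hyS, w, hw, hyw, hp⟩ := mem_belowMaximals.1 hy
  exact ⟨hS.out (mem_belowMaximals.1 hx).1 hyS hz, w, hw, hz.2.trans hyw, hp⟩

theorem maximals_belowMaximals_subset (S : Finset α) (p : α → Prop) :
    maximals (belowMaximals S p) ⊆ maximals S := by
  intro x hx
  obtain ⟨hxB, hmax⟩ := mem_maximals.1 hx
  obtain ⟨-, y, hy, hxy, hp⟩ := mem_belowMaximals.1 hxB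
  have hyB : y ∈ belowMaximals S p :=
    mem_belowMaximals.2 ⟨(mem_maximals.1 hy).prop, y, hy, le_rfl, hp⟩
  rwa [hxy.antisymm (hmax hyB hxy)]

variable [DecidableEq α]

theorem ordConnected_sdiff_belowMaximals (hS : (S : Set α).OrdConnected) (p : α → Prop) :
    ((S \ belowMaximals S p : Finset α) : Set α).OrdConnected := by
  refine ⟨fun x hx y hy z hz => ?_⟩
  obtain ⟨hxS, hxB⟩ := Finset.mem_sdiff.1 hx
  refine Finset.mem_sdiff.2 ⟨hS.out hxS (Finset.mem_sdiff.1 hy).1 hz, fun hzB => hxB ?_⟩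
  obtain ⟨-, w, hw, hzw, hp⟩ := mem_belowMaximals.1 hzB
  exact mem_belowMaximals.2 ⟨hxS, w, hw, hz.1.trans hzw, hp⟩

theorem maximals_sdiff_belowMaximals_subset (S : Finset α) (p : α → Prop) :
    maximals (S \ belowMaximals S p) ⊆ maximals S := by
  intro x hx
  obtain ⟨hxR, hmax⟩ := mem_maximals.1 hx
  obtain ⟨hxS, hxB⟩ := Finset.mem_sdiff.1 hxR
  refine mem_maximals.2 ⟨hxS, fun y hy hxy => hmax (Finset.mem_sdiff.2 ⟨hy, fun hyB => hxB ?_⟩) hxy⟩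
  obtain ⟨-, w, hw, hyw, hp⟩ := mem_belowMaximals.1 hyB
  exact mem_belowMaximals.2 ⟨hxS, w, hw, hxy.trans hyw, hp⟩

end Maximals

/-- The total length of the time intervals of a finite set of bitiles. -/
def totalLength (S : Finset Bitile) : ℝ := ∑ P ∈ S, 2 ^ P.k

theorem totalLength_nonneg (S : Finset Bitile) : 0 ≤ totalLength S :=
  Finset.sum_nonneg fun _ _ => by positivity

theorem totalLength_maximals_add_le [DecidableEq Bitile] (S : Finset Bitile) (p : Bitile → Prop) :
    totalLength (maximals (belowMaximals S p)) + totalLength (maximals (S \ belowMaximals S p)) ≤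
      totalLength (maximals S) := by
  have hdisj : Disjoint (maximals (belowMaximals S p)) (maximals (S \ belowMaximals S p)) :=
    Finset.disjoint_left.2 fun Q hQ hQ' =>
      (Finset.mem_sdiff.1 (mem_maximals.1 hQ').prop).2 (mem_maximals.1 hQ).prop
  rw [totalLength, totalLength, ← Finset.sum_union hdisj]
  exact Finset.sum_le_sum_of_subset_of_nonneg
    (Finset.union_subset (maximals_belowMaximals_subset S p)
      (maximals_sdiff_belowMaximals_subset S p)) fun _ _ _ => by positivity

section ForestEstimate

open Node Bitile

variable {L : ℕ} {A1 A2 A3 : Tile → ℂ}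

theorem Node.maximal_of_mem_entries {Y : Finset Node} (hY : (Y : Set Node).OrdConnected)
    {p : Node} (hp : p ∈ entries Y) : Maximal (· ∈ Y) p := by
  obtain ⟨hpY, hpc⟩ := mem_entries.1 hp
  refine ⟨hpY, fun q hq hpq => ?_⟩
  rcases Nat.eq_zero_or_pos p.depth with h0 | h0
  · exact le_of_le_of_depth_eq_zero hpq le_rfl h0
  · obtain ⟨p', i, rfl⟩ := exists_eq_child_of_depth_pos h0
    rcases child_le_iff.1 hpq with rfl | h
    · exact le_rfl
    · exact absurd (child_mem_children.2 (hY.out hpY hq ⟨child_le p' i, h⟩)) hpc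

theorem weight_entries_preimage_le {S : Finset Bitile} (hS : (S : Set Bitile).OrdConnected)
    {k : ℤ} {l : ℕ} (hrange : (S : Set Bitile) ⊆ range (frequencyTree k l)) :
    2 ^ k * weight (entries (S.preimage _ (frequencyTree k l).injective.injOn)) ≤
      totalLength (maximals S) := by
  set f := frequencyTree k l
  have preimage_ordConnected :
      (S.preimage f f.injective.injOn : Set Node).OrdConnected := by
    rw [Finset.coe_preimage]
    exact hS.preimage_mono f.monotone
  rw [weight, Finset.mul_sum, totalLength]
  calc ∑ p ∈ entries (S.preimage f f.injective.injOn), (2 : ℝ) ^ k * (1 / 2) ^ p.depth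
      = ∑ P ∈ (entries (S.preimage f f.injective.injOn)).map f.toEmbedding, (2 : ℝ) ^ P.k := by
        simp only [two_zpow_mul_half_pow, Finset.sum_map]
        rfl
    _ ≤ ∑ P ∈ maximals S, (2 : ℝ) ^ P.k := by
        refine Finset.sum_le_sum_of_subset_of_nonneg (fun P hP => ?_) fun _ _ _ => by positivity
        obtain ⟨p, hp, rfl⟩ := Finset.mem_map.1 hP
        obtain ⟨hpS, hmax⟩ := maximal_of_mem_entries preimage_ordConnected hp
        refine mem_maximals.2 ⟨Finset.mem_preimage.1 hpS, fun Q hQ hPQ => ?_⟩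
        obtain ⟨q, rfl⟩ := hrange hQ
        exact f.monotone (hmax (Finset.mem_preimage.2 hQ) (f.le_iff_le.1 hPQ))

theorem eventually_norm_sum_bitileTerm_tree_le (r1 : IsWalshFamily A1) (r2 : IsWalshFamily A2)
    (r3 : IsWalshFamily A3) {S : Finset Bitile} {T : Bitile}
    (hS : (S : Set Bitile).OrdConnected) (hT : ∀ Q ∈ S, Q.undilate (L + 1) ≤ T)
    (s1 : ∀ Q ∈ S, ∀ P, Q.undilate (L + 1) ≤ P → P ≤ T → coefSup A1 P ≤ 1)
    (s2 : ∀ Q ∈ S, coefSup A2 Q ≤ 1) (s3 : ∀ Q ∈ S, coefSup A3 Q ≤ 1) :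
    ∀ᶠ N : ℕ in Filter.atTop, ‖∑ Q ∈ S, bitileTerm L A1 A2 A3 Q‖ ≤
      13 * ∑ n ∈ Finset.range N,
        min (totalLength (maximals S)) (20 * Real.exp (-(n / 16)) * 2 ^ T.k) := by
  have hrange : (S : Set Bitile) ⊆ range (frequencyTree (T.k - (L + 1 : ℕ)) T.l) :=
    fun Q hQ => mem_range_frequencyTree (hT Q hQ)
  set f := frequencyTree (T.k - (L + 1 : ℕ)) T.l with hf
  set Y := S.preimage f f.injective.injOn
  have mem_Y : ∀ {p}, p ∈ Y ↔ f p ∈ S := Finset.mem_preimage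
  have Y_ordConnected : (Y : Set Node).OrdConnected := by
    rw [Finset.coe_preimage]
    exact hS.preimage_mono f.monotone
  have le_root : ∀ p ∈ Y, p.coarsen (L + 1) ≤ ⟨0, T.n⟩ := fun p hp => by
    rw [← (frequencyTree T.k T.l).le_iff_le, ← undilate_frequencyTree, frequencyTree_root]
    exact hT _ (mem_Y.1 hp)
  have tree_estimate := eventually_norm_sum_treeTerm_le (L := L) (r1.walshRec (k := T.k))
    (r2.walshRec (k := T.k - (L + 1 : ℕ))) (r3.walshRec (k := T.k - (L + 1 : ℕ)))
    Y_ordConnected rfl le_root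
    (fun p hp q hq => norm_coef_le_one <| s1 _ (mem_Y.1 hp) _
      (by rw [undilate_frequencyTree]; exact (frequencyTree T.k T.l).monotone hq)
      (by
        conv_rhs => rw [← frequencyTree_root T]
        exact (frequencyTree T.k T.l).monotone
          (le_of_le_of_depth_eq_zero hq (le_root p hp) rfl)))
    (fun p hp => norm_coef_le_one (s2 _ (mem_Y.1 hp)))
    (fun p hp => norm_coef_le_one (s3 _ (mem_Y.1 hp)))
  filter_upwards [tree_estimate] with N hN
  rw [← Finset.sum_preimage f S f.injective.injOn _ fun Q hQ hQr => absurd (hrange hQ) hQr]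
  simp only [hf, bitileTerm_frequencyTree, ← Finset.mul_sum]
  rw [norm_mul, norm_zpow, Complex.norm_ofNat]
  refine (mul_le_mul_of_nonneg_left hN (by positivity)).trans ?_
  rw [mul_left_comm, Finset.mul_sum]
  gcongr with n
  rw [mul_min_of_nonneg _ _ (by positivity)]
  refine min_le_min (weight_entries_preimage_le hS hrange) (le_of_eq ?_)
  rw [zpow_sub₀ two_ne_zero, zpow_natCast]
  field_simp

theorem eventually_norm_sum_bitileTerm_forest_le (r1 : IsWalshFamily A1) (r2 : IsWalshFamily A2)
    (r3 : IsWalshFamily A3) {S TT : Finset Bitile} (hS : (S : Set Bitile).OrdConnected)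
    (hT : ∀ Q ∈ S, ∃ T ∈ TT, Q.undilate (L + 1) ≤ T)
    (s1 : ∀ Q ∈ S, ∀ T ∈ TT, ∀ P, Q.undilate (L + 1) ≤ P → P ≤ T → coefSup A1 P ≤ 1)
    (s2 : ∀ Q ∈ S, coefSup A2 Q ≤ 1) (s3 : ∀ Q ∈ S, coefSup A3 Q ≤ 1) :
    ∀ᶠ N : ℕ in Filter.atTop, ‖∑ Q ∈ S, bitileTerm L A1 A2 A3 Q‖ ≤
      13 * ∑ n ∈ Finset.range N,
        min (totalLength (maximals S)) (20 * Real.exp (-(n / 16)) * totalLength TT) := by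
  classical
  induction TT using Finset.induction_on generalizing S with
  | empty =>
    obtain rfl : S = ∅ := Finset.eq_empty_of_forall_notMem fun Q hQ => by simpa using hT Q hQ
    simp [maximals, totalLength]
  | insert T TT hTT ih =>
    set D := belowMaximals S fun M => M.undilate (L + 1) ≤ T
    have D_subset : D ⊆ S := Finset.filter_subset _ _
    have R_subset : S \ D ⊆ S := Finset.sdiff_subset
    have D_le_T : ∀ Q ∈ D, Q.undilate (L + 1) ≤ T := fun Q hQ => by
      obtain ⟨-, M, -, hQM, hM⟩ := mem_belowMaximals.1 hQ
      exact (undilate_mono _ hQM).trans hM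
    have R_le_TT : ∀ Q ∈ S \ D, ∃ T' ∈ TT, Q.undilate (L + 1) ≤ T' := fun Q hQ => by
      obtain ⟨hQS, hQD⟩ := Finset.mem_sdiff.1 hQ
      obtain ⟨M, hM, hQM⟩ := exists_mem_maximals_ge hQS
      obtain ⟨T', hT', hMT'⟩ := hT M (mem_maximals.1 hM).prop
      rcases Finset.mem_insert.1 hT' with rfl | hT'
      · exact absurd (mem_belowMaximals.2 ⟨hQS, M, hM, hQM, hMT'⟩) hQD
      · exact ⟨T', hT', (undilate_mono _ hQM).trans hMT'⟩
    filter_upwards [eventually_norm_sum_bitileTerm_tree_le r1 r2 r3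
        (ordConnected_belowMaximals hS _) D_le_T
        (fun Q hQ => s1 Q (D_subset hQ) T (Finset.mem_insert_self _ _))
        (fun Q hQ => s2 Q (D_subset hQ)) (fun Q hQ => s3 Q (D_subset hQ)),
      ih (ordConnected_sdiff_belowMaximals hS _) R_le_TT
        (fun Q hQ T' hT' => s1 Q (R_subset hQ) T' (Finset.mem_insert_of_mem hT'))
        (fun Q hQ => s2 Q (R_subset hQ)) (fun Q hQ => s3 Q (R_subset hQ))] with N hD hR
    rw [← Finset.sum_sdiff D_subset]
    refine (norm_add_le _ _).trans ((add_le_add hR hD).trans ?_)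
    rw [← mul_add, ← Finset.sum_add_distrib]
    gcongr with n
    have totalLength_insert : totalLength (insert T TT) = 2 ^ T.k + totalLength TT :=
      Finset.sum_insert hTT
    rw [totalLength_insert, mul_add, add_comm (min (totalLength (maximals (S \ D))) _)]
    exact (min_add_min_le_min_add_add).trans
      (min_le_min_right _ (totalLength_maximals_add_le S _))

end ForestEstimate

/-! ### Dyadic intervals and antichains of bitiles -/

section Dyadic

variable {k : ℤ} {m n : ℕ} {x : ℝ}

theorem mem_dyadicI : x ∈ dyadicI k n ↔ 0 ≤ x ∧ ⌊x / 2 ^ k⌋₊ = n := by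
  have hk : (0 : ℝ) < 2 ^ k := by positivity
  rw [dyadicI, mem_Ico, ← le_div_iff₀' hk, ← div_lt_iff₀' hk]
  refine ⟨fun h => ?_, fun ⟨hx, h⟩ => (Nat.floor_eq_iff (by positivity)).1 h⟩
  have hx : 0 ≤ x / 2 ^ k := n.cast_nonneg.trans h.1
  exact ⟨by simpa [hk.ne'] using mul_nonneg hx hk.le, (Nat.floor_eq_iff hx).2 h⟩

theorem dyadicI_subset (k : ℤ) (n r : ℕ) : dyadicI k n ⊆ dyadicI (k + r) (n / 2 ^ r) := by
  intro x hx
  obtain ⟨hx0, rfl⟩ := mem_dyadicI.1 hx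
  refine mem_dyadicI.2 ⟨hx0, ?_⟩
  rw [zpow_add₀ two_ne_zero, ← div_div, zpow_natCast]
  exact_mod_cast Nat.floor_div_natCast (x / 2 ^ k) (2 ^ r)

theorem eq_of_mem_dyadicI (hm : x ∈ dyadicI k m) (hn : x ∈ dyadicI k n) : m = n :=
  (mem_dyadicI.1 hm).2.symm.trans (mem_dyadicI.1 hn).2

theorem volume_dyadicI (k : ℤ) (n : ℕ) : volume (dyadicI k n) = ENNReal.ofReal (2 ^ k) := by
  rw [dyadicI, Real.volume_Ico]
  ring_nf

end Dyadic

namespace Bitile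

variable {P Q T : Bitile}

theorem timeI_subset (h : P ≤ Q) : P.timeI ⊆ Q.timeI := by
  obtain ⟨r, hk, hn, -⟩ := Bitile.le_def.1 h
  have := dyadicI_subset P.k P.n r
  rwa [← hk, hn] at this

theorem le_of_mem_timeI {x : ℝ} (hPT : P ≤ T) (hQT : Q ≤ T) (hPQ : P.k ≤ Q.k)
    (hP : x ∈ P.timeI) (hQ : x ∈ Q.timeI) : P ≤ Q := by
  obtain ⟨r, hr⟩ := Int.le.dest hPQ
  obtain ⟨i, hi, -, hiP⟩ := Bitile.le_def.1 hPT
  obtain ⟨j, hj, -, hjQ⟩ := Bitile.le_def.1 hQT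
  refine Bitile.le_def.2 ⟨r, hr.symm, ?_, ?_⟩
  · exact eq_of_mem_dyadicI (hr ▸ dyadicI_subset P.k P.n r hP) hQ
  · rw [← hjQ, ← hiP, Nat.div_div_eq_div_mul, ← pow_add, show i = j + r by omega]

theorem pairwiseDisjoint_timeI {F : Set Bitile} (hF : IsAntichain (· ≤ ·) F)
    (hT : ∀ P ∈ F, P ≤ T) : F.PairwiseDisjoint timeI := by
  intro P hP Q hQ hne
  refine Set.disjoint_left.2 fun x hxP hxQ => ?_
  rcases le_total P.k Q.k with hk | hk
  · exact hF hP hQ hne (le_of_mem_timeI (hT P hP) (hT Q hQ) hk hxP hxQ)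
  · exact hF hQ hP hne.symm (le_of_mem_timeI (hT Q hQ) (hT P hP) hk hxQ hxP)

end Bitile

theorem totalLength_le_of_forall_le {F : Finset Bitile} {T : Bitile}
    (hF : IsAntichain (· ≤ ·) (F : Set Bitile)) (hT : ∀ P ∈ F, P ≤ T) :
    totalLength F ≤ 2 ^ T.k := by
  have hvol : ∑ P ∈ F, volume P.timeI ≤ volume T.timeI := by
    rw [← measure_biUnion_finset (Bitile.pairwiseDisjoint_timeI hF hT)
      fun P _ => measurableSet_Ico]
    exact measure_mono (iUnion₂_subset fun P hP => Bitile.timeI_subset (hT P hP))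
  have hofReal : ENNReal.ofReal (totalLength F) = ∑ P ∈ F, volume P.timeI :=
    (ENNReal.ofReal_sum_of_nonneg fun P _ => by positivity).trans
      (Finset.sum_congr rfl fun P _ => (volume_dyadicI P.k P.n).symm)
  rw [← hofReal, show volume T.timeI = _ from volume_dyadicI T.k T.n] at hvol
  exact (ENNReal.ofReal_le_ofReal_iff (by positivity)).1 hvol

theorem totalLength_le_of_forall_exists_le {F G : Finset Bitile}
    (hF : IsAntichain (· ≤ ·) (F : Set Bitile)) (hG : ∀ P ∈ F, ∃ T ∈ G, P ≤ T) :
    totalLength F ≤ totalLength G := by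
  classical
  choose! top htop hle using hG
  rw [totalLength, ← Finset.sum_fiberwise_of_maps_to htop]
  refine Finset.sum_le_sum fun T _ => totalLength_le_of_forall_le (hF.subset ?_) fun P hP => ?_
  · exact_mod_cast Finset.filter_subset _ _
  · obtain ⟨hPF, rfl⟩ := Finset.mem_filter.1 hP
    exact hle P hPF

/-! ### Bessel's inequality and the selection of large coefficients -/

/-- A Walsh family with energy at most `e`: pairwise disjoint tiles carry orthogonal wave packets,
so Bessel's inequality holds over every antichain of tiles. -/
structure IsBesselFamily (A : Tile → ℂ) (e : ℝ) : Prop extends IsWalshFamily A where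
  sum_le : ∀ F : Finset Tile, IsAntichain (· ≤ ·) (F : Set Tile) →
    ∑ p ∈ F, 2 ^ p.k * ‖A p‖ ^ 2 ≤ e

open Classical in
/-- The half of a bitile carrying the larger coefficient. -/
def largerHalf (A : Tile → ℂ) (P : Bitile) : Tile := if ‖A P.d‖₊ ≤ ‖A P.u‖₊ then P.u else P.d

theorem norm_largerHalf (A : Tile → ℂ) (P : Bitile) : ‖A (largerHalf A P)‖ = coefSup A P := by
  rw [largerHalf, coefSup]
  split_ifs with h
  · rw [max_eq_right h, coe_nnnorm]
  · rw [max_eq_left (not_le.1 h).le, coe_nnnorm]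

theorem largerHalf_eq (A : Tile → ℂ) (P : Bitile) :
    ∃ δ < 2, largerHalf A P = ⟨P.k, P.n, 2 * P.l + δ⟩ := by
  rw [largerHalf]
  split_ifs
  exacts [⟨1, one_lt_two, rfl⟩, ⟨0, two_pos, rfl⟩]

theorem le_of_largerHalf_le {A : Tile → ℂ} {P Q : Bitile} (h : largerHalf A P ≤ largerHalf A Q) :
    P ≤ Q := by
  obtain ⟨δ, hδ, hP⟩ := largerHalf_eq A P
  obtain ⟨η, hη, hQ⟩ := largerHalf_eq A Q
  rw [hP, hQ] at h
  obtain ⟨r, hk, hn, hl⟩ := h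
  simp only at hl
  refine ⟨r, hk, hn, ?_⟩
  calc Q.l / 2 ^ r = (2 * Q.l + η) / 2 / 2 ^ r := by congr 1; omega
    _ = (2 * Q.l + η) / 2 ^ r / 2 := Nat.div_right_comm _ _ _
    _ = P.l := by rw [hl]; omega

namespace IsBesselFamily

variable {A : Tile → ℂ} {e : ℝ}

theorem energy_nonneg (h : IsBesselFamily A e) : 0 ≤ e := by simpa using h.sum_le ∅ (by simp)

theorem totalLength_mul_sq_le (h : IsBesselFamily A e) {F : Finset Bitile}
    (hF : IsAntichain (· ≤ ·) (F : Set Bitile)) {c : ℝ≥0} (hc : ∀ P ∈ F, c ≤ coefSup A P) :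
    totalLength F * c ^ 2 ≤ e := by
  classical
  have injOn : Set.InjOn (largerHalf A) F := fun P hP Q hQ hPQ =>
    hF.eq hP hQ (le_of_largerHalf_le hPQ.le)
  have antichain : IsAntichain (· ≤ ·) (F.image (largerHalf A) : Set Tile) := by
    rw [Finset.coe_image]
    rintro _ ⟨P, hP, rfl⟩ _ ⟨Q, hQ, rfl⟩ hne hle
    exact hne (congrArg _ (hF.eq hP hQ (le_of_largerHalf_le hle)))
  have hscale : ∀ P, (largerHalf A P).k = P.k := fun P => by
    obtain ⟨δ, -, hP⟩ := largerHalf_eq A P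
    rw [hP]
  refine le_trans ?_ (h.sum_le _ antichain)
  rw [Finset.sum_image injOn, totalLength, Finset.sum_mul]
  refine Finset.sum_le_sum fun P hP => ?_
  rw [hscale, norm_largerHalf]
  gcongr
  exact hc P hP

end IsBesselFamily

section SupAbove

variable {α : Type*} [PartialOrder α] {μ : α → ℝ≥0} {U : Finset α} {x y : α}

open Classical in
/-- The supremum of `μ` over the elements of `U` above a given one. -/
def supAbove (μ : α → ℝ≥0) (U : Finset α) (x : α) : ℝ≥0 := (U.filter (x ≤ ·)).sup μ

open Classical in
theorem antitone_supAbove (μ : α → ℝ≥0) (U : Finset α) : Antitone (supAbove μ U) :=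
  fun _ _ hxy => Finset.sup_mono <| Finset.monotone_filter_right U fun _ _ => hxy.trans

open Classical in
theorem le_supAbove (hxy : x ≤ y) (hy : y ∈ U) : μ y ≤ supAbove μ U x :=
  Finset.le_sup (f := μ) (Finset.mem_filter.2 ⟨hy, hxy⟩)

theorem exists_supAbove_eq (μ : α → ℝ≥0) (hx : x ∈ U) : ∃ y ∈ U, x ≤ y ∧ supAbove μ U x = μ y := by
  classical
  obtain ⟨y, hy, h⟩ := Finset.exists_mem_eq_sup (U.filter (x ≤ ·))
    ⟨x, Finset.mem_filter.2 ⟨hx, le_rfl⟩⟩ μ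
  exact ⟨y, (Finset.mem_filter.1 hy).1, (Finset.mem_filter.1 hy).2, h⟩

/-- The maximal elements among those of `U` at which `μ` is at least `c`. -/
def largeMaximals (μ : α → ℝ≥0) (U : Finset α) (c : ℝ≥0) : Finset α :=
  maximals (U.filter (c ≤ μ ·))

theorem mem_and_le_of_mem_largeMaximals {c : ℝ≥0} (hx : x ∈ largeMaximals μ U c) :
    x ∈ U ∧ c ≤ μ x :=
  Finset.mem_filter.1 (mem_maximals.1 hx).prop

theorem exists_mem_largeMaximals_ge {c : ℝ≥0} (hx : x ∈ U) (hc : c ≤ supAbove μ U x) :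
    ∃ T ∈ largeMaximals μ U c, x ≤ T := by
  obtain ⟨y, hyU, hxy, hy⟩ := exists_supAbove_eq μ hx
  obtain ⟨T, hT, hyT⟩ := exists_mem_maximals_ge (S := U.filter (c ≤ μ ·))
    (Finset.mem_filter.2 ⟨hyU, hc.trans_eq hy⟩)
  exact ⟨T, hT, hxy.trans hyT⟩

end SupAbove

namespace IsBesselFamily

variable {A : Tile → ℂ} {e : ℝ} {U : Finset Bitile} {s : ℝ≥0}

theorem totalLength_largeMaximals_le (h : IsBesselFamily A e) (hs : 0 < s) :
    totalLength (largeMaximals (coefSup A) U (s / 2)) ≤ 4 * e / s ^ 2 := by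
  have := h.totalLength_mul_sq_le (F := largeMaximals (coefSup A) U (s / 2))
    (isAntichain_maximals _) fun P hP => (mem_and_le_of_mem_largeMaximals hP).2
  rw [le_div_iff₀ (by positivity)]
  push_cast at this
  linarith

theorem totalLength_maximals_le (h : IsBesselFamily A e) (hs : 0 < s) {S : Finset Bitile}
    (hSU : S ⊆ U) (hS : ∀ Q ∈ S, s / 2 ≤ supAbove (coefSup A) U Q) :
    totalLength (maximals S) ≤ 4 * e / s ^ 2 :=
  (totalLength_le_of_forall_exists_le (isAntichain_maximals S) fun Q hQ =>
    have hQS := (mem_maximals.1 hQ).prop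
    exists_mem_largeMaximals_ge (hSU hQS) (hS Q hQS)).trans (h.totalLength_largeMaximals_le hs)

end IsBesselFamily

/-! ### The level sets of the three coefficient families -/

section RealVariable

theorem min_le_rpow_mul_rpow {x y t : ℝ} (hx : 0 ≤ x) (hy : 0 ≤ y) (ht0 : 0 < t) (ht1 : t < 1) :
    min x y ≤ x ^ (1 - t) * y ^ t := by
  have ht : 0 ≤ 1 - t := by linarith
  have hmin : 0 ≤ min x y := le_min hx hy
  calc min x y = min x y ^ (1 - t) * min x y ^ t := by
        rw [← Real.rpow_add_of_nonneg hmin ht ht0.le, sub_add_cancel, Real.rpow_one]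
    _ ≤ x ^ (1 - t) * y ^ t := by
        gcongr
        exacts [min_le_left _ _, min_le_right _ _]

theorem sum_pow_le_inv_one_sub {q : ℝ} (h0 : 0 ≤ q) (h1 : q < 1) (F : Finset ℕ) :
    ∑ n ∈ F, q ^ n ≤ (1 - q)⁻¹ := by
  rw [← tsum_geometric_of_lt_one h0 h1]
  exact (summable_geometric_of_lt_one h0 h1).sum_le_tsum F fun _ _ => by positivity

variable {t1 t2 t3 : ℝ}

theorem min_exp_mul_le {x y b1 b2 b3 : ℝ} (ht1 : 0 < t1) (ht2 : 0 < t2) (ht3 : 0 < t3)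
    (ht : t1 + t2 + t3 = 1) (hx : 0 ≤ x) (hy : 0 ≤ y) (hb1 : y ≤ b1) (hb2 : x ≤ b2) (hb3 : x ≤ b3)
    (n : ℕ) :
    min x (20 * Real.exp (-(n / 16)) * y) ≤
      20 * (b1 ^ t1 * b2 ^ t2 * b3 ^ t3) * Real.exp (-(t1 / 16)) ^ n := by
  have exp_rpow : Real.exp (-(n / 16)) ^ t1 = Real.exp (-(t1 / 16)) ^ n := by
    rw [← Real.exp_mul, ← Real.exp_nat_mul]
    ring_nf
  have twenty_rpow : (20 : ℝ) ^ t1 ≤ 20 :=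
    (Real.rpow_le_rpow_of_exponent_le (by norm_num) (by linarith)).trans_eq (Real.rpow_one _)
  calc min x (20 * Real.exp (-(n / 16)) * y)
      ≤ x ^ (1 - t1) * (20 * Real.exp (-(n / 16)) * y) ^ t1 :=
        min_le_rpow_mul_rpow hx (by positivity) ht1 (by linarith)
    _ = x ^ t2 * x ^ t3 * (20 ^ t1 * Real.exp (-(t1 / 16)) ^ n * y ^ t1) := by
        rw [show 1 - t1 = t2 + t3 by linarith, Real.rpow_add_of_nonneg hx ht2.le ht3.le,
          Real.mul_rpow (by positivity) hy, Real.mul_rpow (by norm_num) (by positivity), exp_rpow]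
    _ ≤ b2 ^ t2 * b3 ^ t3 * (20 * Real.exp (-(t1 / 16)) ^ n * b1 ^ t1) := by
        have hb2' := hx.trans hb2
        have hb3' := hx.trans hb3
        gcongr
    _ = _ := by ring

theorem sum_min_exp_mul_le {x y b1 b2 b3 : ℝ} (ht1 : 0 < t1) (ht2 : 0 < t2) (ht3 : 0 < t3)
    (ht : t1 + t2 + t3 = 1) (hx : 0 ≤ x) (hy : 0 ≤ y) (hb1 : y ≤ b1) (hb2 : x ≤ b2) (hb3 : x ≤ b3)
    (N : ℕ) :
    ∑ n ∈ Finset.range N, min x (20 * Real.exp (-(n / 16)) * y) ≤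
      20 * (b1 ^ t1 * b2 ^ t2 * b3 ^ t3) * (1 - Real.exp (-(t1 / 16)))⁻¹ := by
  refine (Finset.sum_le_sum fun n _ =>
    min_exp_mul_le ht1 ht2 ht3 ht hx hy hb1 hb2 hb3 n).trans ?_
  have hb1' := hy.trans hb1
  have hb2' := hx.trans hb2
  have hb3' := hx.trans hb3
  rw [← Finset.mul_sum]
  gcongr
  exact sum_pow_le_inv_one_sub (by positivity) (by rw [Real.exp_lt_one_iff]; linarith) _

theorem zpow_rpow_le_of_zpow_le {a g : ℝ} (ha : 0 < a) (hg : 0 < g) {i : ℤ} (hi : 2 ^ i ≤ a) :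
    ((2 : ℝ) ^ i) ^ g ≤ a ^ g * (2 ^ (-g)) ^ (Int.log 2 a - i).toNat := by
  have hlog : i ≤ Int.log 2 a := (Int.zpow_le_iff_le_log one_lt_two ha).1 (by exact_mod_cast hi)
  have hdecay : (2 : ℝ) ^ i ≤ a * (1 / 2) ^ (Int.log 2 a - i).toNat := calc
    (2 : ℝ) ^ i = 2 ^ Int.log 2 a * (1 / 2) ^ (Int.log 2 a - i).toNat := by
      rw [two_zpow_mul_half_pow]
      congr 1
      omega
    _ ≤ _ := by
      gcongr
      exact_mod_cast Int.zpow_log_le_self one_lt_two ha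
  calc ((2 : ℝ) ^ i) ^ g ≤ (a * (1 / 2) ^ (Int.log 2 a - i).toNat) ^ g := by gcongr
    _ = _ := by
      rw [Real.mul_rpow ha.le (by positivity), ← Real.rpow_natCast, ← Real.rpow_natCast,
        ← Real.rpow_mul (by norm_num), ← Real.rpow_mul (by norm_num), one_div,
        Real.inv_rpow (by norm_num), ← Real.rpow_neg (by norm_num)]
      ring_nf

theorem sum_zpow_rpow_le {a g : ℝ} (ha : 0 < a) (hg : 0 < g) {F : Finset ℤ}
    (hF : ∀ i ∈ F, 2 ^ i ≤ a) :
    ∑ i ∈ F, ((2 : ℝ) ^ i) ^ g ≤ a ^ g * (1 - 2 ^ (-g))⁻¹ := by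
  have injOn : Set.InjOn (fun i => (Int.log 2 a - i).toNat) F := fun i hi j hj hij => by
    have := (Int.zpow_le_iff_le_log one_lt_two ha).1 (by exact_mod_cast hF i hi)
    have := (Int.zpow_le_iff_le_log one_lt_two ha).1 (by exact_mod_cast hF j hj)
    simp only at hij
    omega
  calc ∑ i ∈ F, ((2 : ℝ) ^ i) ^ g ≤ ∑ i ∈ F, a ^ g * (2 ^ (-g)) ^ (Int.log 2 a - i).toNat :=
        Finset.sum_le_sum fun i hi => zpow_rpow_le_of_zpow_le ha hg (hF i hi)
    _ = a ^ g * ∑ n ∈ F.image fun i => (Int.log 2 a - i).toNat, (2 ^ (-g)) ^ n := by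
        rw [Finset.sum_image injOn, Finset.mul_sum]
    _ ≤ a ^ g * (1 - 2 ^ (-g))⁻¹ := by
        gcongr
        exact sum_pow_le_inv_one_sub (by positivity)
          (Real.rpow_lt_one_of_one_lt_of_neg one_lt_two (by linarith)) _

theorem zpow_succ_mul_rpow_eq {e : ℝ} (he : 0 ≤ e) (t : ℝ) (i : ℤ) :
    2 ^ (i + 1) * (4 * e / (2 ^ (i + 1)) ^ 2) ^ t = 2 * e ^ t * ((2 : ℝ) ^ i) ^ (1 - 2 * t) := by
  have hs : (0 : ℝ) < 2 ^ i := by positivity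
  rw [zpow_add_one₀ two_ne_zero]
  generalize (2 : ℝ) ^ i = s at hs
  rw [show 4 * e / (s * 2) ^ 2 = e / s ^ 2 by field_simp; ring, Real.div_rpow he (by positivity),
    Real.rpow_sub hs, Real.rpow_one, Real.rpow_mul hs.le, Real.rpow_two]
  ring

end RealVariable

/-- A finite set of bitiles containing every bitile above one of its members whose scale does not
exceed all scales of the set. -/
def IsScaleClosed (U : Finset Bitile) : Prop :=
  ∀ Q ∈ U, ∀ T ∈ U, ∀ P, Q ≤ P → P.k ≤ T.k → P ∈ U

namespace Bitile

theorem scale_mono {P Q : Bitile} (h : P ≤ Q) : P.k ≤ Q.k := by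
  obtain ⟨r, hk, -⟩ := Bitile.le_def.1 h
  omega

theorem exists_undilate_eq {j : ℕ} {P Q : Bitile} (h : Q.undilate j ≤ P) :
    ∃ R, Q ≤ R ∧ R.undilate j = P := by
  obtain ⟨r, hk, hn, hl⟩ := Bitile.le_def.1 h
  refine ⟨⟨Q.k + r, Q.n / 2 ^ r, P.l⟩, Bitile.le_def.2 ⟨r, rfl, rfl, hl⟩, ?_⟩
  obtain ⟨k, n, l⟩ := P
  simp only [undilate, Bitile.mk.injEq, and_true] at hk hn ⊢
  exact ⟨by omega, by rw [← hn, Nat.div_right_comm]⟩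

end Bitile

section LevelSets

open Bitile

variable {L : ℕ} {A1 A2 A3 : Tile → ℂ} {e1 e2 e3 t1 t2 t3 : ℝ} {U S : Finset Bitile}

theorem IsScaleClosed.ordConnected (hU : IsScaleClosed U) : (U : Set Bitile).OrdConnected :=
  ⟨fun P hP T hT Q hQ => hU P hP T hT Q hQ.1 (scale_mono hQ.2)⟩

theorem IsScaleClosed.mem_image_undilate [DecidableEq Bitile] (hU : IsScaleClosed U) {j : ℕ}
    {P Q T : Bitile} (hQ : Q ∈ U) (hT : T ∈ U.image (undilate j)) (hQP : Q.undilate j ≤ P)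
    (hPT : P ≤ T) : P ∈ U.image (undilate j) := by
  obtain ⟨T, hTU, rfl⟩ := Finset.mem_image.1 hT
  obtain ⟨R, hQR, rfl⟩ := exists_undilate_eq hQP
  have hscale := scale_mono hPT
  simp only [undilate] at hscale
  exact Finset.mem_image_of_mem _ (hU Q hQ T hTU R hQR (by omega))

theorem IsWalshFamily.smul {A : Tile → ℂ} (h : IsWalshFamily A) (c : ℂ) :
    IsWalshFamily (c • A) where
  left P := by simp only [Pi.smul_apply, h.left, smul_add]
  right P := by simp only [Pi.smul_apply, h.right, smul_sub]

theorem coefSup_inv_smul_le_one {A : Tile → ℂ} {P : Bitile} {s : ℝ≥0} (h : coefSup A P ≤ s) :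
    coefSup ((s : ℂ)⁻¹ • A) P ≤ 1 := by
  have hnorm : ∀ z : ℂ, ‖z‖ ≤ s → ‖(s : ℂ)⁻¹ * z‖ ≤ 1 := fun z hz => by
    rw [norm_mul, norm_inv, Complex.norm_real, Real.norm_of_nonneg s.coe_nonneg]
    exact inv_mul_le_one_of_le₀ hz s.coe_nonneg
  obtain ⟨hd, hu⟩ := coefSup_le.1 h
  exact coefSup_le.2 ⟨hnorm _ hd, hnorm _ hu⟩

theorem bitileTerm_smul (L : ℕ) (A1 A2 A3 : Tile → ℂ) (c1 c2 c3 : ℂ) (Q : Bitile) :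
    bitileTerm L (c1 • A1) (c2 • A2) (c3 • A3) Q = c1 * c2 * c3 * bitileTerm L A1 A2 A3 Q := by
  simp only [bitileTerm, Pi.smul_apply, smul_eq_mul]
  ring

theorem norm_bitileTerm_le (L : ℕ) (A1 A2 A3 : Tile → ℂ) (Q : Bitile) :
    ‖bitileTerm L A1 A2 A3 Q‖ ≤
      2 ^ Q.k * (coefSup A1 (Q.undilate (L + 1)) * (coefSup A2 Q * coefSup A3 Q)) := by
  simp only [bitileTerm, norm_mul, norm_zpow, norm_pow, norm_neg, norm_one, one_pow, one_mul,
    Complex.norm_ofNat]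
  gcongr
  exacts [(coefSup_le.1 le_rfl).2, (coefSup_le.1 le_rfl).1, (coefSup_le.1 le_rfl).1]

theorem eventually_norm_sum_bitileTerm_forest_le_mul (h1 : IsWalshFamily A1)
    (h2 : IsWalshFamily A2) (h3 : IsWalshFamily A3) {TT : Finset Bitile}
    (hS : (S : Set Bitile).OrdConnected) (hT : ∀ Q ∈ S, ∃ T ∈ TT, Q.undilate (L + 1) ≤ T)
    {s1 s2 s3 : ℝ≥0} (hs1 : 0 < s1) (hs2 : 0 < s2) (hs3 : 0 < s3)
    (hA1 : ∀ Q ∈ S, ∀ T ∈ TT, ∀ P, Q.undilate (L + 1) ≤ P → P ≤ T → coefSup A1 P ≤ s1)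
    (hA2 : ∀ Q ∈ S, coefSup A2 Q ≤ s2) (hA3 : ∀ Q ∈ S, coefSup A3 Q ≤ s3) :
    ∀ᶠ N : ℕ in Filter.atTop, ‖∑ Q ∈ S, bitileTerm L A1 A2 A3 Q‖ ≤
      s1 * s2 * s3 * (13 * ∑ n ∈ Finset.range N,
        min (totalLength (maximals S)) (20 * Real.exp (-(n / 16)) * totalLength TT)) := by
  filter_upwards [eventually_norm_sum_bitileTerm_forest_le (h1.smul (s1 : ℂ)⁻¹)
    (h2.smul (s2 : ℂ)⁻¹) (h3.smul (s3 : ℂ)⁻¹) hS hT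
    (fun Q hQ T hT P hQP hPT => coefSup_inv_smul_le_one (hA1 Q hQ T hT P hQP hPT))
    (fun Q hQ => coefSup_inv_smul_le_one (hA2 Q hQ))
    (fun Q hQ => coefSup_inv_smul_le_one (hA3 Q hQ))] with N hN
  simp only [bitileTerm_smul, ← Finset.mul_sum, norm_mul, norm_inv, Complex.norm_real,
    Real.norm_of_nonneg (NNReal.coe_nonneg _), ← mul_inv] at hN
  rwa [inv_mul_le_iff₀ (by positivity)] at hN

open Classical in
/-- The largest coefficient of `A` over the bitiles `T.undilate (L + 1)` above
`Q.undilate (L + 1)`, for `T ∈ U`. -/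
def supAboveUndilate (L : ℕ) (A : Tile → ℂ) (U : Finset Bitile) (Q : Bitile) : ℝ≥0 :=
  supAbove (coefSup A) (U.image (undilate (L + 1))) (Q.undilate (L + 1))

theorem norm_sum_bitileTerm_level_le (h1 : IsBesselFamily A1 e1) (h2 : IsBesselFamily A2 e2)
    (h3 : IsBesselFamily A3 e3) (ht1 : 0 < t1) (ht2 : 0 < t2) (ht3 : 0 < t3)
    (ht : t1 + t2 + t3 = 1) (hU : IsScaleClosed U) (hSU : S ⊆ U)
    (hS : (S : Set Bitile).OrdConnected) {s1 s2 s3 : ℝ≥0} (hs1 : 0 < s1) (hs2 : 0 < s2)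
    (hs3 : 0 < s3)
    (l1 : ∀ Q ∈ S, supAboveUndilate L A1 U Q ∈ Icc (s1 / 2) s1)
    (l2 : ∀ Q ∈ S, supAbove (coefSup A2) U Q ∈ Icc (s2 / 2) s2)
    (l3 : ∀ Q ∈ S, supAbove (coefSup A3) U Q ∈ Icc (s3 / 2) s3) :
    ‖∑ Q ∈ S, bitileTerm L A1 A2 A3 Q‖ ≤ 260 * (1 - Real.exp (-(t1 / 16)))⁻¹ *
      ((s1 * (4 * e1 / s1 ^ 2) ^ t1) * (s2 * (4 * e2 / s2 ^ 2) ^ t2) *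
        (s3 * (4 * e3 / s3 ^ 2) ^ t3)) := by
  classical
  set V := U.image (undilate (L + 1))
  set TT := largeMaximals (coefSup A1) V (s1 / 2)
  have tops : ∀ Q ∈ S, ∃ T ∈ TT, Q.undilate (L + 1) ≤ T := fun Q hQ =>
    exists_mem_largeMaximals_ge (Finset.mem_image_of_mem _ (hSU hQ)) (l1 Q hQ).1
  have sup1 : ∀ Q ∈ S, ∀ T ∈ TT, ∀ P, Q.undilate (L + 1) ≤ P → P ≤ T → coefSup A1 P ≤ s1 :=
    fun Q hQ T hT P hQP hPT =>
      have hP : P ∈ V :=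
        hU.mem_image_undilate (hSU hQ) (mem_and_le_of_mem_largeMaximals hT).1 hQP hPT
      (le_supAbove hQP hP).trans (l1 Q hQ).2
  obtain ⟨N, hN⟩ := (eventually_norm_sum_bitileTerm_forest_le_mul h1.toIsWalshFamily
    h2.toIsWalshFamily h3.toIsWalshFamily hS tops hs1 hs2 hs3 sup1
    (fun Q hQ => (le_supAbove le_rfl (hSU hQ)).trans (l2 Q hQ).2)
    (fun Q hQ => (le_supAbove le_rfl (hSU hQ)).trans (l3 Q hQ).2)).exists
  have hsum := sum_min_exp_mul_le ht1 ht2 ht3 ht (totalLength_nonneg _) (totalLength_nonneg _)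
    (h1.totalLength_largeMaximals_le (U := V) hs1)
    (h2.totalLength_maximals_le hs2 hSU fun Q hQ => (l2 Q hQ).1)
    (h3.totalLength_maximals_le hs3 hSU fun Q hQ => (l3 Q hQ).1) N
  calc _ ≤ _ := hN
    _ ≤ _ := mul_le_mul_of_nonneg_left (mul_le_mul_of_nonneg_left hsum (by norm_num))
      (by positivity)
    _ = _ := by ring

theorem mem_Ico_two_zpow_iff {x : ℝ≥0} {i : ℤ} :
    x ∈ Ico (2 ^ i) (2 ^ (i + 1)) ↔ x ≠ 0 ∧ Int.log 2 (x : ℝ) = i := by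
  rw [← NNReal.coe_ne_zero]
  constructor
  · rintro ⟨hle, hlt⟩
    have hx : 0 < (x : ℝ) := (zpow_pos two_pos i).trans_le (mod_cast hle)
    have := (Int.zpow_le_iff_le_log (x := i) one_lt_two hx).1 (mod_cast hle)
    have := (Int.lt_zpow_iff_log_lt (x := i + 1) one_lt_two hx).1 (mod_cast hlt)
    exact ⟨hx.ne', by omega⟩
  · rintro ⟨hx, rfl⟩
    have hle := Int.zpow_log_le_self one_lt_two (x.coe_nonneg.lt_of_ne' hx)
    have hlt := Int.lt_zpow_succ_log_self one_lt_two (x : ℝ)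
    exact ⟨mod_cast hle, mod_cast hlt⟩

theorem Ico_two_zpow_subset_Icc (i : ℤ) :
    Ico ((2 : ℝ≥0) ^ i) (2 ^ (i + 1)) ⊆ Icc (2 ^ (i + 1) / 2) (2 ^ (i + 1)) := by
  rw [zpow_add_one₀ two_ne_zero, mul_div_cancel_right₀ _ two_ne_zero]
  exact Ico_subset_Icc_self

open Classical in
theorem norm_sum_bitileTerm_dyadic_level_le (h1 : IsBesselFamily A1 e1)
    (h2 : IsBesselFamily A2 e2) (h3 : IsBesselFamily A3 e3) (ht1 : 0 < t1) (ht2 : 0 < t2)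
    (ht3 : 0 < t3) (ht : t1 + t2 + t3 = 1) (hU : IsScaleClosed U) (i1 i2 i3 : ℤ) :
    ‖∑ Q ∈ U with supAboveUndilate L A1 U Q ∈ Ico (2 ^ i1) (2 ^ (i1 + 1)) ∧
        supAbove (coefSup A2) U Q ∈ Ico (2 ^ i2) (2 ^ (i2 + 1)) ∧
        supAbove (coefSup A3) U Q ∈ Ico (2 ^ i3) (2 ^ (i3 + 1)), bitileTerm L A1 A2 A3 Q‖ ≤
      260 * (1 - Real.exp (-(t1 / 16)))⁻¹ * ((2 * e1 ^ t1 * (2 ^ i1) ^ (1 - 2 * t1)) *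
        (2 * e2 ^ t2 * (2 ^ i2) ^ (1 - 2 * t2)) * (2 * e3 ^ t3 * (2 ^ i3) ^ (1 - 2 * t3))) := by
  have ordConnected_level (g : Bitile → ℝ≥0) (hg : Antitone g) (i : ℤ) :
      (g ⁻¹' Ico (2 ^ i) (2 ^ (i + 1))).OrdConnected := ordConnected_Ico.preimage_anti hg
  rw [← zpow_succ_mul_rpow_eq h1.energy_nonneg, ← zpow_succ_mul_rpow_eq h2.energy_nonneg,
    ← zpow_succ_mul_rpow_eq h3.energy_nonneg]
  refine norm_sum_bitileTerm_level_le (s1 := 2 ^ (i1 + 1)) (s2 := 2 ^ (i2 + 1))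
    (s3 := 2 ^ (i3 + 1)) h1 h2 h3 ht1 ht2 ht3 ht hU (Finset.filter_subset _ _) ?_
    (by positivity) (by positivity) (by positivity)
    (fun Q hQ => Ico_two_zpow_subset_Icc _ (Finset.mem_filter.1 hQ).2.1)
    (fun Q hQ => Ico_two_zpow_subset_Icc _ (Finset.mem_filter.1 hQ).2.2.1)
    (fun Q hQ => Ico_two_zpow_subset_Icc _ (Finset.mem_filter.1 hQ).2.2.2)
  rw [Finset.coe_filter]
  exact hU.ordConnected.inter ((ordConnected_level _ ((antitone_supAbove _ _).comp_monotone
    (undilate_mono _)) i1).inter ((ordConnected_level _ (antitone_supAbove _ _) i2).inter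
      (ordConnected_level _ (antitone_supAbove _ _) i3)))

theorem norm_sum_le_prod_of_fiberwise_le {α ι : Type*} [DecidableEq ι] {V : Finset α} {f : α → ℂ}
    {l1 l2 l3 : α → ι} {b1 b2 b3 : ι → ℝ} {K : ℝ}
    (h : ∀ i1 i2 i3, ‖∑ x ∈ V with l1 x = i1 ∧ l2 x = i2 ∧ l3 x = i3, f x‖ ≤
      K * (b1 i1 * b2 i2 * b3 i3)) :
    ‖∑ x ∈ V, f x‖ ≤ K * ((∑ i ∈ V.image l1, b1 i) * (∑ i ∈ V.image l2, b2 i) *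
      ∑ i ∈ V.image l3, b3 i) := by
  have hmaps : ∀ x ∈ V, (l1 x, l2 x, l3 x) ∈ V.image l1 ×ˢ V.image l2 ×ˢ V.image l3 :=
    fun x hx => by simp only [Finset.mem_product]; exact
      ⟨Finset.mem_image_of_mem _ hx, Finset.mem_image_of_mem _ hx, Finset.mem_image_of_mem _ hx⟩
  rw [← Finset.sum_fiberwise_of_maps_to hmaps]
  calc _ ≤ ∑ i ∈ V.image l1 ×ˢ V.image l2 ×ˢ V.image l3, K * (b1 i.1 * b2 i.2.1 * b3 i.2.2) :=
        norm_sum_le_of_le _ fun i _ => by simpa only [Prod.ext_iff] using h i.1 i.2.1 i.2.2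
    _ = _ := by
        rw [← Finset.mul_sum]
        simp only [Finset.sum_product, mul_assoc, ← Finset.mul_sum, ← Finset.sum_mul]

theorem sum_image_log_rpow_le {α : Type*} {V : Finset α} {g : α → ℝ≥0} {a e t : ℝ} (ha : 0 < a)
    (he : 0 ≤ e) (ht : t < 1 / 2) (hg : ∀ x ∈ V, g x ≠ 0 ∧ g x ≤ a) :
    ∑ i ∈ V.image fun x => Int.log 2 (g x : ℝ), 2 * e ^ t * ((2 : ℝ) ^ i) ^ (1 - 2 * t) ≤
      2 * (1 - (2 : ℝ) ^ (-(1 - 2 * t)))⁻¹ * (e ^ t * a ^ (1 - 2 * t)) := by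
  have hF : ∀ i ∈ V.image fun x => Int.log 2 (g x : ℝ), (2 : ℝ) ^ i ≤ a := by
    intro i hi
    obtain ⟨x, hx, rfl⟩ := Finset.mem_image.1 hi
    have := (mem_Ico_two_zpow_iff.2 ⟨(hg x hx).1, rfl⟩).1
    exact le_trans (mod_cast this) (hg x hx).2
  rw [← Finset.mul_sum]
  calc _ ≤ 2 * e ^ t * (a ^ (1 - 2 * t) * (1 - (2 : ℝ) ^ (-(1 - 2 * t)))⁻¹) := by
        gcongr
        exact sum_zpow_rpow_le ha (by linarith) hF
    _ = _ := by ring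

open Classical in
theorem sum_bitileTerm_filter_supAbove_ne_zero :
    ∑ Q ∈ U with supAboveUndilate L A1 U Q ≠ 0 ∧ supAbove (coefSup A2) U Q ≠ 0 ∧
        supAbove (coefSup A3) U Q ≠ 0, bitileTerm L A1 A2 A3 Q =
      ∑ Q ∈ U, bitileTerm L A1 A2 A3 Q := by
  refine Finset.sum_filter_of_ne fun Q hQ hne => ?_
  have hle := (norm_pos_iff.2 hne).trans_le (norm_bitileTerm_le L A1 A2 A3 Q)
  have h1 : coefSup A1 (Q.undilate (L + 1)) ≤ supAboveUndilate L A1 U Q :=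
    le_supAbove le_rfl (Finset.mem_image_of_mem _ hQ)
  have h2 : coefSup A2 Q ≤ supAbove (coefSup A2) U Q := le_supAbove le_rfl hQ
  have h3 : coefSup A3 Q ≤ supAbove (coefSup A3) U Q := le_supAbove le_rfl hQ
  refine ⟨fun h => ?_, fun h => ?_, fun h => ?_⟩
  · simp [nonpos_iff_eq_zero.1 (h ▸ h1)] at hle
  · simp [nonpos_iff_eq_zero.1 (h ▸ h2)] at hle
  · simp [nonpos_iff_eq_zero.1 (h ▸ h3)] at hle

theorem supAbove_le_of_forall_le {α : Type*} [PartialOrder α] {μ : α → ℝ≥0} {W : Finset α} {a : ℝ}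
    (h : ∀ y ∈ W, μ y ≤ a) {x : α} (hx : x ∈ W) : supAbove μ W x ≤ a := by
  obtain ⟨y, hy, -, hxy⟩ := exists_supAbove_eq μ hx
  exact hxy ▸ h y hy

/-- The constant of the estimate for the model sum; the first factor comes from the exponential
decay on trees, the others from summing over the levels of the three coefficient families. -/
def quartileConst (t1 t2 t3 : ℝ) : ℝ :=
  260 * (1 - Real.exp (-(t1 / 16)))⁻¹ * ((2 * (1 - (2 : ℝ) ^ (-(1 - 2 * t1)))⁻¹) *
    (2 * (1 - (2 : ℝ) ^ (-(1 - 2 * t2)))⁻¹) * (2 * (1 - (2 : ℝ) ^ (-(1 - 2 * t3)))⁻¹))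

theorem norm_sum_bitileTerm_le (h1 : IsBesselFamily A1 e1) (h2 : IsBesselFamily A2 e2)
    (h3 : IsBesselFamily A3 e3) (hU : IsScaleClosed U) (ht1 : t1 ∈ Ioo 0 (1 / 2))
    (ht2 : t2 ∈ Ioo 0 (1 / 2)) (ht3 : t3 ∈ Ioo 0 (1 / 2)) (ht : t1 + t2 + t3 = 1)
    {a1 a2 a3 : ℝ} (ha1 : 0 < a1) (ha2 : 0 < a2) (ha3 : 0 < a3)
    (hA1 : ∀ Q ∈ U, coefSup A1 (Q.undilate (L + 1)) ≤ a1) (hA2 : ∀ Q ∈ U, coefSup A2 Q ≤ a2)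
    (hA3 : ∀ Q ∈ U, coefSup A3 Q ≤ a3) :
    ‖∑ Q ∈ U, bitileTerm L A1 A2 A3 Q‖ ≤ quartileConst t1 t2 t3 *
      ((e1 ^ t1 * a1 ^ (1 - 2 * t1)) * (e2 ^ t2 * a2 ^ (1 - 2 * t2)) *
        (e3 ^ t3 * a3 ^ (1 - 2 * t3))) := by
  classical
  have he1 := h1.energy_nonneg
  have he2 := h2.energy_nonneg
  have he3 := h3.energy_nonneg
  rw [← sum_bitileTerm_filter_supAbove_ne_zero]
  set V := U.filter fun Q => supAboveUndilate L A1 U Q ≠ 0 ∧ supAbove (coefSup A2) U Q ≠ 0 ∧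
    supAbove (coefSup A3) U Q ≠ 0 with hV
  have mem_V : ∀ Q ∈ V, Q ∈ U ∧ supAboveUndilate L A1 U Q ≠ 0 ∧ supAbove (coefSup A2) U Q ≠ 0 ∧
    supAbove (coefSup A3) U Q ≠ 0 := fun Q hQ => Finset.mem_filter.1 hQ
  have hA1' : ∀ P ∈ U.image (undilate (L + 1)), coefSup A1 P ≤ a1 :=
    Finset.forall_mem_image.2 hA1
  have sum1 := sum_image_log_rpow_le ha1 he1 ht1.2 fun Q hQ => ⟨(mem_V Q hQ).2.1,
    supAbove_le_of_forall_le hA1' (Finset.mem_image_of_mem _ (mem_V Q hQ).1)⟩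
  have sum2 := sum_image_log_rpow_le ha2 he2 ht2.2 fun Q hQ => ⟨(mem_V Q hQ).2.2.1,
    supAbove_le_of_forall_le hA2 (mem_V Q hQ).1⟩
  have sum3 := sum_image_log_rpow_le ha3 he3 ht3.2 fun Q hQ => ⟨(mem_V Q hQ).2.2.2,
    supAbove_le_of_forall_le hA3 (mem_V Q hQ).1⟩
  have decay_nonneg : 0 ≤ 260 * (1 - Real.exp (-(t1 / 16)))⁻¹ := by
    have : Real.exp (-(t1 / 16)) ≤ 1 := Real.exp_le_one_iff.2 (by linarith [ht1.1])
    have : 0 ≤ 1 - Real.exp (-(t1 / 16)) := by linarith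
    positivity
  refine (norm_sum_le_prod_of_fiberwise_le fun i1 i2 i3 => ?_).trans
    ((mul_le_mul_of_nonneg_left (mul_le_mul (mul_le_mul sum1 sum2 ?_ ?_) sum3 ?_ ?_)
      decay_nonneg).trans_eq ?_)
  · rw [hV, Finset.filter_filter]
    refine (congrArg norm (Finset.sum_congr (Finset.filter_congr fun Q _ => ?_) fun _ _ => rfl)
      ).trans_le (norm_sum_bitileTerm_dyadic_level_le h1 h2 h3 ht1.1 ht2.1 ht3.1 ht hU i1 i2 i3)
    simp only [mem_Ico_two_zpow_iff]
    tauto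
  · positivity
  · exact le_trans (by positivity) sum1
  · positivity
  · exact mul_nonneg (le_trans (by positivity) sum1) (le_trans (by positivity) sum2)
  · simp only [quartileConst]
    ring

end LevelSets

/-! ### Walsh wave packets -/

theorem walsh_zero : walsh 0 = (Ico 0 1).indicator 1 := by
  ext x
  rw [walsh]
  simp [indicator, mem_Ico]

theorem walsh_two_mul (l : ℕ) (x : ℝ) :
    walsh (2 * l) x = walsh l (2 * x) + walsh l (2 * x - 1) := by
  rcases Nat.eq_zero_or_pos l with rfl | hl
  · simp only [mul_zero, walsh_zero, indicator, mem_Ico, Pi.one_apply]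
    grind
  · rw [walsh, dif_neg (by omega), if_pos (by omega), Nat.mul_div_cancel_left _ two_pos]

theorem walsh_two_mul_add_one (l : ℕ) (x : ℝ) :
    walsh (2 * l + 1) x = walsh l (2 * x) - walsh l (2 * x - 1) := by
  rw [walsh, dif_neg (by omega), if_neg (by omega), show (2 * l + 1) / 2 = l by omega]

theorem walsh_of_notMem (n : ℕ) {x : ℝ} (hx : x ∉ Ico 0 1) : walsh n x = 0 := by
  induction n using Nat.evenOddRec generalizing x with
  | h0 => rw [walsh_zero, indicator_of_notMem hx]
  | h_even l ih =>
    rw [walsh_two_mul, ih (by grind), ih (by grind), add_zero]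
  | h_odd l ih =>
    rw [walsh_two_mul_add_one, ih (by grind), ih (by grind), sub_zero]

theorem walsh_mul_walsh_sub_one (l m : ℕ) (x : ℝ) : walsh l (2 * x) * walsh m (2 * x - 1) = 0 := by
  by_cases hx : 2 * x ∈ Ico 0 1
  · rw [walsh_of_notMem m (by grind), mul_zero]
  · rw [walsh_of_notMem l hx, zero_mul]

theorem walsh_mul_self (n : ℕ) (x : ℝ) : walsh n x * walsh n x = (Ico 0 1).indicator 1 x := by
  rw [← walsh_zero]
  have split := walsh_two_mul 0 x
  rw [mul_zero] at split
  induction n using Nat.evenOddRec generalizing x with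
  | h0 => by_cases hx : x ∈ Ico 0 1 <;> simp [walsh_zero, hx]
  | h_even l ih =>
    rw [walsh_two_mul, split, ← ih (2 * x) (walsh_two_mul 0 _),
      ← ih (2 * x - 1) (walsh_two_mul 0 _)]
    linear_combination 2 * walsh_mul_walsh_sub_one l l x
  | h_odd l ih =>
    rw [walsh_two_mul_add_one, split, ← ih (2 * x) (walsh_two_mul 0 _),
      ← ih (2 * x - 1) (walsh_two_mul 0 _)]
    linear_combination -2 * walsh_mul_walsh_sub_one l l x

theorem measurable_walsh (n : ℕ) : Measurable (walsh n) := by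
  induction n using Nat.evenOddRec with
  | h0 => exact walsh_zero ▸ measurable_one.indicator measurableSet_Ico
  | h_even l ih =>
    rw [funext (walsh_two_mul l)]
    fun_prop
  | h_odd l ih =>
    rw [funext (walsh_two_mul_add_one l)]
    fun_prop

theorem measurableSet_dyadicI (k : ℤ) (n : ℕ) : MeasurableSet (dyadicI k n) := measurableSet_Ico

theorem measureReal_dyadicI (k : ℤ) (n : ℕ) : volume.real (dyadicI k n) = 2 ^ k := by
  rw [measureReal_def, volume_dyadicI, ENNReal.toReal_ofReal (by positivity)]

theorem mem_dyadicI_iff_mem_Ico {k : ℤ} {n : ℕ} {x : ℝ} :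
    x ∈ dyadicI k n ↔ 2 ^ (-k) * x - n ∈ Ico 0 1 := by
  have hk : (0 : ℝ) < 2 ^ k := by positivity
  rw [dyadicI, mem_Ico, mem_Ico, zpow_neg, ← le_div_iff₀' hk, ← div_lt_iff₀' hk, ← div_eq_inv_mul,
    sub_nonneg, sub_lt_iff_lt_add']

namespace Tile

/-- The `L^∞`-normalized wave packet `φ_p = |I_p|^{1/2} w_p`. -/
def phi (p : Tile) (x : ℝ) : ℝ := walsh p.l (2 ^ (-p.k) * x - p.n)

theorem phi_of_notMem (p : Tile) {x : ℝ} (hx : x ∉ dyadicI p.k p.n) : p.phi x = 0 :=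
  walsh_of_notMem _ (mt mem_dyadicI_iff_mem_Ico.2 hx)

theorem phi_mul_self (p : Tile) (x : ℝ) :
    p.phi x * p.phi x = (dyadicI p.k p.n).indicator 1 x := by
  rw [phi, walsh_mul_self]
  exact indicator_const_eq_indicator_const mem_dyadicI_iff_mem_Ico.symm

theorem abs_phi_le_one (p : Tile) (x : ℝ) : |p.phi x| ≤ 1 := by
  rw [abs_le_one_iff_mul_self_le_one, phi_mul_self]
  exact indicator_le_self' (fun _ _ => zero_le_one) x

theorem measurable_phi (p : Tile) : Measurable p.phi :=
  (measurable_walsh _).comp (by fun_prop)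

theorem memLp_phi (p : Tile) (q : ℝ≥0∞) : MemLp p.phi q := by
  have support : p.phi = (dyadicI p.k p.n).indicator p.phi :=
    (indicator_eq_self.2 fun x hx => by_contra fun h => hx (p.phi_of_notMem h)).symm
  have : IsFiniteMeasure (volume.restrict (dyadicI p.k p.n)) :=
    isFiniteMeasure_restrict.2 (by simp [volume_dyadicI])
  rw [support, memLp_indicator_iff_restrict (measurableSet_dyadicI _ _)]
  exact .of_bound p.measurable_phi.aestronglyMeasurable 1 (.of_forall p.abs_phi_le_one)

theorem integral_phi_mul_self (p : Tile) : ∫ x, p.phi x * p.phi x = 2 ^ p.k := by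
  simp only [phi_mul_self]
  rw [integral_indicator_one (measurableSet_dyadicI _ _), measureReal_dyadicI]

theorem integrable_phi_mul_phi (p q : Tile) : Integrable fun x => p.phi x * q.phi x :=
  (p.memLp_phi 2).integrable_mul (q.memLp_phi 2)

theorem phi_mul_phi_of_ne {p q : Tile} (hk : p.k = q.k) (hn : p.n ≠ q.n) (x : ℝ) :
    p.phi x * q.phi x = 0 := by
  by_cases hx : x ∈ dyadicI p.k p.n
  · rw [q.phi_of_notMem fun hx' => hn (eq_of_mem_dyadicI hx (hk ▸ hx')), mul_zero]
  · rw [p.phi_of_notMem hx, zero_mul]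

/-- The bitile of which the given tile is the lower or the upper half. -/
def bitile (p : Tile) : Bitile := ⟨p.k, p.n, p.l / 2⟩

end Tile

namespace Bitile

theorem phi_d (P : Bitile) (x : ℝ) : P.d.phi x = P.left.phi x + P.right.phi x := by
  simp only [Tile.phi, d, left, right]
  rw [walsh_two_mul, neg_sub', sub_neg_eq_add, zpow_add_one₀ two_ne_zero]
  push_cast
  congr 2 <;> ring

theorem phi_u (P : Bitile) (x : ℝ) : P.u.phi x = P.left.phi x - P.right.phi x := by
  simp only [Tile.phi, u, left, right]
  rw [walsh_two_mul_add_one, neg_sub', sub_neg_eq_add, zpow_add_one₀ two_ne_zero]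
  push_cast
  congr 2 <;> ring

end Bitile

namespace Tile

theorem left_bitile_le (p : Tile) : p.bitile.left ≤ p :=
  ⟨1, by simp [bitile, Bitile.left], by simp [bitile, Bitile.left], by simp [bitile, Bitile.left]⟩

theorem right_bitile_le (p : Tile) : p.bitile.right ≤ p :=
  ⟨1, by simp [bitile, Bitile.right], by simp only [bitile, Bitile.right]; omega,
    by simp [bitile, Bitile.right]⟩

theorem phi_eq_add (p : Tile) (x : ℝ) :
    p.phi x = p.bitile.left.phi x + (-1) ^ p.l * p.bitile.right.phi x := by
  obtain ⟨k, n, l⟩ := p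
  obtain ⟨m, rfl | rfl⟩ := Nat.even_or_odd' l
  · rw [Even.neg_one_pow (even_two_mul m), one_mul, ← Bitile.phi_d]
    simp [bitile, Bitile.d]
  · rw [Odd.neg_one_pow (odd_two_mul_add_one m), neg_one_mul, ← sub_eq_add_neg, ← Bitile.phi_u,
      bitile, Bitile.u, show 2 * ((2 * m + 1) / 2) + 1 = 2 * m + 1 by omega]

theorem integral_phi_mul_phi_eq_add (p q : Tile) :
    ∫ x, p.phi x * q.phi x = (∫ x, p.phi x * q.bitile.left.phi x) +
      (-1) ^ q.l * ∫ x, p.phi x * q.bitile.right.phi x := by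
  rw [← integral_const_mul, ← integral_add (integrable_phi_mul_phi _ _)
    ((integrable_phi_mul_phi _ _).const_mul _)]
  exact integral_congr_ae (.of_forall fun x => by dsimp only; rw [q.phi_eq_add]; ring)

theorem integral_phi_mul_phi_of_freq_ne (k : ℤ) (n : ℕ) {l m : ℕ} (h : l ≠ m) :
    ∫ x, phi ⟨k, n, l⟩ x * phi ⟨k, n, m⟩ x = 0 := by
  induction hs : l + m using Nat.strong_induction_on generalizing k n l m with
  | _ s ih =>
  set P : Bitile := ⟨k, n, l / 2⟩
  set Q : Bitile := ⟨k, n, m / 2⟩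
  have expand : ∀ x, phi ⟨k, n, l⟩ x * phi ⟨k, n, m⟩ x = P.left.phi x * Q.left.phi x +
      (-1) ^ (l + m) * (P.right.phi x * Q.right.phi x) := fun x => by
    have h1 : P.left.phi x * Q.right.phi x = 0 :=
      phi_mul_phi_of_ne (p := P.left) (q := Q.right) rfl (Nat.succ_ne_self _).symm x
    have h2 : P.right.phi x * Q.left.phi x = 0 :=
      phi_mul_phi_of_ne (p := P.right) (q := Q.left) rfl (Nat.succ_ne_self _) x
    have hl : phi ⟨k, n, l⟩ x = P.left.phi x + (-1) ^ l * P.right.phi x := phi_eq_add _ x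
    have hm : phi ⟨k, n, m⟩ x = Q.left.phi x + (-1) ^ m * Q.right.phi x := phi_eq_add _ x
    rw [hl, hm, pow_add]
    linear_combination (-1) ^ m * h1 + (-1) ^ l * h2
  simp only [expand]
  rw [integral_add (integrable_phi_mul_phi _ _) ((integrable_phi_mul_phi _ _).const_mul _),
    integral_const_mul]
  by_cases hlm : l / 2 = m / 2
  · rw [show Q = P from congrArg (Bitile.mk k n) hlm.symm, integral_phi_mul_self,
      integral_phi_mul_self, Odd.neg_one_pow (by grind)]
    simp only [Bitile.left, Bitile.right, neg_one_mul, add_neg_cancel]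
  · have := ih (l / 2 + m / 2) (by omega) (k - 1) (2 * n) hlm rfl
    have := ih (l / 2 + m / 2) (by omega) (k - 1) (2 * n + 1) hlm rfl
    simp_all [P, Q, Bitile.left, Bitile.right]

theorem integral_phi_mul_phi_of_not_le {p q : Tile} (hk : p.k ≤ q.k) (h : ¬p ≤ q) :
    ∫ x, p.phi x * q.phi x = 0 := by
  obtain ⟨r, hr⟩ := Int.le.dest hk
  induction r generalizing q with
  | zero =>
    obtain ⟨k, n, l⟩ := p
    obtain ⟨k', n', l'⟩ := q
    obtain rfl : k = k' := by simpa using hr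
    by_cases hn : n = n'
    · subst hn
      exact integral_phi_mul_phi_of_freq_ne k n fun hl => h (hl ▸ le_rfl)
    · simp only [phi_mul_phi_of_ne (p := ⟨k, n, l⟩) (q := ⟨k, n', l'⟩) rfl hn, integral_zero]
  | succ r ih =>
    have hk' : p.k + r = q.k - 1 := by push_cast at hr; omega
    have hle : p.k ≤ q.k - 1 := by omega
    rw [integral_phi_mul_phi_eq_add, ih hle (fun hp => h (hp.trans q.left_bitile_le)) hk',
      ih hle (fun hp => h (hp.trans q.right_bitile_le)) hk', mul_zero, add_zero]

theorem integral_phi_mul_phi_of_incomparable {p q : Tile} (hpq : ¬p ≤ q) (hqp : ¬q ≤ p) :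
    ∫ x, p.phi x * q.phi x = 0 := by
  rcases le_total p.k q.k with hk | hk
  · exact integral_phi_mul_phi_of_not_le hk hpq
  · simpa only [mul_comm] using integral_phi_mul_phi_of_not_le hk hqp

end Tile

/-- The average `|I_p|⁻¹ ∫ f φ_p` of a function against an `L^∞`-normalized wave packet. -/
def waveAverage (f : ℝ → ℂ) (p : Tile) : ℂ := 2 ^ (-p.k) * ∫ x, f x * p.phi x

section WaveAverage

variable {f : ℝ → ℂ}

theorem integrable_mul_phi (hf : MemLp f 2) (p : Tile) : Integrable fun x => f x * p.phi x :=
  hf.integrable_mul (p.memLp_phi 2).ofReal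

theorem isWalshFamily_waveAverage (hf : MemLp f 2) : IsWalshFamily (waveAverage f) := by
  have scale (P : Bitile) : (2 : ℂ) ^ (-(P.k - 1)) = 2 ^ (-P.k) * 2 := by
    rw [neg_sub', sub_neg_eq_add, zpow_add_one₀ two_ne_zero]
  have hd (P : Bitile) : ∫ x, f x * P.d.phi x =
      (∫ x, f x * P.left.phi x) + ∫ x, f x * P.right.phi x := by
    rw [← integral_add (integrable_mul_phi hf _) (integrable_mul_phi hf _)]
    simp only [Bitile.phi_d, Complex.ofReal_add, mul_add]
  have hu (P : Bitile) : ∫ x, f x * P.u.phi x =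
      (∫ x, f x * P.left.phi x) - ∫ x, f x * P.right.phi x := by
    rw [← integral_sub (integrable_mul_phi hf _) (integrable_mul_phi hf _)]
    simp only [Bitile.phi_u, Complex.ofReal_sub, mul_sub]
  constructor
  · intro P
    simp only [waveAverage, hd, hu]
    simp only [Bitile.left, Bitile.d, Bitile.u, scale]
    ring
  · intro P
    simp only [waveAverage, hd, hu]
    simp only [Bitile.right, Bitile.d, Bitile.u, scale]
    ring

/-- The wave packet `w_p` as an element of `L²`. -/
def wavePacketLp (p : Tile) : Lp ℂ 2 (volume : Measure ℝ) :=
  (((p.memLp_phi 2).ofReal (K := ℂ)).const_mul (√(2 ^ (-p.k)) : ℂ)).toLp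

theorem inner_wavePacketLp_toLp (p : Tile) (hf : MemLp f 2) :
    inner ℂ (wavePacketLp p) hf.toLp = √(2 ^ (-p.k)) * ∫ x, f x * p.phi x := by
  rw [L2.inner_def, ← integral_const_mul]
  refine integral_congr_ae ?_
  filter_upwards [MemLp.coeFn_toLp (((p.memLp_phi 2).ofReal (K := ℂ)).const_mul
    (√(2 ^ (-p.k)) : ℂ)), hf.coeFn_toLp] with x hp hfx
  rw [wavePacketLp, hp, hfx, RCLike.inner_apply, map_mul, Complex.conj_ofReal, RCLike.conj_ofReal]
  exact mul_left_comm _ _ _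

theorem inner_wavePacketLp (p q : Tile) : inner ℂ (wavePacketLp p) (wavePacketLp q) =
    ((√(2 ^ (-p.k)) * (√(2 ^ (-q.k)) * ∫ x, p.phi x * q.phi x) : ℝ) : ℂ) := by
  rw [wavePacketLp.eq_def q, inner_wavePacketLp_toLp]
  simp only [mul_assoc, integral_const_mul, Complex.ofReal_mul, ← integral_complex_ofReal]
  simp only [mul_comm]
  rfl

theorem orthonormal_wavePacketLp {F : Set Tile} (hF : IsAntichain (· ≤ ·) F) :
    Orthonormal ℂ fun p : F => wavePacketLp p := by
  classical
  rw [orthonormal_iff_ite]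
  intro p q
  rw [inner_wavePacketLp]
  split_ifs with h
  · rw [h, Tile.integral_phi_mul_self, ← mul_assoc, Real.mul_self_sqrt (by positivity),
      ← zpow_add₀ two_ne_zero, neg_add_cancel, zpow_zero, Complex.ofReal_one]
  · have hne : (p : Tile) ≠ q := Subtype.coe_injective.ne h
    rw [Tile.integral_phi_mul_phi_of_incomparable (hF p.2 q.2 hne) (hF q.2 p.2 hne.symm)]
    simp only [mul_zero, Complex.ofReal_zero]

theorem norm_sq_inner_wavePacketLp (p : Tile) (hf : MemLp f 2) :
    ‖inner ℂ (wavePacketLp p) hf.toLp‖ ^ 2 = 2 ^ p.k * ‖waveAverage f p‖ ^ 2 := by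
  have hk : (2 : ℝ) ^ p.k ≠ 0 := by positivity
  rw [inner_wavePacketLp_toLp, waveAverage, norm_mul, norm_mul, mul_pow, mul_pow,
    Complex.norm_of_nonneg (by positivity), Real.sq_sqrt (by positivity), norm_zpow,
    Complex.norm_ofNat, zpow_neg]
  field_simp

theorem norm_sq_toLp (hf : MemLp f 2) : ‖hf.toLp‖ ^ 2 = ∫ x, ‖f x‖ ^ 2 := by
  rw [← inner_self_eq_norm_sq (𝕜 := ℂ), L2.inner_def, ← integral_re (L2.integrable_inner _ _)]
  refine integral_congr_ae ?_
  filter_upwards [hf.coeFn_toLp] with x hx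
  rw [hx, inner_self_eq_norm_sq]

theorem isBesselFamily_waveAverage (hf : MemLp f 2) {e : ℝ} (he : ∫ x, ‖f x‖ ^ 2 ≤ e) :
    IsBesselFamily (waveAverage f) e where
  toIsWalshFamily := isWalshFamily_waveAverage hf
  sum_le F hF := by
    have bessel := (orthonormal_wavePacketLp hF).sum_inner_products_le hf.toLp (s := Finset.univ)
    simp only [norm_sq_inner_wavePacketLp, norm_sq_toLp hf] at bessel
    rw [← Finset.sum_coe_sort]
    exact bessel.trans he

end WaveAverage

/-! ### Phase plane projections of dilated tiles -/

section DilatedTiles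

theorem two_zpow_mul_mem_dyadicI (k : ℤ) (n : ℕ) : (2 : ℝ) ^ k * n ∈ dyadicI k n :=
  left_mem_Ico.2 (by gcongr; exact lt_add_one _)

theorem dyadicI_subset_iff {j k : ℤ} {m n : ℕ} :
    dyadicI j m ⊆ dyadicI k n ↔ ∃ r : ℕ, k = j + r ∧ m / 2 ^ r = n := by
  refine ⟨fun h => ?_, fun ⟨r, hk, hn⟩ => hk ▸ hn ▸ dyadicI_subset j m r⟩
  have hjk : j ≤ k := by
    have := measure_mono (μ := volume) h
    rw [volume_dyadicI, volume_dyadicI, ENNReal.ofReal_le_ofReal_iff (by positivity)] at this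
    exact (zpow_le_zpow_iff_right₀ _root_.one_lt_two).1 this
  obtain ⟨r, rfl⟩ := Int.le.dest hjk
  have hm := two_zpow_mul_mem_dyadicI j m
  exact ⟨r, rfl, eq_of_mem_dyadicI (dyadicI_subset j m r hm) (h hm)⟩

theorem dilate_toSet (L : ℕ) (p : Tile) :
    dilate L p.toSet = dyadicI p.k p.n ×ˢ dyadicI (-p.k + L) p.l := by
  have hL : (0 : ℝ) < 2 ^ L := by positivity
  have image : (fun ξ : ℝ => 2 ^ L * ξ) '' p.freqI = dyadicI (-p.k + L) p.l := by
    rw [Tile.freqI, image_mul_left_Ico hL, dyadicI, zpow_add₀ two_ne_zero, zpow_natCast]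
    congr 1 <;> ring
  rw [← image, ← image_id (dyadicI p.k p.n), prod_image_image_eq]
  rfl

theorem tileLE_iff_le {p q : Tile} : tileLE p q ↔ p ≤ q := by
  refine (and_congr dyadicI_subset_iff dyadicI_subset_iff).trans ⟨?_, ?_⟩
  · rintro ⟨⟨r, hk, hn⟩, s, hk', hl⟩
    obtain rfl : r = s := by omega
    exact ⟨r, hk, hn, hl⟩
  · rintro ⟨r, hk, hn, hl⟩
    exact ⟨⟨r, hk, hn⟩, r, by omega, hl⟩

theorem toSet_subset_dilate_iff {L : ℕ} {p q : Tile} :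
    q.toSet ⊆ dilate L p.toSet ↔
      dyadicI q.k q.n ⊆ dyadicI p.k p.n ∧ dyadicI (-q.k) q.l ⊆ dyadicI (-p.k + L) p.l := by
  have hne : (dyadicI q.k q.n ×ˢ dyadicI (-q.k) q.l).Nonempty :=
    .prod ⟨_, two_zpow_mul_mem_dyadicI _ _⟩ ⟨_, two_zpow_mul_mem_dyadicI _ _⟩
  rw [dilate_toSet]
  exact prod_subset_prod_iff' hne

theorem maxTiles_dilate_toSet (L : ℕ) (p : Tile) :
    maxTiles (dilate L p.toSet) = {q | q.k = p.k ∧ q.n = p.n ∧ q.l / 2 ^ L = p.l} := by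
  ext q
  simp only [maxTiles, mem_ofPred_eq, toSet_subset_dilate_iff, tileLE_iff_le]
  constructor
  · rintro ⟨⟨time, freq⟩, maximal⟩
    obtain ⟨r, hk, hn⟩ := dyadicI_subset_iff.1 time
    set q' : Tile := ⟨p.k, p.n, q.l * 2 ^ r⟩
    have hle : q ≤ q' := ⟨r, hk, hn, Nat.mul_div_cancel _ (by positivity)⟩
    have hq : q' = q := maximal q' ⟨subset_rfl, (tileLE_iff_le.2 hle).2.trans freq⟩ hle
    have hk' : q.k = p.k := by rw [← hq]
    obtain ⟨s, hs, hl⟩ := dyadicI_subset_iff.1 freq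
    obtain rfl : L = s := by omega
    exact ⟨hk', by rw [← hq], hl⟩
  · rintro ⟨hk, hn, hl⟩
    refine ⟨⟨hk ▸ hn ▸ subset_rfl, dyadicI_subset_iff.2 ⟨L, by rw [hk], hl⟩⟩, ?_⟩
    rintro q' ⟨time, -⟩ hle
    refine le_antisymm ?_ hle
    obtain ⟨r, hk', hn', hl'⟩ := hle
    obtain ⟨s, hs, -⟩ := dyadicI_subset_iff.1 time
    obtain rfl : r = 0 := by omega
    exact ⟨0, by omega, by simp_all, by simp_all⟩

theorem projT_eq (p : Tile) (f : ℝ → ℂ) (x : ℝ) : projT p f x = waveAverage f p * p.phi x := by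
  have sqrt_mul_sqrt : (√(2 ^ (-p.k)) : ℂ) * √(2 ^ (-p.k)) = 2 ^ (-p.k) := by
    rw [← Complex.ofReal_mul, Real.mul_self_sqrt (by positivity)]
    push_cast
    rfl
  have coef_eq : coef f p = √(2 ^ (-p.k)) * ∫ x, f x * p.phi x := by
    rw [coef, ← integral_const_mul]
    exact integral_congr_ae (.of_forall fun y => by simp only [Tile.wp, Tile.phi]; push_cast; ring)
  rw [projT, coef_eq, waveAverage, ← sqrt_mul_sqrt, Tile.wp, Tile.phi]
  push_cast
  ring

theorem Bitile.phid_eq (P : Bitile) : P.phid = P.d.phi := by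
  ext x
  rw [phid, Tile.wp, ← mul_assoc, ← Real.sqrt_mul (by positivity), ← zpow_add₀ two_ne_zero]
  simp [d, Tile.phi]

theorem piProj_dilate_toSet (L : ℕ) (k : ℤ) (n l : ℕ) (f : ℝ → ℂ) (x : ℝ) :
    piProj (dilate L (Tile.mk k n l).toSet) f x =
      ∑ i ∈ Finset.range (2 ^ L), projT ⟨k, n, 2 ^ L * l + i⟩ f x := by
  have column : maxTiles (dilate L (Tile.mk k n l).toSet) =
      (fun i => ⟨k, n, 2 ^ L * l + i⟩) '' (Finset.range (2 ^ L) : Set ℕ) := by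
    rw [maxTiles_dilate_toSet]
    ext ⟨k', n', l'⟩
    simp only [mem_ofPred_eq, mem_image, Finset.coe_range, mem_Iio, Tile.mk.injEq]
    constructor
    · rintro ⟨rfl, rfl, rfl⟩
      exact ⟨l' % 2 ^ L, Nat.mod_lt _ (by positivity), rfl, rfl, Nat.div_add_mod _ _⟩
    · rintro ⟨i, hi, rfl, rfl, rfl⟩
      exact ⟨rfl, rfl, by rw [Nat.mul_add_div (by positivity), Nat.div_eq_of_lt hi, add_zero]⟩
  rw [piProj, projSet, column, tsum_image (fun p => projT p f x) fun i _ j _ h => by simpa using h]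
  exact Finset.tsum_subtype' _ fun i => projT ⟨k, n, 2 ^ L * l + i⟩ f x

theorem projT_d_add_projT_u {f : ℝ → ℂ} (hf : MemLp f 2) (P : Bitile) (x : ℝ) :
    projT P.d f x + projT P.u f x = projT P.left f x + projT P.right f x := by
  simp only [projT_eq, Bitile.phi_d, Bitile.phi_u, (isWalshFamily_waveAverage hf).left,
    (isWalshFamily_waveAverage hf).right]
  push_cast
  ring

theorem sum_range_two_mul {M : Type*} [AddCommMonoid M] (g : ℕ → M) (n : ℕ) :
    ∑ i ∈ Finset.range (2 * n), g i = ∑ i ∈ Finset.range n, (g (2 * i) + g (2 * i + 1)) := by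
  induction n with
  | zero => rfl
  | succ n ih =>
    rw [mul_add_one, Finset.sum_range_succ, Finset.sum_range_succ, Finset.sum_range_succ, ih,
      add_assoc]

theorem sum_projT_column_eq_sum_projT_row {f : ℝ → ℂ} (hf : MemLp f 2) (L : ℕ) (k : ℤ) (n l : ℕ)
    (x : ℝ) :
    ∑ i ∈ Finset.range (2 ^ L), projT ⟨k, n, 2 ^ L * l + i⟩ f x =
      ∑ i ∈ Finset.range (2 ^ L), projT ⟨k - L, 2 ^ L * n + i, l⟩ f x := by
  induction L generalizing k n with
  | zero => simp
  | succ L ih =>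
    have split (i : ℕ) : projT ⟨k, n, 2 ^ (L + 1) * l + 2 * i⟩ f x +
        projT ⟨k, n, 2 ^ (L + 1) * l + (2 * i + 1)⟩ f x =
        projT ⟨k - 1, 2 * n, 2 ^ L * l + i⟩ f x + projT ⟨k - 1, 2 * n + 1, 2 ^ L * l + i⟩ f x := by
      rw [show 2 ^ (L + 1) * l + 2 * i = 2 * (2 ^ L * l + i) by ring, ← add_assoc,
        show 2 ^ (L + 1) * l + 2 * i = 2 * (2 ^ L * l + i) by ring]
      exact projT_d_add_projT_u hf ⟨k, n, 2 ^ L * l + i⟩ x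
    rw [Nat.pow_succ', sum_range_two_mul]
    simp only [← Nat.pow_succ', split]
    rw [Finset.sum_add_distrib, ih, ih, Nat.pow_succ', two_mul (2 ^ L), Finset.sum_range_add]
    rw [show k - 1 - L = k - (L + 1 : ℕ) by push_cast; ring]
    congr! 4 <;> ring

end DilatedTiles

/-! ### The quartile form as a sum over bitiles -/

section QuartileIntegrand

namespace Bitile

/-- The bitiles `Q` with `Q.undilate L = P`: the pieces of width `2^{-L} |I_P|` of `2^L P`. -/
def fiber (L : ℕ) (P : Bitile) : Finset Bitile :=
  (Finset.range (2 ^ L)).map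
    ⟨fun i => ⟨P.k - L, 2 ^ L * P.n + i, P.l⟩, fun i j h => by simpa using h⟩

theorem mem_fiber {L : ℕ} {P Q : Bitile} : Q ∈ P.fiber L ↔ Q.undilate L = P := by
  obtain ⟨k, n, l⟩ := P
  obtain ⟨k', n', l'⟩ := Q
  rw [fiber, Finset.mem_map, undilate, Bitile.mk.injEq]
  constructor
  · rintro ⟨i, hi, h⟩
    obtain ⟨rfl, rfl, rfl⟩ := Bitile.mk.inj h
    exact ⟨sub_add_cancel k _, by
      rw [Nat.mul_add_div (by positivity), Nat.div_eq_of_lt (Finset.mem_range.1 hi), add_zero], rfl⟩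
  · rintro ⟨rfl, rfl, rfl⟩
    refine ⟨n' % 2 ^ L, Finset.mem_range.2 (Nat.mod_lt _ (by positivity)), ?_⟩
    exact Bitile.mk.injEq .. ▸ ⟨add_sub_cancel_right k' _, Nat.div_add_mod _ _, rfl⟩

theorem phi_d_mul_phi_u_of_mem (P : Bitile) {m : ℕ} (hm : m / 2 = P.n) {x : ℝ}
    (hx : x ∈ dyadicI (P.k - 1) m) : P.d.phi x * P.u.phi x = (-1) ^ m := by
  have disjoint (m' : ℕ) (hne : m' ≠ m) : x ∉ dyadicI (P.k - 1) m' :=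
    fun hx' => hne (eq_of_mem_dyadicI hx' hx)
  have sq (p : Tile) (hp : x ∈ dyadicI p.k p.n) : p.phi x * p.phi x = 1 := by
    rw [p.phi_mul_self, indicator_of_mem hp, Pi.one_apply]
  rw [phi_d, phi_u]
  rcases Nat.even_or_odd' m with ⟨n, rfl | rfl⟩
  · obtain rfl : n = P.n := by omega
    rw [P.right.phi_of_notMem (disjoint _ (Nat.succ_ne_self _)), add_zero, sub_zero, sq P.left hx,
      (even_two_mul _).neg_one_pow]
  · obtain rfl : n = P.n := by omega
    rw [P.left.phi_of_notMem (disjoint _ (Nat.succ_ne_self _).symm), zero_add, zero_sub, mul_neg,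
      sq P.right hx, (odd_two_mul_add_one _).neg_one_pow]

/-- The function of integral `c` that is constant on the time interval of the bitile `Q`. -/
def density (Q : Bitile) (c : ℂ) : ℝ → ℂ := (dyadicI Q.k Q.n).indicator fun _ => 2 ^ (-Q.k) * c

theorem integrable_density (Q : Bitile) (c : ℂ) : Integrable (Q.density c) := by
  rw [density, integrable_indicator_iff (measurableSet_dyadicI _ _)]
  exact integrableOn_const (by simp [volume_dyadicI])

theorem integral_density (Q : Bitile) (c : ℂ) : ∫ x, Q.density c x = c := by
  rw [density, integral_indicator_const _ (measurableSet_dyadicI _ _), measureReal_dyadicI,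
    Complex.real_smul]
  push_cast
  rw [← mul_assoc, ← zpow_add₀ two_ne_zero, add_neg_cancel, zpow_zero, one_mul]

theorem integral_norm_density (Q : Bitile) (c : ℂ) : ∫ x, ‖Q.density c x‖ = ‖c‖ := by
  simp only [density, norm_indicator_eq_indicator_norm]
  rw [integral_indicator_const _ (measurableSet_dyadicI _ _), measureReal_dyadicI, norm_mul,
    norm_zpow, Complex.norm_ofNat, smul_eq_mul, ← mul_assoc, ← zpow_add₀ two_ne_zero,
    add_neg_cancel, zpow_zero, one_mul]

end Bitile

/-- The summand of the quartile form `Λ_L` that belongs to the bitile `P`. -/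
def quartileIntegrand (L : ℕ) (f1 f2 f3 : ℝ → ℂ) (P : Bitile) (x : ℝ) : ℂ :=
  (P.phid x : ℂ) * projT P.u f1 x *
    piProj (dilate L P.d.toSet) f2 x * piProj (dilate L P.d.toSet) f3 x

theorem piProj_dilate_d {f : ℝ → ℂ} (hf : MemLp f 2) (L : ℕ) (P : Bitile) (x : ℝ) :
    piProj (dilate L P.d.toSet) f x = ∑ Q ∈ P.fiber L, projT Q.d f x := by
  rw [Bitile.d, piProj_dilate_toSet, sum_projT_column_eq_sum_projT_row hf, Bitile.fiber,
    Finset.sum_map]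
  rfl

theorem projT_mul_projT_self (p : Tile) (f g : ℝ → ℂ) (x : ℝ) :
    projT p f x * projT p g x =
      (dyadicI p.k p.n).indicator (fun _ => waveAverage f p * waveAverage g p) x := by
  have sq : ((p.phi x * p.phi x : ℝ) : ℂ) = (dyadicI p.k p.n).indicator 1 x := by
    rw [p.phi_mul_self]
    by_cases hx : x ∈ dyadicI p.k p.n <;> simp [hx]
  rw [projT_eq, projT_eq, mul_mul_mul_comm, ← Complex.ofReal_mul, sq]
  by_cases hx : x ∈ dyadicI p.k p.n <;> simp [hx]

theorem projT_mul_projT_of_ne {p q : Tile} (hk : p.k = q.k) (hn : p.n ≠ q.n) (f g : ℝ → ℂ)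
    (x : ℝ) : projT p f x * projT q g x = 0 := by
  rw [projT_eq, projT_eq, mul_mul_mul_comm, ← Complex.ofReal_mul, Tile.phi_mul_phi_of_ne hk hn,
    Complex.ofReal_zero, mul_zero]

theorem sum_projT_mul_sum_projT (L : ℕ) (P : Bitile) (f g : ℝ → ℂ) (x : ℝ) :
    (∑ Q ∈ P.fiber L, projT Q.d f x) * ∑ Q ∈ P.fiber L, projT Q.d g x =
      ∑ Q ∈ P.fiber L, projT Q.d f x * projT Q.d g x := by
  rw [Finset.sum_mul_sum]
  refine Finset.sum_congr rfl fun Q hQ => Finset.sum_eq_single_of_mem Q hQ fun R hR hRQ => ?_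
  have h := (Bitile.mem_fiber.1 hQ).trans (Bitile.mem_fiber.1 hR).symm
  obtain ⟨k, n, l⟩ := Q
  obtain ⟨k', n', l'⟩ := R
  simp only [Bitile.undilate, Bitile.mk.injEq, _root_.add_left_inj] at h
  obtain ⟨rfl, -, rfl⟩ := h
  have hn : n ≠ n' := fun hn => hRQ (hn ▸ rfl)
  exact projT_mul_projT_of_ne (p := ⟨k, n, 2 * l⟩) (q := ⟨k, n', 2 * l⟩) rfl hn f g x

variable {f2 f3 : ℝ → ℂ}

theorem quartileIntegrand_eq_sum_density (L : ℕ) (f1 : ℝ → ℂ) (h2 : MemLp f2 2) (h3 : MemLp f3 2)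
    (P : Bitile) (x : ℝ) :
    quartileIntegrand (L + 1) f1 f2 f3 P x = ∑ Q ∈ P.fiber (L + 1),
      Q.density (bitileTerm L (waveAverage f1) (waveAverage f2) (waveAverage f3) Q) x := by
  rw [quartileIntegrand, mul_assoc, piProj_dilate_d h2, piProj_dilate_d h3,
    sum_projT_mul_sum_projT, Finset.mul_sum]
  refine Finset.sum_congr rfl fun Q hQ => ?_
  obtain rfl := Bitile.mem_fiber.1 hQ
  rw [projT_mul_projT_self]
  by_cases hx : x ∈ dyadicI Q.k Q.n
  · have half : x ∈ dyadicI ((Q.undilate (L + 1)).k - 1) (Q.n / 2 ^ L) := by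
      rw [show (Q.undilate (L + 1)).k - 1 = Q.k + L by simp [Bitile.undilate]; ring]
      exact dyadicI_subset _ _ _ hx
    have sign := congrArg Complex.ofReal (Bitile.phi_d_mul_phi_u_of_mem (Q.undilate (L + 1))
      (by rw [Bitile.undilate, Nat.div_div_eq_div_mul, pow_succ]) half)
    push_cast at sign
    rw [indicator_of_mem (by exact hx), Bitile.density, indicator_of_mem hx, bitileTerm,
      ← mul_assoc (2 ^ (-Q.k)), ← zpow_add₀ two_ne_zero, neg_add_cancel, zpow_zero, one_mul, ← sign,
      Bitile.phid_eq, projT_eq]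
    ring
  · rw [indicator_of_notMem (by exact hx), Bitile.density, indicator_of_notMem hx, mul_zero]

theorem integrable_quartileIntegrand (L : ℕ) (f1 : ℝ → ℂ) (h2 : MemLp f2 2) (h3 : MemLp f3 2)
    (P : Bitile) : Integrable (quartileIntegrand (L + 1) f1 f2 f3 P) := by
  rw [funext (quartileIntegrand_eq_sum_density L f1 h2 h3 P)]
  exact integrable_finsetSum _ fun Q _ => Q.integrable_density _

theorem integral_quartileIntegrand (L : ℕ) (f1 : ℝ → ℂ) (h2 : MemLp f2 2) (h3 : MemLp f3 2)
    (P : Bitile) : ∫ x, quartileIntegrand (L + 1) f1 f2 f3 P x =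
      ∑ Q ∈ P.fiber (L + 1), bitileTerm L (waveAverage f1) (waveAverage f2) (waveAverage f3) Q := by
  simp only [quartileIntegrand_eq_sum_density L f1 h2 h3]
  rw [integral_finsetSum _ fun Q _ => Q.integrable_density _]
  simp only [Bitile.integral_density]

theorem integral_norm_quartileIntegrand_le (L : ℕ) (f1 : ℝ → ℂ) (h2 : MemLp f2 2)
    (h3 : MemLp f3 2) (P : Bitile) : ∫ x, ‖quartileIntegrand (L + 1) f1 f2 f3 P x‖ ≤
      ∑ Q ∈ P.fiber (L + 1),
        ‖bitileTerm L (waveAverage f1) (waveAverage f2) (waveAverage f3) Q‖ := by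
  simp only [quartileIntegrand_eq_sum_density L f1 h2 h3]
  set c := bitileTerm L (waveAverage f1) (waveAverage f2) (waveAverage f3)
  have integrable (Q : Bitile) := Q.integrable_density (c Q)
  calc ∫ x, ‖∑ Q ∈ P.fiber (L + 1), Q.density (c Q) x‖
      ≤ ∫ x, ∑ Q ∈ P.fiber (L + 1), ‖Q.density (c Q) x‖ :=
        integral_mono (integrable_finsetSum _ fun Q _ => integrable Q).norm
          (integrable_finsetSum _ fun Q _ => (integrable Q).norm) fun x => norm_sum_le _ _
    _ = ∑ Q ∈ P.fiber (L + 1), ‖c Q‖ := by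
        rw [integral_finsetSum _ fun Q _ => (integrable Q).norm]
        simp only [Bitile.integral_norm_density]

end QuartileIntegrand

section Summability

theorem mem_stripBitiles {N : ℕ} {P : Bitile} :
    P ∈ stripBitiles N ↔ (2 : ℝ) ^ (1 - P.k) * (P.l + 1) ≤ 2 ^ N := by
  rw [stripBitiles, mem_ofPred_eq, Bitile.freqI,
    Ico_subset_Ico_iff (by gcongr; exact lt_add_one _)]
  exact and_iff_right (by positivity)

theorem two_zpow_neg_scale_le {N : ℕ} {P : Bitile} (hP : P ∈ stripBitiles N) :
    (2 : ℝ) ^ (-P.k) ≤ 2 ^ N := calc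
  (2 : ℝ) ^ (-P.k) ≤ 2 ^ (1 - P.k) * (P.l + 1) := by
    have : (2 : ℝ) ^ (-P.k) ≤ 2 ^ (1 - P.k) := zpow_le_zpow_right₀ one_le_two (by omega)
    exact this.trans (le_mul_of_one_le_right (by positivity) (by simp))
  _ ≤ 2 ^ N := mem_stripBitiles.1 hP

theorem IsBesselFamily.sum_scale_le {A : Tile → ℂ} {e : ℝ} (h : IsBesselFamily A e) {k : ℤ}
    {F : Finset Bitile} (hF : ∀ Q ∈ F, Q.k = k) : ∑ Q ∈ F, 2 ^ Q.k * ‖A Q.d‖ ^ 2 ≤ e := by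
  classical
  have injective : Function.Injective Bitile.d := by
    rintro ⟨k, n, l⟩ ⟨k', n', l'⟩ h
    simpa [Bitile.d] using h
  have antichain : IsAntichain (· ≤ ·) (F.image Bitile.d : Set Tile) := by
    rw [Finset.coe_image]
    rintro _ ⟨P, hP, rfl⟩ _ ⟨Q, hQ, rfl⟩ hne ⟨r, hk, hn, hl⟩
    have hr : r = 0 := by
      have := (hF P hP).trans (hF Q hQ).symm
      simp only [Bitile.d] at hk
      omega
    subst hr
    exact hne (by simp_all [Bitile.d])
  simpa only [Finset.sum_image injective.injOn, Bitile.d] using h.sum_le _ antichain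

variable {A1 A2 A3 : Tile → ℂ} {e2 e3 M : ℝ}

theorem norm_bitileTerm_le_add_sq (L : ℕ) (A1 A2 A3 : Tile → ℂ) (Q : Bitile) :
    ‖bitileTerm L A1 A2 A3 Q‖ ≤ ‖A1 (Q.undilate (L + 1)).u‖ *
      (2 ^ Q.k * ‖A2 Q.d‖ ^ 2 + 2 ^ Q.k * ‖A3 Q.d‖ ^ 2) := by
  have am_gm : ‖A2 Q.d‖ * ‖A3 Q.d‖ ≤ ‖A2 Q.d‖ ^ 2 + ‖A3 Q.d‖ ^ 2 := by
    nlinarith [two_mul_le_add_sq ‖A2 Q.d‖ ‖A3 Q.d‖, norm_nonneg (A2 Q.d), norm_nonneg (A3 Q.d)]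
  simp only [bitileTerm, norm_mul, norm_zpow, norm_pow, norm_neg, norm_one, one_pow, one_mul,
    Complex.norm_ofNat]
  rw [mul_left_comm, ← mul_add]
  gcongr

theorem sum_norm_bitileTerm_le (hA1 : ∀ p : Tile, ‖A1 p‖ ≤ 2 ^ (-p.k) * M)
    (h2 : IsBesselFamily A2 e2) (h3 : IsBesselFamily A3 e3) {L N : ℕ} {F : Finset Bitile}
    (hF : ∀ Q ∈ F, Q.undilate (L + 1) ∈ stripBitiles N) :
    ∑ Q ∈ F, ‖bitileTerm L A1 A2 A3 Q‖ ≤ 2 ^ N * 2 * (M * (e2 + e3)) := by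
  have hM : 0 ≤ M := by simpa using (norm_nonneg _).trans (hA1 ⟨0, 0, 0⟩)
  have he2 := h2.energy_nonneg
  have he3 := h3.energy_nonneg
  set scale : Bitile → ℤ := fun Q => -(Q.undilate (L + 1)).k
  have sum_scale (i : ℤ) : ∑ Q ∈ F with scale Q = i, ‖bitileTerm L A1 A2 A3 Q‖ ≤
      ((2 : ℝ) ^ i) ^ (1 : ℝ) * (M * (e2 + e3)) := by
    have hscale : ∀ Q ∈ F.filter (scale · = i), Q.k = -i - (L + 1) := fun Q hQ => by
      have := (Finset.mem_filter.1 hQ).2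
      simp only [scale, Bitile.undilate] at this
      push_cast at this
      omega
    calc ∑ Q ∈ F with scale Q = i, ‖bitileTerm L A1 A2 A3 Q‖
        ≤ ∑ Q ∈ F with scale Q = i,
            2 ^ i * M * (2 ^ Q.k * ‖A2 Q.d‖ ^ 2 + 2 ^ Q.k * ‖A3 Q.d‖ ^ 2) := by
          refine Finset.sum_le_sum fun Q hQ => (norm_bitileTerm_le_add_sq L A1 A2 A3 Q).trans ?_
          gcongr
          exact (Finset.mem_filter.1 hQ).2 ▸ hA1 _
      _ ≤ 2 ^ i * M * (e2 + e3) := by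
          rw [← Finset.mul_sum, Finset.sum_add_distrib]
          gcongr
          exacts [h2.sum_scale_le hscale, h3.sum_scale_le hscale]
      _ = _ := by rw [Real.rpow_one, mul_assoc]
  have sum_scales : ∑ i ∈ F.image scale, ((2 : ℝ) ^ i) ^ (1 : ℝ) ≤ 2 ^ N * 2 := by
    convert sum_zpow_rpow_le (a := 2 ^ N) (by positivity) one_pos ?_ using 1
    · norm_num
    · exact Finset.forall_mem_image.2 fun Q hQ => two_zpow_neg_scale_le (hF Q hQ)
  calc ∑ Q ∈ F, ‖bitileTerm L A1 A2 A3 Q‖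
      = ∑ i ∈ F.image scale, ∑ Q ∈ F with scale Q = i, ‖bitileTerm L A1 A2 A3 Q‖ :=
        (Finset.sum_fiberwise_of_maps_to (fun Q hQ => Finset.mem_image_of_mem _ hQ) _).symm
    _ ≤ ∑ i ∈ F.image scale, ((2 : ℝ) ^ i) ^ (1 : ℝ) * (M * (e2 + e3)) :=
        Finset.sum_le_sum fun i _ => sum_scale i
    _ ≤ 2 ^ N * 2 * (M * (e2 + e3)) := by
        rw [← Finset.sum_mul]
        gcongr

open Classical in
/-- The bitiles `Q` with `Q.undilate L ∈ S`. -/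
def undilatePreimage (L : ℕ) (S : Finset Bitile) : Finset Bitile := S.biUnion (Bitile.fiber L)

theorem mem_undilatePreimage {L : ℕ} {S : Finset Bitile} {Q : Bitile} :
    Q ∈ undilatePreimage L S ↔ Q.undilate L ∈ S := by
  simp [undilatePreimage, Bitile.mem_fiber]

theorem sum_sum_fiber {E : Type*} [AddCommMonoid E] (L : ℕ) (S : Finset Bitile) (g : Bitile → E) :
    ∑ P ∈ S, ∑ Q ∈ P.fiber L, g Q = ∑ Q ∈ undilatePreimage L S, g Q := by
  classical
  refine (Finset.sum_biUnion fun P _ R _ hPR => ?_).symm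
  exact Finset.disjoint_left.2 fun Q hP hR =>
    hPR ((Bitile.mem_fiber.1 hP).symm.trans (Bitile.mem_fiber.1 hR))

variable {f1 f2 f3 : ℝ → ℂ}

theorem norm_waveAverage_le (hf : Integrable f1) (p : Tile) :
    ‖waveAverage f1 p‖ ≤ 2 ^ (-p.k) * ∫ x, ‖f1 x‖ := by
  rw [waveAverage, norm_mul, norm_zpow, Complex.norm_ofNat]
  gcongr
  refine norm_integral_le_of_norm_le hf.norm (.of_forall fun x => ?_)
  rw [norm_mul, Complex.norm_real]
  exact mul_le_of_le_one_right (norm_nonneg _) (p.abs_phi_le_one x)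

theorem summable_integral_norm_quartileIntegrand (L N : ℕ) (h1 : Integrable f1) (h2 : MemLp f2 2)
    (h3 : MemLp f3 2) :
    Summable fun P : stripBitiles N => ∫ x, ‖quartileIntegrand (L + 1) f1 f2 f3 P x‖ := by
  refine summable_of_sum_le
    (c := 2 ^ N * 2 * ((∫ x, ‖f1 x‖) * ((∫ x, ‖f2 x‖ ^ 2) + ∫ x, ‖f3 x‖ ^ 2)))
    (fun P => integral_nonneg fun _ => norm_nonneg _) fun S => ?_
  set S' : Finset Bitile := S.map (.subtype _)
  have strip : ∀ Q ∈ undilatePreimage (L + 1) S', Q.undilate (L + 1) ∈ stripBitiles N := by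
    intro Q hQ
    obtain ⟨P, -, hP⟩ := Finset.mem_map.1 (mem_undilatePreimage.1 hQ)
    exact hP ▸ P.2
  calc ∑ P ∈ S, ∫ x, ‖quartileIntegrand (L + 1) f1 f2 f3 P x‖
      = ∑ P ∈ S', ∫ x, ‖quartileIntegrand (L + 1) f1 f2 f3 P x‖ := by rw [Finset.sum_map]; rfl
    _ ≤ ∑ P ∈ S', ∑ Q ∈ P.fiber (L + 1), _ :=
        Finset.sum_le_sum fun P _ => integral_norm_quartileIntegrand_le L f1 h2 h3 P
    _ = _ := sum_sum_fiber _ _ _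
    _ ≤ _ := sum_norm_bitileTerm_le (norm_waveAverage_le h1) (isBesselFamily_waveAverage h2 le_rfl)
        (isBesselFamily_waveAverage h3 le_rfl) strip

end Summability

section Exhaustion

namespace Bitile

theorem coordinates_injective : Function.Injective fun P : Bitile => (P.k, P.n, P.l) := by
  rintro ⟨k, n, l⟩ ⟨k', n', l'⟩ h
  simpa using h

instance : Countable Bitile := coordinates_injective.countable

end Bitile

/-- The bitiles over `[0, 2^K)` inside the strip `[0,∞) × [0, 2^N)` whose scale is at least `-K`. -/
def stripBox (N K : ℕ) : Set Bitile :=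
  {P ∈ stripBitiles N | -K ≤ P.k ∧ P.k ≤ K ∧ P.n < 2 ^ (K - P.k).toNat}

theorem freq_lt_of_mem_stripBitiles {N K : ℕ} {P : Bitile} (hP : P ∈ stripBitiles N)
    (hk : P.k ≤ K) : P.l < 2 ^ (K + N) := by
  have h : (2 : ℝ) ^ (-(K : ℤ)) * (P.l + 1) ≤ 2 ^ N := calc
    (2 : ℝ) ^ (-(K : ℤ)) * (P.l + 1) ≤ 2 ^ (1 - P.k) * (P.l + 1) := by
      gcongr
      exacts [one_le_two, by omega]
    _ ≤ 2 ^ N := mem_stripBitiles.1 hP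
  rw [zpow_neg, zpow_natCast, inv_mul_le_iff₀ (by positivity), ← pow_add] at h
  exact_mod_cast h

theorem finite_stripBox (N K : ℕ) : (stripBox N K).Finite := by
  have finite :
      (Icc (-K : ℤ) K ×ˢ Iio (2 ^ (2 * K)) ×ˢ Iio (2 ^ (K + N)) : Set (ℤ × ℕ × ℕ)).Finite :=
    (finite_Icc _ _).prod ((finite_Iio _).prod (finite_Iio _))
  refine (finite.preimage Bitile.coordinates_injective.injOn).subset ?_
  rintro P ⟨hP, hk, hk', hn⟩
  refine ⟨⟨hk, hk'⟩, hn.trans_le (Nat.pow_le_pow_right two_pos (by omega)), ?_⟩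
  exact freq_lt_of_mem_stripBitiles hP hk'

theorem stripBox_mono (N : ℕ) : Monotone (stripBox N) := by
  rintro K K' hK P ⟨hP, hk, hk', hn⟩
  exact ⟨hP, by omega, by omega, hn.trans_le (Nat.pow_le_pow_right two_pos (by omega))⟩

theorem exists_mem_stripBox {N : ℕ} {P : Bitile} (hP : P ∈ stripBitiles N) :
    ∃ K, P ∈ stripBox N K :=
  ⟨P.k.natAbs + P.n, hP, by omega, by omega,
    Nat.lt_two_pow_self.trans_le (Nat.pow_le_pow_right two_pos (by omega))⟩

/-- The bitiles whose undilation by `2^L` belongs to `stripBox N K`. -/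
def dilatedBox (L N K : ℕ) : Finset Bitile := undilatePreimage L (finite_stripBox N K).toFinset

theorem mem_dilatedBox {L N K : ℕ} {Q : Bitile} :
    Q ∈ dilatedBox L N K ↔ Q.undilate L ∈ stripBox N K := by
  rw [dilatedBox, mem_undilatePreimage, Set.Finite.mem_toFinset]

theorem norm_quartileForm_le {f1 f2 f3 : ℝ → ℂ} (h1 : Integrable f1) (h2 : MemLp f2 2)
    (h3 : MemLp f3 2) {L N : ℕ} {B : ℝ}
    (hB : ∀ K, ‖∑ Q ∈ dilatedBox (L + 1) N K,
      bitileTerm L (waveAverage f1) (waveAverage f2) (waveAverage f3) Q‖ ≤ B) :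
    ‖quartileForm (L + 1) N f1 f2 f3‖ ≤ B := by
  classical
  have hasSum : HasSum (fun P : stripBitiles N => ∫ x, quartileIntegrand (L + 1) f1 f2 f3 P x)
      (quartileForm (L + 1) N f1 f2 f3) :=
    hasSum_integral_of_summable_integral_norm
      (fun P => integrable_quartileIntegrand L f1 h2 h3 P)
      (summable_integral_norm_quartileIntegrand L N h1 h2 h3)
  have exhaustion : Filter.Tendsto
      (fun K => (finite_stripBox N K).toFinset.subtype (· ∈ stripBitiles N))
      Filter.atTop Filter.atTop := by
    refine Filter.tendsto_atTop_finset_of_monotone (fun K K' hK P hP => ?_) fun P => ?_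
    · rw [Finset.mem_subtype, Set.Finite.mem_toFinset] at hP ⊢
      exact stripBox_mono N hK hP
    · simpa using exists_mem_stripBox P.2
  refine le_of_tendsto' (hasSum.comp exhaustion).norm fun K => ?_
  have filter_eq : (finite_stripBox N K).toFinset.filter (· ∈ stripBitiles N) =
      (finite_stripBox N K).toFinset :=
    Finset.filter_true_of_mem fun P hP => ((Set.Finite.mem_toFinset _).1 hP).1
  rw [Function.comp_apply, Finset.sum_subtype_eq_sum_filter
    (f := fun P => ∫ x, quartileIntegrand (L + 1) f1 f2 f3 P x), filter_eq]
  simp only [integral_quartileIntegrand L f1 h2 h3]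
  rw [sum_sum_fiber]
  exact hB K

end Exhaustion

/-! ### Exceptional sets -/

section WeakType

variable {α : Type*}

theorem pairwiseDisjoint_maximals_of_laminar {𝓕 : Finset (Set α)}
    (h𝓕 : ∀ s ∈ 𝓕, ∀ t ∈ 𝓕, s ⊆ t ∨ t ⊆ s ∨ Disjoint s t) :
    (maximals 𝓕 : Set (Set α)).PairwiseDisjoint id := by
  intro s hs t ht hne
  have hs' := mem_maximals.1 hs
  have ht' := mem_maximals.1 ht
  rcases h𝓕 s hs'.prop t ht'.prop with hst | hts | hd
  · exact absurd hst (isAntichain_maximals 𝓕 hs ht hne)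
  · exact absurd hts (isAntichain_maximals 𝓕 ht hs hne.symm)
  · exact hd

variable [MeasurableSpace α] {μ : Measure α} {E : Set α} {c : ℝ≥0∞}

theorem mul_measure_biUnion_le_of_laminar {𝓕 : Finset (Set α)} (hm : ∀ s ∈ 𝓕, MeasurableSet s)
    (h𝓕 : ∀ s ∈ 𝓕, ∀ t ∈ 𝓕, s ⊆ t ∨ t ⊆ s ∨ Disjoint s t)
    (hc : ∀ s ∈ 𝓕, c * μ s ≤ μ (E ∩ s)) : c * μ (⋃ s ∈ 𝓕, s) ≤ μ E := by
  have maximals_subset : maximals 𝓕 ⊆ 𝓕 := fun s hs => (mem_maximals.1 hs).prop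
  have cover : ⋃ s ∈ 𝓕, s ⊆ ⋃ s ∈ maximals 𝓕, s := iUnion₂_subset fun s hs => by
    obtain ⟨t, ht, hst⟩ := exists_mem_maximals_ge hs
    exact hst.trans (subset_biUnion_of_mem (u := id) ht)
  calc c * μ (⋃ s ∈ 𝓕, s) ≤ c * ∑ s ∈ maximals 𝓕, μ s := by
        gcongr
        exact (measure_mono cover).trans (measure_biUnion_finset_le _ _)
    _ = ∑ s ∈ maximals 𝓕, c * μ s := Finset.mul_sum _ _ _
    _ ≤ ∑ s ∈ maximals 𝓕, μ.restrict E s := Finset.sum_le_sum fun s hs => by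
        rw [Measure.restrict_apply (hm s (maximals_subset hs)), inter_comm]
        exact hc s (maximals_subset hs)
    _ = μ.restrict E (⋃ s ∈ maximals 𝓕, s) :=
        (measure_biUnion_finset (pairwiseDisjoint_maximals_of_laminar h𝓕)
          fun s hs => hm s (maximals_subset hs)).symm
    _ ≤ μ E := (measure_mono (subset_univ _)).trans_eq (Measure.restrict_apply_univ E)

theorem mul_measure_sUnion_le_of_laminar {𝓕 : Set (Set α)} (countable : 𝓕.Countable)
    (hm : ∀ s ∈ 𝓕, MeasurableSet s) (h𝓕 : ∀ s ∈ 𝓕, ∀ t ∈ 𝓕, s ⊆ t ∨ t ⊆ s ∨ Disjoint s t)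
    (hc : ∀ s ∈ 𝓕, c * μ s ≤ μ (E ∩ s)) : c * μ (⋃₀ 𝓕) ≤ μ E := by
  classical
  have := countable.to_subtype
  have directed : Directed (· ⊆ ·) fun F : Finset 𝓕 => ⋃ s ∈ F, (s : Set α) :=
    Monotone.directed_le fun F G h => biUnion_subset_biUnion_left h
  rw [sUnion_eq_iUnion, iUnion_eq_iUnion_finset, directed.measure_iUnion, ENNReal.mul_iSup]
  refine iSup_le fun F => ?_
  have subset (s) (hs : s ∈ F.image Subtype.val) : s ∈ 𝓕 := by
    obtain ⟨t, -, rfl⟩ := Finset.mem_image.1 hs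
    exact t.2
  have := mul_measure_biUnion_le_of_laminar (fun s hs => hm s (subset s hs))
    (fun s hs t ht => h𝓕 s (subset s hs) t (subset t ht)) fun s hs => hc s (subset s hs)
  rwa [Finset.set_biUnion_finset_image] at this

end WeakType

theorem dyadicI_laminar (j k : ℤ) (m n : ℕ) :
    dyadicI j m ⊆ dyadicI k n ∨ dyadicI k n ⊆ dyadicI j m ∨
      Disjoint (dyadicI j m) (dyadicI k n) := by
  wlog hjk : j ≤ k generalizing j k m n
  · rcases this k j n m (le_of_not_ge hjk) with h | h | h
    exacts [.inr (.inl h), .inl h, .inr (.inr h.symm)]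
  obtain ⟨r, rfl⟩ := Int.le.dest hjk
  by_cases hn : m / 2 ^ r = n
  · exact .inl (hn ▸ dyadicI_subset j m r)
  · refine .inr (.inr (disjoint_left.2 fun x hm hx => hn ?_))
    exact eq_of_mem_dyadicI (dyadicI_subset j m r hm) hx

/-- The dyadic intervals in which `E` has density greater than `c`. -/
def denseIntervals (E : Set ℝ) (c : ℝ≥0) : Set (Set ℝ) :=
  {I ∈ range fun z : ℤ × ℕ => dyadicI z.1 z.2 | c * volume I < volume (E ∩ I)}

/-- The set where the dyadic maximal function of the indicator function of `E` exceeds `c`. -/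
def exceptionalSet (E : Set ℝ) (c : ℝ≥0) : Set ℝ := ⋃₀ denseIntervals E c

section ExceptionalSet

variable {E F : Set ℝ} {c : ℝ≥0}

theorem countable_denseIntervals (E : Set ℝ) (c : ℝ≥0) : (denseIntervals E c).Countable :=
  (countable_range _).mono (sep_subset _ _)

theorem measurableSet_of_mem_denseIntervals {I : Set ℝ} (hI : I ∈ denseIntervals E c) :
    MeasurableSet I := by
  obtain ⟨⟨z, rfl⟩, -⟩ := hI
  exact measurableSet_dyadicI _ _

theorem measurableSet_exceptionalSet (E : Set ℝ) (c : ℝ≥0) : MeasurableSet (exceptionalSet E c) :=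
  .sUnion (countable_denseIntervals E c) fun _ => measurableSet_of_mem_denseIntervals

theorem mul_volume_exceptionalSet_le (E : Set ℝ) (c : ℝ≥0) :
    c * volume (exceptionalSet E c) ≤ volume E := by
  refine mul_measure_sUnion_le_of_laminar (countable_denseIntervals E c)
    (fun _ => measurableSet_of_mem_denseIntervals) ?_ fun I hI => hI.2.le
  rintro _ ⟨⟨z, rfl⟩, -⟩ _ ⟨⟨w, rfl⟩, -⟩
  exact dyadicI_laminar _ _ _ _

theorem measureReal_inter_dyadicI_le {k : ℤ} {n : ℕ} (h : ¬ dyadicI k n ⊆ exceptionalSet E c) :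
    volume.real (E ∩ dyadicI k n) ≤ c * 2 ^ k := by
  have hle : volume (E ∩ dyadicI k n) ≤ c * volume (dyadicI k n) :=
    not_lt.1 fun hlt => h (subset_sUnion_of_mem ⟨⟨(k, n), rfl⟩, hlt⟩)
  rw [← measureReal_dyadicI k n, ← ENNReal.coe_toReal, measureReal_def, measureReal_def,
    ← ENNReal.toReal_mul]
  exact ENNReal.toReal_mono (by simp [volume_dyadicI, ENNReal.mul_eq_top]) hle

/-- The density threshold for `E` at which the exceptional set has measure at most `|F| / 4`. -/
def densityThreshold (E F : Set ℝ) : ℝ≥0 := 4 * (volume E).toNNReal / (volume F).toNNReal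

theorem densityThreshold_pos (hE : 0 < volume.real E) (hF : 0 < volume.real F) :
    0 < densityThreshold E F := by
  simp only [measureReal_def, ENNReal.toReal, NNReal.coe_pos] at hE hF
  exact div_pos (mul_pos (by norm_num) hE) hF

theorem coe_densityThreshold (E F : Set ℝ) :
    (densityThreshold E F : ℝ) = 4 * volume.real E / volume.real F := rfl

/-- `E3` without the exceptional sets of `E1` and `E2`. -/
def majorSubset (E1 E2 E3 : Set ℝ) : Set ℝ :=
  E3 \ (exceptionalSet E1 (densityThreshold E1 E3) ∪ exceptionalSet E2 (densityThreshold E2 E3))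

theorem volume_exceptionalSet_densityThreshold_le (hE : 0 < volume.real E)
    (hF : 0 < volume.real F) :
    volume (exceptionalSet E (densityThreshold E F)) ≤ volume F / 4 := by
  have hc := densityThreshold_pos hE hF
  have hE' := (ENNReal.toReal_pos_iff.1 hE).2.ne
  have hF' := (ENNReal.toReal_pos_iff.1 hF).2.ne
  have hle := mul_volume_exceptionalSet_le E (densityThreshold E F)
  have hdiv : volume E / densityThreshold E F = volume F / 4 := by
    rw [← ENNReal.coe_toNNReal hE', ← ENNReal.coe_toNNReal hF', ← ENNReal.coe_div hc.ne',
      ← ENNReal.coe_ofNat 4, ← ENNReal.coe_div (by norm_num), densityThreshold]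
    have hE₀ : (volume E).toNNReal ≠ 0 := (NNReal.coe_pos.1 hE).ne'
    field_simp
  rw [← hdiv, ENNReal.le_div_iff_mul_le (by simp [hc.ne']) (by simp), mul_comm]
  exact hle

theorem half_volume_le_volume_majorSubset {E1 E2 E3 : Set ℝ} (h1 : 0 < volume.real E1)
    (h2 : 0 < volume.real E2) (h3 : 0 < volume.real E3) :
    volume E3 / 2 ≤ volume (majorSubset E1 E2 E3) := by
  have hO := (measure_union_le _ _).trans
    (add_le_add (volume_exceptionalSet_densityThreshold_le h1 h3)
      (volume_exceptionalSet_densityThreshold_le h2 h3))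
  calc volume E3 / 2 = volume E3 - volume E3 / 2 :=
        (ENNReal.sub_half (ENNReal.toReal_pos_iff.1 h3).2.ne).symm
    _ = volume E3 - (volume E3 / 4 + volume E3 / 4) := by
        rw [ENNReal.div_add_div_same, ← two_mul, show (4 : ℝ≥0∞) = 2 * 2 by norm_num,
          ENNReal.mul_div_mul_left _ _ two_ne_zero ENNReal.ofNat_ne_top]
    _ ≤ _ := (tsub_le_tsub_left hO _).trans le_measure_sdiff

end ExceptionalSet

/-! ### Functions bounded by indicator functions -/

/-- `f` is measurable and `|f| ≤ 1_E`. -/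
structure IsSubindicator (f : ℝ → ℂ) (E : Set ℝ) : Prop where
  measurable : Measurable f
  norm_le : ∀ x, ‖f x‖ ≤ E.indicator 1 x

namespace IsSubindicator

variable {f : ℝ → ℂ} {E F : Set ℝ}

theorem mono (hf : IsSubindicator f E) (hEF : E ⊆ F) : IsSubindicator f F :=
  ⟨hf.measurable, fun x => (hf.norm_le x).trans
    (indicator_le_indicator_of_subset hEF (fun _ => zero_le_one) x)⟩

theorem norm_le_one (hf : IsSubindicator f E) (x : ℝ) : ‖f x‖ ≤ 1 :=
  (hf.norm_le x).trans (indicator_le_self' (fun _ _ => zero_le_one) x)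

theorem eq_zero_of_notMem (hf : IsSubindicator f E) {x : ℝ} (hx : x ∉ E) : f x = 0 := by
  simpa [hx] using hf.norm_le x

theorem integrable_indicator_one (hE : MeasurableSet E) (hv : volume E ≠ ∞) :
    Integrable (E.indicator (1 : ℝ → ℝ)) :=
  (integrable_indicator_iff hE).2 (integrableOn_const hv)

theorem memLp (hf : IsSubindicator f E) (hE : MeasurableSet E) (hv : volume E ≠ ∞) (q : ℝ≥0∞) :
    MemLp f q :=
  (memLp_indicator_const q hE 1 (.inr hv)).mono' hf.measurable.aestronglyMeasurable
    (.of_forall hf.norm_le)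

theorem integral_norm_sq_le (hf : IsSubindicator f E) (hE : MeasurableSet E)
    (hv : volume E ≠ ∞) : ∫ x, ‖f x‖ ^ 2 ≤ volume.real E := by
  rw [← integral_indicator_one hE]
  refine integral_mono ((hf.memLp hE hv 2).integrable_norm_pow two_ne_zero)
    (integrable_indicator_one hE hv) fun x => ?_
  exact (pow_le_of_le_one (norm_nonneg _) (hf.norm_le_one x) two_ne_zero).trans (hf.norm_le x)

theorem isBesselFamily (hf : IsSubindicator f E) (hE : MeasurableSet E) (hv : volume E ≠ ∞) :
    IsBesselFamily (waveAverage f) (volume.real E) :=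
  isBesselFamily_waveAverage (hf.memLp hE hv 2) (hf.integral_norm_sq_le hE hv)

theorem norm_waveAverage_le (hf : IsSubindicator f E) (hE : MeasurableSet E) (p : Tile) :
    ‖waveAverage f p‖ ≤ 2 ^ (-p.k) * volume.real (E ∩ dyadicI p.k p.n) := by
  have hm : MeasurableSet (E ∩ dyadicI p.k p.n) := hE.inter (measurableSet_dyadicI _ _)
  have hv : volume (E ∩ dyadicI p.k p.n) ≠ ∞ :=
    measure_ne_top_of_subset inter_subset_right (by simp [volume_dyadicI])
  rw [waveAverage, norm_mul, norm_zpow, Complex.norm_ofNat, ← integral_indicator_one hm]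
  gcongr
  refine norm_integral_le_of_norm_le (integrable_indicator_one hm hv) (.of_forall fun x => ?_)
  by_cases hx : x ∈ E ∩ dyadicI p.k p.n
  · rw [indicator_of_mem hx, Pi.one_apply, norm_mul, Complex.norm_real]
    exact mul_le_one₀ (hf.norm_le_one x) (norm_nonneg _) (p.abs_phi_le_one x)
  · rw [indicator_of_notMem hx]
    rcases not_and_or.1 hx with hx | hx
    · simp [hf.eq_zero_of_notMem hx]
    · simp [p.phi_of_notMem hx]

theorem waveAverage_eq_zero (hf : IsSubindicator f E) (hE : MeasurableSet E) {p : Tile}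
    (h : volume (E ∩ dyadicI p.k p.n) = 0) : waveAverage f p = 0 := by
  simpa [measureReal_def, h] using hf.norm_waveAverage_le hE p

theorem coefSup_waveAverage_le (hf : IsSubindicator f E) (hE : MeasurableSet E) {c : ℝ≥0}
    {P : Bitile} (h : volume.real (E ∩ dyadicI P.k P.n) ≤ c * 2 ^ P.k) :
    (coefSup (waveAverage f) P : ℝ) ≤ c := by
  have norm_le (p : Tile) (hk : p.k = P.k) (hn : p.n = P.n) : ‖waveAverage f p‖ ≤ c := by
    refine (hf.norm_waveAverage_le hE p).trans ?_
    rwa [zpow_neg, inv_mul_le_iff₀ (by positivity), hk, hn, mul_comm]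
  exact_mod_cast coefSup_le.2 ⟨norm_le P.d rfl rfl, norm_le P.u rfl rfl⟩

theorem coefSup_waveAverage_le_one (hf : IsSubindicator f E) (hE : MeasurableSet E) (P : Bitile) :
    (coefSup (waveAverage f) P : ℝ) ≤ 1 := by
  refine hf.coefSup_waveAverage_le (c := 1) hE ?_
  rw [NNReal.coe_one, one_mul, ← measureReal_dyadicI P.k P.n]
  exact measureReal_mono inter_subset_right (by simp [volume_dyadicI])

end IsSubindicator

/-! ### The restricted type estimate -/

section ScaleClosed

variable {L N K : ℕ}

theorem mem_stripBitiles_of_le {P Q : Bitile} (hQ : Q ∈ stripBitiles N) (hQP : Q ≤ P) :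
    P ∈ stripBitiles N := by
  obtain ⟨r, hk, -, hl⟩ := Bitile.le_def.1 hQP
  have freq : P.freqI ⊆ Q.freqI := dyadicI_subset_iff.2 ⟨r, by omega, hl⟩
  exact freq.trans hQ

theorem mem_stripBox_of_le {P Q : Bitile} (hQ : Q ∈ stripBox N K) (hQP : Q ≤ P) (hP : P.k ≤ K) :
    P ∈ stripBox N K := by
  obtain ⟨strip, hk, -, hn⟩ := hQ
  obtain ⟨r, hr, hrn, -⟩ := Bitile.le_def.1 hQP
  refine ⟨mem_stripBitiles_of_le strip hQP, by omega, hP, ?_⟩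
  rw [← hrn, Nat.div_lt_iff_lt_mul (by positivity), ← pow_add]
  exact hn.trans_le (Nat.pow_le_pow_right two_pos (by omega))

theorem isScaleClosed_dilatedBox (L N K : ℕ) : IsScaleClosed (dilatedBox L N K) := by
  intro Q hQ T hT P hQP hPT
  rw [mem_dilatedBox] at hQ hT ⊢
  refine mem_stripBox_of_le hQ (Bitile.undilate_mono L hQP) (le_trans ?_ hT.2.2.1)
  simpa only [Bitile.undilate, _root_.add_le_add_iff_right] using hPT

open Classical in
theorem IsScaleClosed.filter_not_timeI_subset {U : Finset Bitile} (hU : IsScaleClosed U)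
    (Ω : Set ℝ) : IsScaleClosed (U.filter fun Q => ¬ Q.timeI ⊆ Ω) := by
  intro Q hQ T hT P hQP hPT
  rw [Finset.mem_filter] at hQ hT ⊢
  exact ⟨hU Q hQ.1 T hT.1 P hQP hPT, fun h => hQ.2 ((Bitile.timeI_subset hQP).trans h)⟩

end ScaleClosed

section Estimate

variable {L N : ℕ} {E1 E2 E3 : Set ℝ} {f1 f2 f3 : ℝ → ℂ}

theorem quartileForm_eq_zero (hf1 : IsSubindicator f1 E1) (hf2 : IsSubindicator f2 E2)
    (hf3 : IsSubindicator f3 E3) (hE1 : MeasurableSet E1) (hE2 : MeasurableSet E2)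
    (hE3 : MeasurableSet E3) (hv1 : volume E1 ≠ ∞) (hv2 : volume E2 ≠ ∞) (hv3 : volume E3 ≠ ∞)
    (h : volume E1 = 0 ∨ volume E2 = 0) : quartileForm (L + 1) N f1 f2 f3 = 0 := by
  refine norm_le_zero_iff.1 (norm_quartileForm_le (memLp_one_iff_integrable.1 (hf1.memLp hE1 hv1 1))
    (hf2.memLp hE2 hv2 2) (hf3.memLp hE3 hv3 2) fun K => ?_)
  rw [Finset.sum_eq_zero, norm_zero]
  intro Q _
  rcases h with h | h
  · simp [bitileTerm, hf1.waveAverage_eq_zero hE1 (measure_mono_null inter_subset_left h)]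
  · simp [bitileTerm, hf2.waveAverage_eq_zero hE2 (measure_mono_null inter_subset_left h)]

variable {t1 t2 t3 : ℝ} {c1 c2 : ℝ≥0}

open Classical in
theorem sum_bitileTerm_filter_not_timeI_subset {A1 A2 : Tile → ℂ} {Ω : Set ℝ}
    (hf3 : IsSubindicator f3 (E3 \ Ω)) (hE3 : MeasurableSet E3) (hΩ : MeasurableSet Ω)
    (U : Finset Bitile) :
    ∑ Q ∈ U with ¬ Q.timeI ⊆ Ω, bitileTerm L A1 A2 (waveAverage f3) Q =
      ∑ Q ∈ U, bitileTerm L A1 A2 (waveAverage f3) Q := by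
  refine Finset.sum_filter_of_ne fun Q _ hne hsub => hne ?_
  have disjoint : (E3 \ Ω) ∩ dyadicI Q.d.k Q.d.n = ∅ :=
    (disjoint_sdiff_left.mono_right hsub).inter_eq
  simp [bitileTerm, hf3.waveAverage_eq_zero (hE3.diff hΩ) (by rw [disjoint, measure_empty])]

theorem norm_quartileForm_le_of_sdiff_exceptionalSet (hf1 : IsSubindicator f1 E1)
    (hf2 : IsSubindicator f2 E2)
    (hf3 : IsSubindicator f3 (E3 \ (exceptionalSet E1 c1 ∪ exceptionalSet E2 c2)))
    (hE1 : MeasurableSet E1) (hE2 : MeasurableSet E2) (hE3 : MeasurableSet E3)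
    (hv1 : volume E1 ≠ ∞) (hv2 : volume E2 ≠ ∞) (hv3 : volume E3 ≠ ∞) (hc1 : 0 < c1) (hc2 : 0 < c2)
    (ht1 : t1 ∈ Ioo 0 (1 / 2)) (ht2 : t2 ∈ Ioo 0 (1 / 2)) (ht3 : t3 ∈ Ioo 0 (1 / 2))
    (ht : t1 + t2 + t3 = 1) :
    ‖quartileForm (L + 1) N f1 f2 f3‖ ≤ quartileConst t1 t2 t3 *
      ((volume.real E1 ^ t1 * c1 ^ (1 - 2 * t1)) * (volume.real E2 ^ t2 * c2 ^ (1 - 2 * t2)) *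
        volume.real E3 ^ t3) := by
  classical
  have hf3' : IsSubindicator f3 E3 := hf3.mono sdiff_subset
  set Ω := exceptionalSet E1 c1 ∪ exceptionalSet E2 c2
  have hΩ : MeasurableSet Ω :=
    (measurableSet_exceptionalSet E1 c1).union (measurableSet_exceptionalSet E2 c2)
  refine norm_quartileForm_le (memLp_one_iff_integrable.1 (hf1.memLp hE1 hv1 1))
    (hf2.memLp hE2 hv2 2) (hf3'.memLp hE3 hv3 2) fun K => ?_
  rw [← sum_bitileTerm_filter_not_timeI_subset hf3 hE3 hΩ]
  have closed := (isScaleClosed_dilatedBox (L + 1) N K).filter_not_timeI_subset Ω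
  have not_subset {Q} (hQ : Q ∈ (dilatedBox (L + 1) N K).filter fun Q => ¬ Q.timeI ⊆ Ω) :
      ¬ Q.timeI ⊆ Ω := (Finset.mem_filter.1 hQ).2
  have estimate := norm_sum_bitileTerm_le (L := L) (hf1.isBesselFamily hE1 hv1)
    (hf2.isBesselFamily hE2 hv2) (hf3'.isBesselFamily hE3 hv3) closed ht1 ht2 ht3 ht
    (NNReal.coe_pos.2 hc1) (NNReal.coe_pos.2 hc2) one_pos
    (fun Q hQ => hf1.coefSup_waveAverage_le hE1 <| measureReal_inter_dyadicI_le fun h =>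
      not_subset hQ ((dyadicI_subset _ _ _).trans (h.trans subset_union_left)))
    (fun Q hQ => hf2.coefSup_waveAverage_le hE2 <| measureReal_inter_dyadicI_le fun h =>
      not_subset hQ (h.trans subset_union_right))
    (fun Q _ => hf3'.coefSup_waveAverage_le_one hE3 Q)
  simpa only [Real.one_rpow, mul_one] using estimate

end Estimate

section Exponents

theorem exists_exponents {α1 α2 α3 : ℝ} (h1 : α1 < 1) (h2 : α2 < 1) (h3 : -(1 / 2) < α3)
    (h : α1 + α2 + α3 = 1) :
    ∃ t1 t2 t3 : ℝ, t1 ∈ Ioo 0 (1 / 2) ∧ t2 ∈ Ioo 0 (1 / 2) ∧ t3 ∈ Ioo 0 (1 / 2) ∧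
      t1 + t2 + t3 = 1 ∧ t1 ≤ 1 - α1 ∧ t2 ≤ 1 - α2 := by
  obtain ⟨d, hd, hd'⟩ : ∃ d, 0 < d ∧ d < min (1 / 4) (min (1 - α1) (1 - α2)) :=
    exists_between (by simp [h1, h2])
  simp only [lt_min_iff] at hd'
  refine ⟨min (1 - α1) (1 / 2 - d), min (1 - α2) (1 / 2 - d),
    1 - min (1 - α1) (1 / 2 - d) - min (1 - α2) (1 / 2 - d), ?_⟩
  rcases min_cases (1 - α1) (1 / 2 - d) with ⟨hm, hle⟩ | ⟨hm, hle⟩ <;>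
    rcases min_cases (1 - α2) (1 / 2 - d) with ⟨hm', hle'⟩ | ⟨hm', hle'⟩ <;>
    rw [hm, hm'] <;> refine ⟨⟨?_, ?_⟩, ⟨?_, ?_⟩, ⟨?_, ?_⟩, ?_, ?_, ?_⟩ <;> linarith

variable {e e1 e2 e3 t t1 t2 t3 α α1 α2 α3 : ℝ}

theorem rpow_mul_threshold_rpow_le (he : 0 < e) (hle : e ≤ e3) (ht : t ∈ Ioo 0 (1 / 2))
    (hα : t ≤ 1 - α) :
    e ^ t * (4 * e / e3) ^ (1 - 2 * t) ≤ 4 * ((e / e3) ^ α * e3 ^ t) := by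
  have he3 : 0 < e3 := he.trans_le hle
  have hx : 0 < e / e3 := by positivity
  have hx1 : e / e3 ≤ 1 := (div_le_one he3).2 hle
  calc e ^ t * (4 * e / e3) ^ (1 - 2 * t)
      = 4 ^ (1 - 2 * t) * ((e / e3) ^ (t + (1 - 2 * t)) * e3 ^ t) := by
        rw [mul_div_assoc, Real.mul_rpow (by norm_num) hx.le, Real.rpow_add hx]
        nth_rewrite 1 [← div_mul_cancel₀ e he3.ne']
        rw [Real.mul_rpow hx.le he3.le]
        ring
    _ ≤ 4 ^ (1 : ℝ) * ((e / e3) ^ α * e3 ^ t) := by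
        gcongr ?_ * (?_ * _)
        · exact Real.rpow_le_rpow_of_exponent_le (by norm_num) (by linarith [ht.1])
        · exact Real.rpow_le_rpow_of_exponent_ge hx hx1 (by linarith)
    _ = _ := by rw [Real.rpow_one]

theorem rpow_mul_threshold_rpow_mul_le (he1 : 0 < e1) (he2 : 0 < e2) (hle1 : e1 ≤ e3)
    (hle2 : e2 ≤ e3) (ht1 : t1 ∈ Ioo 0 (1 / 2)) (ht2 : t2 ∈ Ioo 0 (1 / 2)) (ht : t1 + t2 + t3 = 1)
    (hα : α1 + α2 + α3 = 1) (hα1 : t1 ≤ 1 - α1) (hα2 : t2 ≤ 1 - α2) :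
    (e1 ^ t1 * (4 * e1 / e3) ^ (1 - 2 * t1)) * (e2 ^ t2 * (4 * e2 / e3) ^ (1 - 2 * t2)) * e3 ^ t3 ≤
      16 * (e1 ^ α1 * e2 ^ α2 * e3 ^ α3) := by
  have he3 : 0 < e3 := he1.trans_le hle1
  calc _ ≤ (4 * ((e1 / e3) ^ α1 * e3 ^ t1)) * (4 * ((e2 / e3) ^ α2 * e3 ^ t2)) * e3 ^ t3 := by
        gcongr ?_ * ?_ * _
        exacts [rpow_mul_threshold_rpow_le he1 hle1 ht1 hα1,
          rpow_mul_threshold_rpow_le he2 hle2 ht2 hα2]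
    _ = 16 * ((e1 / e3) ^ α1 * (e2 / e3) ^ α2 * e3 ^ (t1 + t2 + t3)) := by
        rw [Real.rpow_add he3, Real.rpow_add he3]
        ring
    _ = 16 * (e1 ^ α1 * e2 ^ α2 * e3 ^ α3) := by
        rw [ht, ← hα, Real.rpow_add he3, Real.rpow_add he3, Real.div_rpow he1.le he3.le,
          Real.div_rpow he2.le he3.le]
        field_simp

theorem quartileConst_nonneg (ht1 : t1 ∈ Ioo 0 (1 / 2)) (ht2 : t2 < 1 / 2) (ht3 : t3 < 1 / 2) :
    0 ≤ quartileConst t1 t2 t3 := by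
  have exp_le : Real.exp (-(t1 / 16)) ≤ 1 := Real.exp_le_one_iff.2 (by linarith [ht1.1])
  have rpow_le {t : ℝ} (ht : t < 1 / 2) : (2 : ℝ) ^ (-(1 - 2 * t)) ≤ 1 :=
    Real.rpow_le_one_of_one_le_of_nonpos one_le_two (by linarith)
  have := sub_nonneg.2 exp_le
  have := sub_nonneg.2 (rpow_le ht1.2)
  have := sub_nonneg.2 (rpow_le ht2)
  have := sub_nonneg.2 (rpow_le ht3)
  rw [quartileConst]
  positivity

end Exponents

theorem ofReal_measureReal_rpow {α : Type*} [MeasurableSpace α] {μ : Measure α} {s : Set α}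
    (hs : 0 < μ.real s) (r : ℝ) : ENNReal.ofReal (μ.real s ^ r) = μ s ^ r := by
  rw [← ENNReal.ofReal_rpow_of_pos hs, ofReal_measureReal (ENNReal.toReal_pos_iff.1 hs).2.ne]

section RestrictedType

variable {E1 E2 E3 : Set ℝ} {f1 f2 f3 : ℝ → ℂ} {t1 t2 t3 α1 α2 α3 : ℝ}

theorem enorm_quartileForm_le_of_majorSubset (hf1 : IsSubindicator f1 E1)
    (hf2 : IsSubindicator f2 E2) (hf3 : IsSubindicator f3 (majorSubset E1 E2 E3))
    (hE1 : MeasurableSet E1) (hE2 : MeasurableSet E2) (hE3 : MeasurableSet E3)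
    (hv3 : volume E3 ≠ ∞) (hpos1 : 0 < volume.real E1) (hpos2 : 0 < volume.real E2)
    (hle1 : volume E1 ≤ volume E3) (hle2 : volume E2 ≤ volume E3)
    (ht1 : t1 ∈ Ioo 0 (1 / 2)) (ht2 : t2 ∈ Ioo 0 (1 / 2)) (ht3 : t3 ∈ Ioo 0 (1 / 2))
    (ht : t1 + t2 + t3 = 1) (hα : α1 + α2 + α3 = 1) (hα1 : t1 ≤ 1 - α1) (hα2 : t2 ≤ 1 - α2)
    (L N : ℕ) :
    ‖quartileForm (L + 1) N f1 f2 f3‖ₑ ≤ ENNReal.ofReal (16 * quartileConst t1 t2 t3) *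
      volume E1 ^ α1 * volume E2 ^ α2 * volume E3 ^ α3 := by
  have hle1' : volume.real E1 ≤ volume.real E3 := ENNReal.toReal_mono hv3 hle1
  have hle2' : volume.real E2 ≤ volume.real E3 := ENNReal.toReal_mono hv3 hle2
  have hpos3 := hpos1.trans_le hle1'
  have hconst := quartileConst_nonneg ht1 ht2.2 ht3.2
  have bound := norm_quartileForm_le_of_sdiff_exceptionalSet (L := L) (N := N) hf1 hf2 hf3 hE1 hE2
    hE3 (ne_top_of_le_ne_top hv3 hle1) (ne_top_of_le_ne_top hv3 hle2) hv3
    (densityThreshold_pos hpos1 hpos3) (densityThreshold_pos hpos2 hpos3) ht1 ht2 ht3 ht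
  rw [coe_densityThreshold, coe_densityThreshold] at bound
  rw [← ofReal_measureReal_rpow hpos1, ← ofReal_measureReal_rpow hpos2,
    ← ofReal_measureReal_rpow hpos3, ← ENNReal.ofReal_mul (by positivity),
    ← ENNReal.ofReal_mul (by positivity), ← ENNReal.ofReal_mul (by positivity),
    ← ofReal_norm]
  refine ENNReal.ofReal_le_ofReal (bound.trans ?_)
  calc _ ≤ quartileConst t1 t2 t3 *
        (16 * (volume.real E1 ^ α1 * volume.real E2 ^ α2 * volume.real E3 ^ α3)) :=
        mul_le_mul_of_nonneg_left
          (rpow_mul_threshold_rpow_mul_le hpos1 hpos2 hle1' hle2' ht1 ht2 ht hα hα1 hα2) hconst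
    _ = _ := by ring

end RestrictedType

theorem quartileForm_restricted_type_symm_general {α1 α2 α3 : ℝ} (h1 : α1 < 1) (h2 : α2 < 1)
    (h3 : -(1 / 2) < α3) (hα : α1 + α2 + α3 = 1) :
    ∃ C : ℝ≥0, ∀ E1 E2 E3 : Set ℝ,
      MeasurableSet E1 → MeasurableSet E2 → MeasurableSet E3 → volume E3 ≠ ∞ →
      volume E1 ≤ volume E3 → volume E2 ≤ volume E3 →
      ∃ E3' : Set ℝ, MeasurableSet E3' ∧ E3' ⊆ E3 ∧ volume E3 / 2 ≤ volume E3' ∧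
        ∀ L N : ℕ, 1 ≤ L → ∀ f1 f2 f3 : ℝ → ℂ,
          IsSubindicator f1 E1 → IsSubindicator f2 E2 → IsSubindicator f3 E3' →
          ‖quartileForm L N f1 f2 f3‖ₑ ≤
            C * volume E1 ^ α1 * volume E2 ^ α2 * volume E3 ^ α3 := by
  obtain ⟨t1, t2, t3, ht1, ht2, ht3, ht, hα1, hα2⟩ := exists_exponents h1 h2 h3 hα
  refine ⟨(16 * quartileConst t1 t2 t3).toNNReal, fun E1 E2 E3 hE1 hE2 hE3 hv3 hle1 hle2 => ?_⟩
  have hv1 : volume E1 ≠ ∞ := ne_top_of_le_ne_top hv3 hle1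
  have hv2 : volume E2 ≠ ∞ := ne_top_of_le_ne_top hv3 hle2
  by_cases hnull : volume E1 = 0 ∨ volume E2 = 0
  · refine ⟨E3, hE3, subset_rfl, ENNReal.half_le_self, fun L N hL f1 f2 f3 hf1 hf2 hf3 => ?_⟩
    obtain ⟨L, rfl⟩ := Nat.exists_eq_add_of_le' hL
    simp [quartileForm_eq_zero hf1 hf2 hf3 hE1 hE2 hE3 hv1 hv2 hv3 hnull]
  · obtain ⟨hne1, hne2⟩ := not_or.1 hnull
    have hpos1 : 0 < volume.real E1 := ENNReal.toReal_pos hne1 hv1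
    have hpos2 : 0 < volume.real E2 := ENNReal.toReal_pos hne2 hv2
    have hpos3 := hpos1.trans_le (ENNReal.toReal_mono hv3 hle1)
    refine ⟨majorSubset E1 E2 E3, hE3.diff ((measurableSet_exceptionalSet _ _).union
      (measurableSet_exceptionalSet _ _)), sdiff_subset,
      half_volume_le_volume_majorSubset hpos1 hpos2 hpos3, fun L N hL f1 f2 f3 hf1 hf2 hf3 => ?_⟩
    obtain ⟨L, rfl⟩ := Nat.exists_eq_add_of_le' hL
    exact enorm_quartileForm_le_of_majorSubset hf1 hf2 hf3 hE1 hE2 hE3 hv3 hpos1 hpos2 hle1 hle2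
      ht1 ht2 ht3 ht hα hα1 hα2 L N

/-- The symmetric version of the restricted type theorem, with the exceptional index 3
(obtained from Theorem 2 by the symmetry of the quartile form in the indices 2 and 3). -/
theorem quartileForm_restricted_type_symm :
    ∀ α1 α2 α3 : ℝ, 0 < α1 → α1 < 1 → 0 < α2 → α2 < 1 → -(1/2) < α3 → α3 ≤ 0 →
      α1 + α2 + α3 = 1 →
    ∃ C : ℝ≥0, ∀ E1 E2 E3 : Set ℝ,
      MeasurableSet E1 → MeasurableSet E2 → MeasurableSet E3 →
      E1 ⊆ Ici 0 → E2 ⊆ Ici 0 → E3 ⊆ Ici 0 →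
      volume E1 < ∞ → volume E2 < ∞ → volume E3 < ∞ →
      volume E1 ≤ volume E3 → volume E2 ≤ volume E3 →
      ∃ E3' : Set ℝ, MeasurableSet E3' ∧ E3' ⊆ E3 ∧ volume E3 / 2 ≤ volume E3' ∧
        ∀ (L N : ℕ), 2 ≤ L →
        ∀ f1 f2 f3 : ℝ → ℂ, Measurable f1 → Measurable f2 → Measurable f3 →
          (∀ x, ‖f1 x‖ ≤ E1.indicator 1 x) →
          (∀ x, ‖f2 x‖ ≤ E2.indicator 1 x) →
          (∀ x, ‖f3 x‖ ≤ E3'.indicator 1 x) →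
          (‖quartileForm L N f1 f2 f3‖₊ : ℝ≥0∞) ≤
            C * volume E1 ^ α1 * volume E2 ^ α2 * volume E3 ^ α3 := by
  intro α1 α2 α3 _ h1 _ h2 h3 _ hα
  obtain ⟨C, hC⟩ := quartileForm_restricted_type_symm_general h1 h2 h3 hα
  refine ⟨C, fun E1 E2 E3 hE1 hE2 hE3 _ _ _ _ _ hv3 hle1 hle2 => ?_⟩
  obtain ⟨E3', hE3', hsub, hhalf, hform⟩ := hC E1 E2 E3 hE1 hE2 hE3 hv3.ne hle1 hle2
  exact ⟨E3', hE3', hsub, hhalf, fun L N hL f1 f2 f3 m1 m2 m3 b1 b2 b3 =>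
    hform L N (by omega) f1 f2 f3 ⟨m1, b1⟩ ⟨m2, b2⟩ ⟨m3, b3⟩⟩

end Quartile
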